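/- arXiv:1902.10970 — 3 statements merged into one kernel-verified Lean document; each statement's English description precedes it below -/
import Mathlib

section
/- Let Ω be a bounded domain in ℝ⁴ containing the origin, let β ≥ 1 be a real number and let R ≥ R_Ω. Then there exist positive constants A and B such that for every c with 0 < c < A and every u ∈ C₀^∞(Ω) with Ĩ₄[u,Ω,R] ≤ 1 one has ∫_Ω exp( c · ( |u(x)| / E₂(|x|/R)^β )² ) dx ≤ B · |Ω|, where |Ω| denotes the Lebesgue measure of Ω. -/
/-!
Write `T = E₁(|x|/R)`, `τ = 1/T`, `ψ = 1/E₂(|x|/R)` and `k = |x|⁻²`. The functional `Ĩ₄[u]` is the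
integral of a nonnegative density. Completing squares gives, away from the origin,
`(Δu)² - k² τ² u² = e + 4 d₁ - 4 d₂`, where (with `F = ½ τ (1 + ψ)`)

`e = (Δu - 2 k x·∇u)² + 4 k² (x·∇u + F u)² + (k u τ ψ)²`,

`d₁ = div (k ((x·∇u) ∇u - ½ |∇u|² x))` and `d₂ = div (k² F u² x)`. The two fields are singular at the
origin, but their flux through small spheres around it vanishes (`punctured_divergence`; for `d₂` this
rests on `τ → 0`), so `∫ e = Ĩ₄[u] ≤ 1` (`Adm.integral_en`).

The function `w = ψ u = u / E₂(|x|/R)` then has a square-integrable Laplacian: `Δw` is a combination,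
with bounded coefficients, of the three quantities whose squares make up `e`, and `(Δw)² ≤ 6 e`
(`Adm.qw_sq_le`). Green's identity against `y ↦ (|x - y|² + s)⁻¹`, whose Laplacian `-8 s (|x - y|² + s)⁻³`
is, up to a constant, an approximate identity as `s → 0`, yields the pointwise bound
`|w(x)| ≲ ∫ |x - y|⁻² |Δw(y)| dy` (`Adm.green`, `peak`).

Exponential integrability needs neither symmetrisation nor rearrangement. Let `G = e * |·|⁻²` be the
Riesz potential of the energy density, truncated at distance `2R`. Young's inequality with the weight
`1 + s |x - y|⁻²` and `s = (1 + G(x))⁻¹` bounds `w(x)²` by a constant times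
`log ((1 + 4R²)(1 + G(x)))` (`Adm.log_bound`): the energy factor is at most `∫ e + s G ≤ 2`, and the
remaining kernel `|z|⁻² (|z|² + s)⁻¹` has logarithmic mass (`J_int`). Hence
`exp (c w²) ≤ (1 + 4R²)(1 + G)` for small `c`, and `∫ G ≤ ∫ e · ∫_{|z| ≤ 2R} |z|⁻² dz` is bounded by a
constant depending on `R` only. Finally `E₂ ≥ 1` reduces every `β ≥ 1` to `β = 1`.
-/

open MeasureTheory Real

/-- `E₁(t) = 1 - ln t`. -/
noncomputable def E1 (t : ℝ) : ℝ := 1 - Real.log t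

/-- `E₂(t) = ln (e E₁(t)) = 1 + ln E₁(t)`. -/
noncomputable def E2 (t : ℝ) : ℝ := 1 + Real.log (E1 t)

/-- The Euclidean Laplacian of a scalar function on `ℝⁿ`. -/
noncomputable def lap {n : ℕ} (f : EuclideanSpace ℝ (Fin n) → ℝ) :
    EuclideanSpace ℝ (Fin n) → ℝ := fun x =>
  ∑ i, fderiv ℝ (fun y => fderiv ℝ f y (EuclideanSpace.single i 1)) x (EuclideanSpace.single i 1)

/-- `Ĩ₄[u, Ω, R] = ∫_Ω (Δu)² dx - ∫_Ω u²/(|x|⁴ E₁(|x|/R)²) dx`. -/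
noncomputable def tildeI4 (Ω : Set (EuclideanSpace ℝ (Fin 4))) (R : ℝ)
    (u : EuclideanSpace ℝ (Fin 4) → ℝ) : ℝ :=
  (∫ x in Ω, (lap u x) ^ 2) - ∫ x in Ω, (u x) ^ 2 / (‖x‖ ^ 4 * (E1 (‖x‖ / R)) ^ 2)

open Filter Topology

/-! ### Line derivatives on ℝ⁴ -/

/-- Euclidean `ℝ⁴`. -/
abbrev E4 := EuclideanSpace ℝ (Fin 4)

/-- The `i`-th standard basis vector of `ℝ⁴`. -/
noncomputable abbrev bv (i : Fin 4) : E4 := EuclideanSpace.single i (1 : ℝ)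

section LineDeriv
variable {f g : E4 → ℝ} {a b : ℝ} {x v : E4}

theorem ld_mul (hf : HasLineDerivAt ℝ f a x v) (hg : HasLineDerivAt ℝ g b x v) :
    HasLineDerivAt ℝ (fun y => f y * g y) (a * g x + f x * b) x v := by
  simpa [HasLineDerivAt] using HasDerivAt.fun_mul hf hg

theorem ld_add (hf : HasLineDerivAt ℝ f a x v) (hg : HasLineDerivAt ℝ g b x v) :
    HasLineDerivAt ℝ (fun y => f y + g y) (a + b) x v := by
  simpa [HasLineDerivAt] using HasDerivAt.fun_add hf hg

theorem ld_sub (hf : HasLineDerivAt ℝ f a x v) (hg : HasLineDerivAt ℝ g b x v) :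
    HasLineDerivAt ℝ (fun y => f y - g y) (a - b) x v := by
  simpa [HasLineDerivAt] using HasDerivAt.fun_sub hf hg

theorem ld_sum {F : Fin 4 → E4 → ℝ} {c : Fin 4 → ℝ}
    (hf : ∀ j, HasLineDerivAt ℝ (F j) (c j) x v) :
    HasLineDerivAt ℝ (fun y => ∑ j, F j y) (∑ j, c j) x v := by
  exact HasDerivAt.fun_sum (fun j _ => hf j)

theorem ld_comp {φ : ℝ → ℝ} {c : ℝ} (hφ : HasDerivAt φ c (f x)) (hf : HasLineDerivAt ℝ f a x v) :
    HasLineDerivAt ℝ (fun y => φ (f y)) (c * a) x v := by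
  have h : HasDerivAt φ c ((fun t : ℝ => f (x + t • v)) 0) := by simpa using hφ
  exact HasDerivAt.comp (0 : ℝ) h hf

theorem ld_const (c : ℝ) : HasLineDerivAt ℝ (fun _ : E4 => c) 0 x v := by
  simpa [HasLineDerivAt] using hasDerivAt_const (0 : ℝ) c

theorem ld_coord (x : E4) (i j : Fin 4) :
    HasLineDerivAt ℝ (fun y : E4 => y j) (if j = i then 1 else 0) x (bv i) := by
  have h : HasFDerivAt (fun y : E4 => y j) (EuclideanSpace.proj j : E4 →L[ℝ] ℝ) x :=
    (EuclideanSpace.proj j : E4 →L[ℝ] ℝ).hasFDerivAt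
  have := h.hasLineDerivAt (bv i)
  simpa [Pi.single_apply] using this

theorem ld_congr (hf : HasLineDerivAt ℝ f a x v) (h : b = a) : HasLineDerivAt ℝ f b x v := h ▸ hf

theorem nsq_eq (y : E4) : ‖y‖ ^ 2 = ∑ j, y j ^ 2 := by
  rw [EuclideanSpace.norm_sq_eq]; simp

theorem ld_nsq (x z : E4) (i : Fin 4) :
    HasLineDerivAt ℝ (fun y : E4 => ‖z - y‖ ^ 2) (-2 * (z i - x i)) x (bv i) := by
  have h := ld_sum (x := x) (v := bv i) (F := fun j y => (z j - y j) * (z j - y j)) (fun j =>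
    ld_mul (ld_sub (ld_const (z j)) (ld_coord x i j)) (ld_sub (ld_const (z j)) (ld_coord x i j)))
  have e : (fun y : E4 => ‖z - y‖ ^ 2) = fun y => ∑ j, (z j - y j) * (z j - y j) := by
    funext y; rw [nsq_eq]; simp [pow_two]
  rw [e]
  refine ld_congr h ?_
  fin_cases i <;> simp [Fin.sum_univ_four] <;> ring

end LineDeriv

theorem integral_fderiv_zero {f : E4 → ℝ} (hf : ContDiff ℝ 1 f) (hc : HasCompactSupport f) (v : E4) :
    ∫ x, fderiv ℝ f x v = 0 := by
  have hi : Integrable (fun x => fderiv ℝ f x v) :=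
    ((hf.continuous_fderiv (by norm_num)).clm_apply continuous_const).integrable_of_hasCompactSupport
      (hc.fderiv_apply (𝕜 := ℝ) v)
  have := integral_mul_fderiv_eq_neg_fderiv_mul_of_integrable (μ := (volume : Measure E4))
    (f := fun _ : E4 => (1 : ℝ)) (g := f) (v := v) (by simp) (by simpa using hi)
    (by simpa using hf.continuous.integrable_of_hasCompactSupport hc)
    (fun x _ => by fun_prop) (fun x _ => hf.differentiable (by norm_num) x)
  simpa using this

/-! ### Divergence theorem with an isolated singularity -/

/-- Divergence theorem for a field `V` that is `C¹` off the origin, vanishes outside the compact set `S`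
and has vanishing flux at the origin, in the sense that `|x|³ V(x) → 0`. The components `D i` are the
partial derivatives `∂ᵢVᵢ`; only their sum is assumed integrable. The field is cut off by
`1 - b(x/δ)` with a bump function `b`, and `δ → 0`. -/
theorem punctured_divergence {V D : Fin 4 → E4 → ℝ} {S : Set E4} (hS : IsCompact S)
    (hV : ∀ i, ∀ x ∈ S, x ≠ 0 → ContDiffAt ℝ 1 (V i) x)
    (hV0 : ∀ i, ∀ x ∉ S, V i x = 0) (hD0 : ∀ i, ∀ x ∉ S, D i x = 0)
    (hVD : ∀ i, ∀ x ∈ S, x ≠ 0 → HasLineDerivAt ℝ (V i) (D i x) x (bv i))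
    (hlim : ∀ i, Tendsto (fun x => ‖x‖ ^ 3 * V i x) (𝓝[≠] 0) (𝓝 0))
    (hint : Integrable (fun x => ∑ i, D i x)) :
    ∫ x, ∑ i, D i x = 0 := by
  classical
  have hVe : ∀ i, ∀ x ∉ S, V i =ᶠ[𝓝 x] fun _ => 0 := by
    intro i x hx
    filter_upwards [hS.isClosed.isOpen_compl.mem_nhds hx] with y hy using hV0 i y hy
  have hV' : ∀ i, ∀ x, x ≠ 0 → ContDiffAt ℝ 1 (V i) x := by
    intro i x hx
    by_cases h : x ∈ S
    · exact hV i x h hx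
    · exact contDiffAt_const.congr_of_eventuallyEq (hVe i x h)
  have hVD' : ∀ i, ∀ x, x ≠ 0 → HasLineDerivAt ℝ (V i) (D i x) x (bv i) := by
    intro i x hx
    by_cases h : x ∈ S
    · exact hVD i x h hx
    · rw [hD0 i x h]
      exact (ld_const 0).congr_of_eventuallyEq (hVe i x h)
  let b : ContDiffBump (0 : E4) := ⟨1, 2, by norm_num, by norm_num⟩
  have hb : ContDiff ℝ 1 (b : E4 → ℝ) := b.contDiff
  have hb1 : ∀ y : E4, ‖y‖ < 1 → (b : E4 → ℝ) =ᶠ[𝓝 y] fun _ => 1 := by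
    intro y hy
    have : y ∈ Metric.ball (0 : E4) 1 := by simpa using hy
    filter_upwards [Metric.isOpen_ball.mem_nhds this] with z hz
    exact b.one_of_mem_closedBall (Metric.ball_subset_closedBall hz)
  have hb2 : ∀ y : E4, 2 < ‖y‖ → (b : E4 → ℝ) =ᶠ[𝓝 y] fun _ => 0 := by
    intro y hy
    have : y ∈ (Metric.closedBall (0 : E4) 2)ᶜ := by simpa using hy
    filter_upwards [Metric.isClosed_closedBall.isOpen_compl.mem_nhds this] with z hz
    have hz' : 2 < ‖z‖ := by simpa using hz
    exact b.zero_of_le_dist (by simpa [b] using hz'.le)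
  have hbd : ∀ y v : E4, (‖y‖ < 1 ∨ 2 < ‖y‖) → fderiv ℝ b y v = 0 := by
    rintro y v (h | h)
    · rw [(hb1 y h).fderiv_eq]; simp
    · rw [(hb2 y h).fderiv_eq]; simp
  obtain ⟨M, hM⟩ : ∃ M, ∀ y, ‖fderiv ℝ b y‖ ≤ M :=
    (b.hasCompactSupport.fderiv (𝕜 := ℝ)).exists_bound_of_continuous
      (hb.continuous_fderiv (by norm_num))
  have hM0 : 0 ≤ M := (norm_nonneg _).trans (hM 0)
  have hMi : ∀ (y : E4) (i : Fin 4), |fderiv ℝ b y (bv i)| ≤ M := by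
    intro y i
    have := (fderiv ℝ b y).le_opNorm (bv i)
    simp at this
    exact this.trans (hM y)
  set c4 : ℝ := (volume (Metric.ball (0 : E4) 1)).toReal with hc4
  let d : E4 → ℝ := fun x => ∑ i, D i x
  have key : ∀ η > 0, ∀ᶠ δ : ℝ in 𝓝[>] 0, |∫ x, (1 - b (δ⁻¹ • x)) * d x| ≤ (64 * M * c4) * η := by
    intro η hη
    have h1 : ∀ᶠ x in 𝓝[≠] (0 : E4), ∀ i, |‖x‖ ^ 3 * V i x| < η := by
      rw [eventually_all]; intro i
      have := (hlim i).eventually (Metric.ball_mem_nhds 0 hη)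
      filter_upwards [this] with x hx using by simpa using hx
    rw [eventually_nhdsWithin_iff, Metric.eventually_nhds_iff] at h1
    obtain ⟨ρ, hρ, h1⟩ := h1
    have h2 : ∀ᶠ δ : ℝ in 𝓝[>] 0, δ < ρ / 2 :=
      (eventually_lt_nhds (by positivity)).filter_mono nhdsWithin_le_nhds
    filter_upwards [h2, self_mem_nhdsWithin] with δ hδ hδ0
    have hδ0 : 0 < δ := hδ0
    -- `f` is the cut-off field; `g` collects the terms in which the derivative falls on the cutoff
    let f : Fin 4 → E4 → ℝ := fun i x => (1 - b (δ⁻¹ • x)) * V i x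
    let g : E4 → ℝ := fun x => ∑ i, (δ⁻¹ * fderiv ℝ b (δ⁻¹ • x) (bv i)) * V i x
    have hf0 : ∀ i, f i =ᶠ[𝓝 0] fun _ => 0 := by
      intro i
      have hc : Tendsto (fun x : E4 => δ⁻¹ • x) (𝓝 0) (𝓝 0) := by
        have : Continuous (fun x : E4 => δ⁻¹ • x) := by fun_prop
        simpa using this.tendsto 0
      filter_upwards [hc.eventually (hb1 0 (by simp))] with x hx
      simp [f, hx]
    have hfc : ∀ i, ContDiff ℝ 1 (f i) := by
      intro i
      rw [contDiff_iff_contDiffAt]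
      intro x
      by_cases hx : x = 0
      · subst hx; exact contDiffAt_const.congr_of_eventuallyEq (hf0 i)
      · refine ContDiffAt.mul ?_ (hV' i x hx)
        exact (contDiff_const.sub (hb.comp (contDiff_const_smul _))).contDiffAt
    have hfs : ∀ i, HasCompactSupport (f i) := fun i =>
      HasCompactSupport.intro hS (fun x hx => by simp [f, hV0 i x hx])
    have hfd : ∀ i x, x ≠ 0 → fderiv ℝ (f i) x (bv i) =
        (1 - b (δ⁻¹ • x)) * D i x - (δ⁻¹ * fderiv ℝ b (δ⁻¹ • x) (bv i)) * V i x := by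
      intro i x hx
      have e1 := ((hfc i).differentiable (by norm_num) x).hasFDerivAt.hasLineDerivAt (bv i)
      have hbx : DifferentiableAt ℝ (fun x : E4 => b (δ⁻¹ • x)) x :=
        (hb.comp (contDiff_const_smul _)).differentiable (by norm_num) x
      have e2 := hbx.hasFDerivAt.hasLineDerivAt (bv i)
      have e3 := ld_mul (ld_sub (ld_const 1) e2) (hVD' i x hx)
      have e4 := e1.unique e3
      have e5 : fderiv ℝ (fun x : E4 => b (δ⁻¹ • x)) x = δ⁻¹ • fderiv ℝ b (δ⁻¹ • x) :=
        fderiv_comp_smul _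
      rw [e4, e5]; simp; ring
    have hne : ∀ᵐ x : E4, x ≠ 0 := by
      simp [ae_iff, measure_singleton]
    have hfi : ∀ i, Integrable (fun x => fderiv ℝ (f i) x (bv i)) := fun i =>
      (((hfc i).continuous_fderiv (by norm_num)).clm_apply
        continuous_const).integrable_of_hasCompactSupport ((hfs i).fderiv_apply (𝕜 := ℝ) (bv i))
    have hI0 : ∫ x, ∑ i, fderiv ℝ (f i) x (bv i) = 0 := by
      rw [integral_finsetSum _ (fun i _ => hfi i)]
      simp [integral_fderiv_zero (hfc _) (hfs _)]
    have hIs : Integrable (fun x => ∑ i, fderiv ℝ (f i) x (bv i)) :=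
      integrable_finsetSum _ (fun i _ => hfi i)
    have hχi : Integrable (fun x => (1 - b (δ⁻¹ • x)) * d x) := by
      refine hint.bdd_mul (c := 1) (by
        have : Continuous (fun x : E4 => 1 - b (δ⁻¹ • x)) := by
          have := hb.continuous; fun_prop
        exact this.aestronglyMeasurable) (Eventually.of_forall fun x => ?_)
      rw [Real.norm_eq_abs, abs_le]
      constructor <;> linarith [b.nonneg (x := δ⁻¹ • x), b.le_one (x := δ⁻¹ • x)]
    have hg : ∀ᵐ x : E4, (1 - b (δ⁻¹ • x)) * d x = ∑ i, fderiv ℝ (f i) x (bv i) + g x := by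
      filter_upwards [hne] with x hx
      simp only [hfd _ x hx, Finset.sum_sub_distrib, d, g, Finset.mul_sum]
      ring
    have hgi : Integrable g := by
      refine (hχi.sub hIs).congr ?_
      filter_upwards [hg] with x hx
      simp only [Pi.sub_apply, hx]; ring
    -- Only `g` contributes. It lives on the shell `δ ≤ |x| ≤ 2δ`, where `|Vᵢ| ≤ η δ⁻³` and the cutoff has
    -- slope at most `M/δ`. The ball of radius `2δ` has volume `(2δ)⁴ c4`, whence `64 = 4 · 2⁴`.
    rw [integral_congr_ae hg, integral_add hIs hgi, hI0, zero_add]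
    have hgz : ∀ x, x ∉ Metric.closedBall (0 : E4) (2 * δ) → g x = 0 := by
      intro x hx
      have hx : 2 * δ < ‖x‖ := by simpa using hx
      have : 2 < ‖δ⁻¹ • x‖ := by
        rw [norm_smul, norm_inv, Real.norm_of_nonneg hδ0.le, lt_inv_mul_iff₀ hδ0]; linarith
      simp [g, hbd _ _ (Or.inr this)]
    have hgb : ∀ x ∈ Metric.closedBall (0 : E4) (2 * δ), ‖g x‖ ≤ 4 * (M * δ⁻¹ ^ 4 * η) := by
      intro x hx
      have hx : ‖x‖ ≤ 2 * δ := by simpa using hx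
      by_cases hx1 : ‖x‖ < δ
      · have : ‖δ⁻¹ • x‖ < 1 := by
          rw [norm_smul, norm_inv, Real.norm_of_nonneg hδ0.le, inv_mul_lt_iff₀ hδ0]; linarith
        simp only [g, hbd _ _ (Or.inl this)]
        simp; positivity
      · push Not at hx1
        have hx0 : x ≠ 0 := by
          rintro rfl; simp at hx1; linarith
        have hV1 := h1 (y := x) (by rw [dist_zero_right]; linarith) hx0
        refine (norm_sum_le _ _).trans ?_
        have : ∀ i ∈ (Finset.univ : Finset (Fin 4)),
            ‖δ⁻¹ * fderiv ℝ b (δ⁻¹ • x) (bv i) * V i x‖ ≤ M * δ⁻¹ ^ 4 * η := by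
          intro i _
          have hVi : |V i x| ≤ δ⁻¹ ^ 3 * η := by
            have h3 := (hV1 i).le
            rw [abs_mul, abs_of_nonneg (by positivity)] at h3
            have h4 : δ ^ 3 * |V i x| ≤ η :=
              (mul_le_mul_of_nonneg_right (pow_le_pow_left₀ hδ0.le hx1 3) (abs_nonneg _)).trans h3
            rw [inv_pow, le_inv_mul_iff₀ (by positivity)]; exact h4
          rw [norm_mul, norm_mul, norm_inv, Real.norm_of_nonneg hδ0.le]
          calc δ⁻¹ * ‖fderiv ℝ b (δ⁻¹ • x) (bv i)‖ * ‖V i x‖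
              ≤ δ⁻¹ * M * (δ⁻¹ ^ 3 * η) := by
                gcongr
                · exact hMi _ i
                · exact hVi
            _ = M * δ⁻¹ ^ 4 * η := by ring
        refine (Finset.sum_le_sum this).trans (le_of_eq ?_)
        simp
    rw [← setIntegral_eq_integral_of_forall_compl_eq_zero hgz, ← Real.norm_eq_abs]
    refine (norm_setIntegral_le_of_norm_le_const (measure_closedBall_lt_top) hgb).trans
      (le_of_eq ?_)
    rw [Measure.real, Measure.addHaar_closedBall _ _ (by positivity), ENNReal.toReal_mul,
      ENNReal.toReal_ofReal (by positivity), ← hc4]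
    simp only [finrank_euclideanSpace, Fintype.card_fin]
    field_simp
    ring
  have lim : Tendsto (fun δ : ℝ => ∫ x, (1 - b (δ⁻¹ • x)) * d x) (𝓝[>] 0) (𝓝 (∫ x, d x)) := by
    refine tendsto_integral_filter_of_dominated_convergence (fun x => ‖d x‖) ?_ ?_ hint.norm ?_
    · refine Eventually.of_forall fun δ => AEStronglyMeasurable.mul ?_ hint.aestronglyMeasurable
      have : Continuous (fun x : E4 => 1 - b (δ⁻¹ • x)) := by
        have := hb.continuous; fun_prop
      exact this.aestronglyMeasurable
    · refine Eventually.of_forall fun δ => Eventually.of_forall fun x => ?_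
      rw [norm_mul]
      refine mul_le_of_le_one_left (norm_nonneg _) ?_
      rw [Real.norm_eq_abs, abs_le]
      constructor <;> linarith [b.nonneg (x := δ⁻¹ • x), b.le_one (x := δ⁻¹ • x)]
    · have hne : ∀ᵐ x : E4, x ≠ 0 := by
        simp [ae_iff, measure_singleton]
      filter_upwards [hne] with x hx
      refine tendsto_const_nhds.congr' ?_
      have hxn : 0 < ‖x‖ := norm_pos_iff.mpr hx
      have h2 : ∀ᶠ δ : ℝ in 𝓝[>] 0, δ < ‖x‖ / 2 :=
        (eventually_lt_nhds (by positivity)).filter_mono nhdsWithin_le_nhds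
      filter_upwards [h2, self_mem_nhdsWithin] with δ hδ hδ0
      have hδ0 : 0 < δ := hδ0
      have : 2 < ‖δ⁻¹ • x‖ := by
        rw [norm_smul, norm_inv, Real.norm_of_nonneg hδ0.le, lt_inv_mul_iff₀ hδ0]; linarith
      rw [(hb2 _ this).eq_of_nhds]; ring
  have fin : ∀ η > 0, |∫ x, d x| ≤ (64 * M * c4) * η := fun η hη =>
    le_of_tendsto lim.abs (key η hη)
  have hC : 0 ≤ 64 * M * c4 := by positivity
  by_contra hne
  have hpos : 0 < |∫ x, d x| := abs_pos.mpr hne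
  have := fin (|∫ x, d x| / (2 * (64 * M * c4 + 1))) (by positivity)
  rw [mul_div_assoc', le_div_iff₀ (by positivity)] at this
  nlinarith

/-! ### Radial integrals and the logarithmic weight -/

/-- The volume of the unit ball of `ℝ⁴`. -/
noncomputable def c4 : ℝ := (volume (Metric.ball (0 : E4) 1)).toReal

/-- Polar coordinates for a radial function truncated to the ball of radius `ρ`; the area of the unit
sphere is `4 c4`. The function `H` is a convenient form of `y³ h(y)` on `(0, ρ]`. -/
theorem radial {h H : ℝ → ℝ} {ρ : ℝ} (hH : IntegrableOn H (Set.Ioc 0 ρ))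
    (hh : ∀ y ∈ Set.Ioc 0 ρ, y ^ 3 * h y = H y) :
    Integrable (fun x : E4 => if ‖x‖ ≤ ρ then h ‖x‖ else 0) ∧
    ∫ x : E4, (if ‖x‖ ≤ ρ then h ‖x‖ else 0) = 4 * c4 * ∫ y in Set.Ioc 0 ρ, H y := by
  have e : ∀ y ∈ Set.Ioi (0 : ℝ), y ^ (Module.finrank ℝ E4 - 1) • (if y ≤ ρ then h y else 0)
      = (Set.Iic ρ).indicator H y := by
    intro y hy
    by_cases hyρ : y ≤ ρ
    · simp [hyρ, ← hh y ⟨hy, hyρ⟩]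
    · simp [hyρ]
  constructor
  · rw [integrable_fun_norm_addHaar (volume : Measure E4) (f := fun y => if y ≤ ρ then h y else 0),
      integrableOn_congr_fun e measurableSet_Ioi, IntegrableOn, integrable_indicator_iff measurableSet_Iic,
      IntegrableOn, Measure.restrict_restrict measurableSet_Iic, Set.inter_comm, Set.Ioi_inter_Iic]
    exact hH
  · rw [integral_fun_norm_addHaar (volume : Measure E4) (fun y => if y ≤ ρ then h y else 0),
      setIntegral_congr_fun measurableSet_Ioi e, setIntegral_indicator measurableSet_Iic,
      Set.Ioi_inter_Iic]
    simp [c4, Measure.real, mul_assoc]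

/-- The truncated kernel `|x|⁻²` on the ball of radius `ρ`. -/
noncomputable def kker (ρ : ℝ) (x : E4) : ℝ := if ‖x‖ ≤ ρ then (‖x‖ ^ 2)⁻¹ else 0

theorem kker_nonneg (ρ : ℝ) (x : E4) : 0 ≤ kker ρ x := by
  unfold kker; split_ifs <;> positivity

theorem kker_integrable (ρ : ℝ) : Integrable (kker ρ) := by
  refine (radial (h := fun y => (y ^ 2)⁻¹) (H := fun y => y) (ρ := ρ) ?_ ?_).1
  · exact (continuous_id.integrableOn_Icc).mono_set Set.Ioc_subset_Icc_self
  · rintro y ⟨hy, -⟩; field_simp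

/-- The kernel `(|x|² (|x|² + s))⁻¹` has mass of order `log (1/s)` near the origin. -/
theorem J_int {ρ s : ℝ} (hρ : 0 < ρ) (hs : 0 < s) :
    Integrable (fun x : E4 => if ‖x‖ ≤ ρ then (‖x‖ ^ 2 * (‖x‖ ^ 2 + s))⁻¹ else 0) ∧
    ∫ x : E4, (if ‖x‖ ≤ ρ then (‖x‖ ^ 2 * (‖x‖ ^ 2 + s))⁻¹ else 0) =
      2 * c4 * Real.log (1 + ρ ^ 2 / s) := by
  have hc : Continuous (fun y : ℝ => y / (y ^ 2 + s)) := by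
    refine continuous_id.div (by fun_prop) (fun y => by positivity)
  obtain ⟨h1, h2⟩ := radial (h := fun y => (y ^ 2 * (y ^ 2 + s))⁻¹)
    (H := fun y => y / (y ^ 2 + s)) (ρ := ρ)
    (hc.integrableOn_Icc.mono_set Set.Ioc_subset_Icc_self)
    (by rintro y ⟨hy, -⟩; field_simp)
  refine ⟨h1, h2.trans ?_⟩
  rw [← intervalIntegral.integral_of_le hρ.le,
    intervalIntegral.integral_eq_sub_of_hasDerivAt (f := fun y => Real.log (y ^ 2 + s) / 2)
      (fun y _ => ?_) (hc.intervalIntegrable _ _)]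
  · have : 1 + ρ ^ 2 / s = (ρ ^ 2 + s) / s := by field_simp; ring
    rw [this, Real.log_div (by positivity) (by positivity)]
    simp; ring
  · have h : HasDerivAt (fun y : ℝ => y ^ 2 + s) (2 * y) y := by
      simpa using (hasDerivAt_pow 2 y).add_const s
    exact ((h.log (by positivity)).div_const 2).congr_deriv (by ring)

/-- The weight `|x|⁻⁴ E₁(|x|/R)⁻²`, truncated to the ball of radius `R`; it dominates every singular
density that occurs. -/
noncomputable def omg (R : ℝ) (x : E4) : ℝ := if ‖x‖ ≤ R then (‖x‖ ^ 4 * E1 (‖x‖ / R) ^ 2)⁻¹ else 0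

theorem E1_ge {y R : ℝ} (hR : 0 < R) (hy : y ∈ Set.Ioc 0 R) : 1 ≤ E1 (y / R) := by
  have : Real.log (y / R) ≤ 0 := Real.log_nonpos (div_pos hy.1 hR).le ((div_le_one hR).mpr hy.2)
  unfold E1; linarith

theorem E1_le {y R : ℝ} (hR : 0 < R) (hy : 0 < y) : E1 (y / R) ≤ R / y := by
  have := Real.log_le_sub_one_of_pos (div_pos hR hy)
  have e : Real.log (R / y) = - Real.log (y / R) := by rw [← Real.log_inv, inv_div]
  unfold E1; linarith

theorem E1_tendsto {R : ℝ} (hR : 0 < R) : Tendsto (fun y => E1 (y / R)) (𝓝[>] 0) atTop := by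
  have h1 : Tendsto (fun y : ℝ => y / R) (𝓝[>] 0) (𝓝[>] 0) := by
    refine tendsto_nhdsWithin_iff.mpr ⟨?_, ?_⟩
    · have : Tendsto (fun y : ℝ => y / R) (𝓝 0) (𝓝 (0 / R)) :=
        (continuous_id.div_const R).tendsto 0
      rw [zero_div] at this
      exact this.mono_left nhdsWithin_le_nhds
    · filter_upwards [self_mem_nhdsWithin] with y hy using div_pos hy hR
  have h2 := Real.tendsto_log_nhdsGT_zero.comp h1
  exact tendsto_atTop_add_const_left _ (1 : ℝ) (tendsto_neg_atBot_atTop.comp h2) |>.congr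
    (fun y => by simp [E1]; ring)

theorem E1_deriv {y R : ℝ} (hR : 0 < R) (hy : 0 < y) :
    HasDerivAt (fun y => E1 (y / R)) (-y⁻¹) y := by
  have h : HasDerivAt (fun y : ℝ => y / R) (1 / R) y := (hasDerivAt_id y).div_const R
  have h2 := (h.log (by positivity)).const_sub 1
  convert! h2 using 1
  field_simp

/-- The radial density `y⁻¹ E₁(y/R)⁻²` is the derivative of `1/E₁(y/R)`, which extends continuously by `0`
to `y = 0`. -/
theorem omg_integrable {R : ℝ} (hR : 0 < R) : Integrable (omg R) := by
  refine (radial (h := fun y => (y ^ 4 * E1 (y / R) ^ 2)⁻¹) (H := fun y => y⁻¹ / E1 (y / R) ^ 2)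
    (ρ := R) ?_ ?_).1
  · let G : ℝ → ℝ := fun y => if y ≤ 0 then 0 else (E1 (y / R))⁻¹
    refine intervalIntegral.integrableOn_deriv_of_nonneg (g := G) ?_ ?_ ?_
    · intro y hy
      rcases eq_or_lt_of_le hy.1 with h0 | h0
      · subst h0
        have : Tendsto G (𝓝[>] 0) (𝓝 0) := by
          refine (tendsto_inv_atTop_zero.comp (E1_tendsto hR)).congr' ?_
          filter_upwards [self_mem_nhdsWithin] with y hy
          have hy : 0 < y := hy
          simp [G, hy.not_ge]
        have h3 : ContinuousWithinAt G (Set.Ioi 0) 0 := by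
          simpa [ContinuousWithinAt, G] using this
        exact (continuousWithinAt_Ioi_iff_Ici.mp h3).mono Set.Icc_subset_Ici_self
      · have h1 := E1_ge hR ⟨h0, hy.2⟩
        have h2 : ContinuousAt (fun y => (E1 (y / R))⁻¹) y :=
          (E1_deriv hR h0).continuousAt.inv₀ (by linarith)
        refine (h2.congr ?_).continuousWithinAt
        filter_upwards [lt_mem_nhds h0] with z hz
        simp [G, hz.not_ge]
    · intro y hy
      have h1 := E1_ge hR ⟨hy.1, hy.2.le⟩
      have h2 := (E1_deriv hR hy.1).inv (by linarith)
      refine (h2.congr_of_eventuallyEq ?_).congr_deriv (by ring)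
      filter_upwards [lt_mem_nhds hy.1] with z hz
      simp [G, hz.not_ge]
    · intro y hy
      have := hy.1
      positivity
  · rintro y ⟨hy, -⟩; field_simp

theorem omg_nonneg (R : ℝ) (x : E4) : 0 ≤ omg R x := by
  unfold omg; split_ifs <;> positivity

theorem omg_bounds {R : ℝ} (hR : 0 < R) {x : E4} (hx : x ≠ 0) (hxR : ‖x‖ ≤ R) :
    (‖x‖ ^ 4)⁻¹ * (E1 (‖x‖ / R) ^ 2)⁻¹ ≤ omg R x ∧ (‖x‖ ^ 2)⁻¹ ≤ R ^ 2 * omg R x ∧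
      ‖x‖⁻¹ ≤ R ^ 3 * omg R x ∧ 1 ≤ R ^ 4 * omg R x := by
  have h0 : 0 < ‖x‖ := norm_pos_iff.mpr hx
  have h1 := E1_ge hR ⟨h0, hxR⟩
  have h2 := E1_le hR h0
  have hT : E1 (‖x‖ / R) ^ 2 ≤ (R / ‖x‖) ^ 2 := pow_le_pow_left₀ (by linarith) h2 2
  have hT0 : 0 < E1 (‖x‖ / R) ^ 2 := by positivity
  have e : omg R x = (‖x‖ ^ 4)⁻¹ * (E1 (‖x‖ / R) ^ 2)⁻¹ := by simp [omg, hxR, mul_comm]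
  have h3 : ‖x‖ ^ 2 / R ^ 2 ≤ (E1 (‖x‖ / R) ^ 2)⁻¹ := by
    rw [← inv_div]
    refine inv_anti₀ hT0 (by rw [← div_pow]; exact hT)
  have h4 : (‖x‖ ^ 2)⁻¹ ≤ R ^ 2 * omg R x := by
    rw [e]
    calc (‖x‖ ^ 2)⁻¹ = R ^ 2 * ((‖x‖ ^ 4)⁻¹ * (‖x‖ ^ 2 / R ^ 2)) := by field_simp
      _ ≤ _ := by gcongr
  have h5 : ‖x‖⁻¹ ≤ R * (‖x‖ ^ 2)⁻¹ := by
    rw [← div_eq_mul_inv, le_div_iff₀ (by positivity)]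
    calc ‖x‖⁻¹ * ‖x‖ ^ 2 = ‖x‖ := by field_simp
      _ ≤ R := hxR
  have h6 : 1 ≤ R * ‖x‖⁻¹ := by
    rw [← div_eq_mul_inv, le_div_iff₀ h0]; linarith
  refine ⟨e.ge, h4, ?_, ?_⟩
  · calc _ ≤ _ := h5
      _ ≤ R * (R ^ 2 * omg R x) := by gcongr
      _ = _ := by ring
  · calc _ ≤ _ := h6
      _ ≤ R * (R * (R ^ 2 * omg R x)) := by gcongr; exact h5.trans (by gcongr)
      _ = _ := by ring

/-- Criterion for integrability through the weight `omg`. -/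
theorem integrable_of_omg {R C : ℝ} (hR : 0 < R) {f : E4 → ℝ} (hf : Measurable f)
    (hb : ∀ x, x ≠ 0 → |f x| ≤ C * omg R x) : Integrable f := by
  refine ((omg_integrable hR).const_mul C).mono' hf.aestronglyMeasurable ?_
  have hne : ∀ᵐ x : E4, x ≠ 0 := by simp [ae_iff, measure_singleton]
  filter_upwards [hne] with x hx using hb x hx

/-! ### Admissible functions, partial derivatives and logarithmic multipliers -/

/-- First partial derivative `∂ᵢu`. -/
noncomputable def pd (u : E4 → ℝ) (i : Fin 4) (x : E4) : ℝ := fderiv ℝ u x (bv i)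

/-- Second partial derivative `∂ᵢ∂ⱼu`. -/
noncomputable def qd (u : E4 → ℝ) (i j : Fin 4) (x : E4) : ℝ := fderiv ℝ (pd u j) x (bv i)

/-- Admissible functions: smooth, compactly supported, with support in the closed ball of
radius `R`. -/
structure Adm (R : ℝ) (u : E4 → ℝ) : Prop where
  pos : 0 < R
  smooth : ContDiff ℝ (⊤ : ℕ∞) u
  cpt : HasCompactSupport u
  supp : ∀ x ∈ tsupport u, ‖x‖ ≤ R

namespace Adm
variable {R : ℝ} {u : E4 → ℝ} (h : Adm R u)
include h

theorem pd_smooth (i : Fin 4) : ContDiff ℝ (⊤ : ℕ∞) (pd u i) :=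
  (h.smooth.fderiv_right (m := (⊤ : ℕ∞)) (by simp)).clm_apply contDiff_const

theorem qd_cont (i j : Fin 4) : Continuous (qd u i j) :=
  (((h.pd_smooth j).fderiv_right (m := (⊤ : ℕ∞)) (by simp)).clm_apply contDiff_const).continuous

theorem ld_u (x : E4) (i : Fin 4) : HasLineDerivAt ℝ u (pd u i x) x (bv i) :=
  (h.smooth.differentiable (by simp) x).hasFDerivAt.hasLineDerivAt _

theorem ld_pd (x : E4) (i j : Fin 4) : HasLineDerivAt ℝ (pd u j) (qd u i j x) x (bv i) :=
  ((h.pd_smooth j).differentiable (by simp) x).hasFDerivAt.hasLineDerivAt _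

/-- Symmetry of second derivatives. -/
theorem qd_symm (x : E4) (i j : Fin 4) : qd u i j x = qd u j i x := by
  have hd : DifferentiableAt ℝ (fderiv ℝ u) x :=
    (h.smooth.fderiv_right (m := (⊤ : ℕ∞)) (by simp)).differentiable (by simp) x
  have e : ∀ i j, qd u i j x = fderiv ℝ (fderiv ℝ u) x (bv i) (bv j) := by
    intro i j
    unfold qd
    have := (hd.hasFDerivAt.clm_apply (hasFDerivAt_const (bv j) x)).fderiv
    change fderiv ℝ (fun y => fderiv ℝ u y (bv j)) x (bv i) = _
    rw [this]; simp
  rw [e, e]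
  exact ((contDiff_infty.mp h.smooth 2).contDiffAt.isSymmSndFDerivAt (by simp)) (bv i) (bv j)

omit h in
theorem _root_.pd_zero {u : E4 → ℝ} {x : E4} (hx : x ∉ tsupport u) (i : Fin 4) : pd u i x = 0 := by
  have : fderiv ℝ u x = 0 := by
    by_contra hne
    exact hx (support_fderiv_subset ℝ (Function.mem_support.mpr hne))
  simp [pd, this]

omit h in
theorem _root_.qd_zero {u : E4 → ℝ} {x : E4} (hx : x ∉ tsupport u) (i j : Fin 4) : qd u i j x = 0 := by
  have : pd u j =ᶠ[𝓝 x] fun _ => 0 := by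
    filter_upwards [(isClosed_tsupport u).isOpen_compl.mem_nhds hx] with y hy using pd_zero hy j
  simp [qd, this.fderiv_eq]

/-- One constant bounds `u` and all its partial derivatives up to order two. -/
theorem bound : ∃ M, 0 ≤ M ∧ ∀ x, |u x| ≤ M ∧ (∀ i, |pd u i x| ≤ M) ∧ ∀ i j, |qd u i j x| ≤ M := by
  have hcs : ∀ f : E4 → ℝ, Continuous f → (∀ x ∉ tsupport u, f x = 0) → ∃ C, ∀ x, ‖f x‖ ≤ C :=
    fun f hf h0 => (HasCompactSupport.intro h.cpt h0).exists_bound_of_continuous hf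
  obtain ⟨C0, h0⟩ := hcs u h.smooth.continuous (fun x hx => image_eq_zero_of_notMem_tsupport hx)
  choose C1 h1 using fun i => hcs (pd u i) (h.pd_smooth i).continuous (fun x hx => pd_zero hx i)
  choose C2 h2 using fun i j => hcs (qd u i j) (h.qd_cont i j) (fun x hx => qd_zero hx i j)
  have p0 : 0 ≤ C0 := (norm_nonneg _).trans (h0 0)
  have p1 : ∀ i, 0 ≤ C1 i := fun i => (norm_nonneg _).trans (h1 i 0)
  have p2 : ∀ i j, 0 ≤ C2 i j := fun i j => (norm_nonneg _).trans (h2 i j 0)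
  have s1 : ∀ i, C1 i ≤ ∑ i, C1 i := fun i =>
    Finset.single_le_sum (fun i _ => p1 i) (Finset.mem_univ i)
  have s2 : ∀ i j, C2 i j ≤ ∑ i, ∑ j, C2 i j := fun i j =>
    (Finset.single_le_sum (f := fun j => C2 i j) (fun j _ => p2 i j) (Finset.mem_univ j)).trans
      (Finset.single_le_sum (f := fun i => ∑ j, C2 i j)
        (fun i _ => Finset.sum_nonneg fun j _ => p2 i j) (Finset.mem_univ i))
  have q1 : 0 ≤ ∑ i, C1 i := Finset.sum_nonneg fun i _ => p1 i
  have q2 : 0 ≤ ∑ i, ∑ j, C2 i j := Finset.sum_nonneg fun i _ => Finset.sum_nonneg fun j _ => p2 i j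
  refine ⟨C0 + ∑ i, C1 i + ∑ i, ∑ j, C2 i j, by positivity, fun x => ⟨?_, fun i => ?_, fun i j => ?_⟩⟩
  · linarith [h0 x, Real.norm_eq_abs (u x)]
  · linarith [h1 i x, Real.norm_eq_abs (pd u i x), s1 i]
  · linarith [h2 i j x, Real.norm_eq_abs (qd u i j x), s2 i j]

end Adm

/-- The radial derivative `x · ∇u`. -/
noncomputable def Dr (u : E4 → ℝ) (x : E4) : ℝ := ∑ j, x j * pd u j x

/-- The Laplacian as a sum of pure second derivatives. -/
noncomputable def Lap (u : E4 → ℝ) (x : E4) : ℝ := ∑ j, qd u j j x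

theorem lap_eq (u : E4 → ℝ) : lap u = Lap u := rfl

/-- `|x|⁻²`. -/
noncomputable def kk (x : E4) : ℝ := (‖x‖ ^ 2)⁻¹

/-- `E₁(|x|/R)⁻¹`. -/
noncomputable def tau (R : ℝ) (x : E4) : ℝ := (E1 (‖x‖ / R))⁻¹

/-- `E₂(|x|/R)⁻¹`. -/
noncomputable def psi (R : ℝ) (x : E4) : ℝ := (E2 (‖x‖ / R))⁻¹

theorem coord_le (x : E4) (i : Fin 4) : |x i| ≤ ‖x‖ := by
  simpa using PiLp.norm_apply_le x i

theorem kk_mul {x : E4} (hx : x ≠ 0) : kk x * ‖x‖ ^ 2 = 1 := by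
  have : ‖x‖ ≠ 0 := norm_ne_zero_iff.mpr hx
  unfold kk; field_simp

theorem kk_sum {x : E4} (hx : x ≠ 0) : kk x * (x 0 ^ 2 + x 1 ^ 2 + x 2 ^ 2 + x 3 ^ 2) = 1 := by
  rw [← kk_mul hx, nsq_eq, Fin.sum_univ_four]

theorem kk_pos {x : E4} (hx : x ≠ 0) : 0 < kk x := by
  have : 0 < ‖x‖ := norm_pos_iff.mpr hx
  unfold kk; positivity

theorem E2_ge {y R : ℝ} (hR : 0 < R) (hy : y ∈ Set.Ioc 0 R) : 1 ≤ E2 (y / R) := by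
  have := Real.log_nonneg (E1_ge hR hy)
  unfold E2; linarith

theorem tau_mem {R : ℝ} (hR : 0 < R) {x : E4} (hx : x ≠ 0) (hxR : ‖x‖ ≤ R) :
    0 < tau R x ∧ tau R x ≤ 1 := by
  have := E1_ge hR ⟨norm_pos_iff.mpr hx, hxR⟩
  exact ⟨inv_pos.mpr (by linarith), inv_le_one_of_one_le₀ this⟩

theorem psi_mem {R : ℝ} (hR : 0 < R) {x : E4} (hx : x ≠ 0) (hxR : ‖x‖ ≤ R) :
    0 < psi R x ∧ psi R x ≤ 1 := by
  have := E2_ge hR ⟨norm_pos_iff.mpr hx, hxR⟩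
  exact ⟨inv_pos.mpr (by linarith), inv_le_one_of_one_le₀ this⟩

section lds
variable {R : ℝ} {x : E4}

theorem ld_nsq0 (x : E4) (i : Fin 4) :
    HasLineDerivAt ℝ (fun y : E4 => ‖y‖ ^ 2) (2 * x i) x (bv i) := by
  simpa using ld_nsq x 0 i

theorem ld_norm (hx : x ≠ 0) (i : Fin 4) :
    HasLineDerivAt ℝ (fun y : E4 => ‖y‖) (x i * ‖x‖⁻¹) x (bv i) := by
  have h0 : 0 < ‖x‖ := norm_pos_iff.mpr hx
  have := ld_comp (f := fun y : E4 => ‖y‖ ^ 2) (Real.hasDerivAt_sqrt (by positivity)) (ld_nsq0 x i)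
  simp only [Real.sqrt_sq (norm_nonneg _)] at this
  exact ld_congr this (by field_simp)

theorem ld_kk (hx : x ≠ 0) (i : Fin 4) :
    HasLineDerivAt ℝ kk (-2 * kk x ^ 2 * x i) x (bv i) := by
  have h0 : 0 < ‖x‖ := norm_pos_iff.mpr hx
  have := ld_comp (f := fun y : E4 => ‖y‖ ^ 2) (hasDerivAt_inv (by positivity)) (ld_nsq0 x i)
  exact ld_congr this (by unfold kk; field_simp)

theorem ld_T (hR : 0 < R) (hx : x ≠ 0) (i : Fin 4) :
    HasLineDerivAt ℝ (fun y : E4 => E1 (‖y‖ / R)) (-kk x * x i) x (bv i) := by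
  have h0 : 0 < ‖x‖ := norm_pos_iff.mpr hx
  have := ld_comp (E1_deriv hR h0) (ld_norm hx i)
  exact ld_congr this (by unfold kk; field_simp)

theorem ld_tau (hR : 0 < R) (hx : x ≠ 0) (hxR : ‖x‖ ≤ R) (i : Fin 4) :
    HasLineDerivAt ℝ (tau R) (tau R x ^ 2 * kk x * x i) x (bv i) := by
  have h1 := E1_ge hR ⟨norm_pos_iff.mpr hx, hxR⟩
  have := ld_comp (hasDerivAt_inv (by linarith)) (ld_T hR hx i)
  exact ld_congr this (by unfold tau; field_simp)

theorem ld_psi (hR : 0 < R) (hx : x ≠ 0) (hxR : ‖x‖ ≤ R) (i : Fin 4) :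
    HasLineDerivAt ℝ (psi R) (tau R x * psi R x ^ 2 * kk x * x i) x (bv i) := by
  have h1 := E1_ge hR ⟨norm_pos_iff.mpr hx, hxR⟩
  have h2 := E2_ge hR ⟨norm_pos_iff.mpr hx, hxR⟩
  have h3 := ld_add (ld_const 1) (ld_comp (Real.hasDerivAt_log (by linarith)) (ld_T hR hx i))
  have := ld_comp (hasDerivAt_inv (by change E2 (‖x‖ / R) ≠ 0; linarith)) h3
  refine ld_congr this ?_
  change _ = -((E2 (‖x‖ / R)) ^ 2)⁻¹ * (0 + (E1 (‖x‖ / R))⁻¹ * (-kk x * x i))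
  unfold tau psi; field_simp; ring

theorem cd_kk (hx : x ≠ 0) : ContDiffAt ℝ 1 kk x := by
  have h0 : 0 < ‖x‖ := norm_pos_iff.mpr hx
  exact ((contDiffAt_norm ℝ hx).pow 2).inv (by positivity)

theorem cd_T (hR : 0 < R) (hx : x ≠ 0) : ContDiffAt ℝ 1 (fun y : E4 => E1 (‖y‖ / R)) x := by
  have h0 : 0 < ‖x‖ := norm_pos_iff.mpr hx
  exact contDiffAt_const.sub (((contDiffAt_norm ℝ hx).div_const R).log (by positivity))

theorem cd_tau (hR : 0 < R) (hx : x ≠ 0) (hxR : ‖x‖ ≤ R) : ContDiffAt ℝ 1 (tau R) x := by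
  have h1 := E1_ge hR ⟨norm_pos_iff.mpr hx, hxR⟩
  exact (cd_T hR hx).inv (by linarith)

theorem cd_psi (hR : 0 < R) (hx : x ≠ 0) (hxR : ‖x‖ ≤ R) : ContDiffAt ℝ 1 (psi R) x := by
  have h1 := E1_ge hR ⟨norm_pos_iff.mpr hx, hxR⟩
  have h2 := E2_ge hR ⟨norm_pos_iff.mpr hx, hxR⟩
  exact (contDiffAt_const.add ((cd_T hR hx).log (by linarith))).inv
    (by change E2 (‖x‖ / R) ≠ 0; linarith)

end lds

theorem measurable_kk : Measurable kk := by unfold kk; fun_prop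
theorem measurable_tau (R : ℝ) : Measurable (tau R) := by unfold tau E1; fun_prop
theorem measurable_psi (R : ℝ) : Measurable (psi R) := by unfold psi E2 E1; fun_prop

/-! ### The Leray–Rellich identity -/

theorem near_zero {R : ℝ} (hR : 0 < R) : ∀ᶠ x : E4 in 𝓝[≠] 0, x ≠ 0 ∧ ‖x‖ ≤ R := by
  have h2 : ∀ᶠ x : E4 in 𝓝[≠] 0, x ∈ Metric.closedBall (0 : E4) R :=
    nhdsWithin_le_nhds (Metric.closedBall_mem_nhds _ hR)
  filter_upwards [self_mem_nhdsWithin, h2] with x hx hx2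
  exact ⟨hx, by simpa using hx2⟩

theorem norm_tendsto : Tendsto (fun x : E4 => ‖x‖) (𝓝[≠] 0) (𝓝 0) := by
  have : Tendsto (fun x : E4 => ‖x‖) (𝓝 0) (𝓝 ‖(0 : E4)‖) := continuous_norm.tendsto 0
  simpa using this.mono_left nhdsWithin_le_nhds

theorem tau_tendsto {R : ℝ} (hR : 0 < R) : Tendsto (tau R) (𝓝[≠] 0) (𝓝 0) := by
  have h : Tendsto (fun x : E4 => ‖x‖) (𝓝[≠] 0) (𝓝[>] 0) := tendsto_norm_nhdsNE_zero
  exact ((E1_tendsto hR).comp h).inv_tendsto_atTop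

/-- A field of size `O(|x|⁻¹)` has vanishing flux through small spheres around the origin. -/
theorem flux_lim {R C : ℝ} (hR : 0 < R) {V : E4 → ℝ}
    (hV : ∀ x : E4, x ≠ 0 → ‖x‖ ≤ R → |V x| ≤ C * ‖x‖⁻¹) :
    Tendsto (fun x => ‖x‖ ^ 3 * V x) (𝓝[≠] 0) (𝓝 0) := by
  have h1 : Tendsto (fun x : E4 => C * ‖x‖ ^ 2) (𝓝[≠] 0) (𝓝 0) := by
    simpa using (norm_tendsto.pow 2).const_mul C
  refine squeeze_zero_norm' ?_ h1
  filter_upwards [near_zero hR] with x hx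
  have h0 : 0 < ‖x‖ := norm_pos_iff.mpr hx.1
  rw [norm_mul, norm_pow, norm_norm, Real.norm_eq_abs]
  calc ‖x‖ ^ 3 * |V x| ≤ ‖x‖ ^ 3 * (C * ‖x‖⁻¹) := by gcongr; exact hV x hx.1 hx.2
    _ = C * ‖x‖ ^ 2 := by field_simp

theorem ae_ne_zero : ∀ᵐ x : E4, x ≠ 0 := by simp [ae_iff, measure_singleton]

namespace Adm
variable {R : ℝ} {u : E4 → ℝ} (h : Adm R u)
include h

theorem ld_Dr (x : E4) (i : Fin 4) :
    HasLineDerivAt ℝ (Dr u) (pd u i x + ∑ j, x j * qd u i j x) x (bv i) := by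
  have := ld_sum (fun j => ld_mul (ld_coord x i j) (h.ld_pd x i j))
  refine ld_congr this ?_
  fin_cases i <;> simp [Fin.sum_univ_four] <;> ring

theorem Dr_smooth : ContDiff ℝ (⊤ : ℕ∞) (Dr u) := by
  unfold Dr
  refine ContDiff.sum fun j _ => ContDiff.mul ?_ (h.pd_smooth j)
  exact (EuclideanSpace.proj j : E4 →L[ℝ] ℝ).contDiff

theorem Lap_cont : Continuous (Lap u) := by
  unfold Lap; exact continuous_finsetSum _ fun j _ => h.qd_cont j j

omit h in
theorem Dr_bound {M : ℝ} (hM : ∀ x i, |pd u i x| ≤ M) (x : E4) : |Dr u x| ≤ 4 * M * ‖x‖ := by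
  have h0 : ∀ j, |x j * pd u j x| ≤ M * ‖x‖ := fun j => by
    rw [abs_mul, mul_comm]; exact mul_le_mul (hM x j) (coord_le x j) (abs_nonneg _)
      ((abs_nonneg _).trans (hM x j))
  calc |Dr u x| ≤ ∑ j, |x j * pd u j x| := Finset.abs_sum_le_sum_abs _ _
    _ ≤ ∑ j : Fin 4, M * ‖x‖ := Finset.sum_le_sum fun j _ => h0 j
    _ = _ := by simp; ring

omit h in
theorem Lap_bound {M : ℝ} (hM : ∀ x i j, |qd u i j x| ≤ M) (x : E4) : |Lap u x| ≤ 4 * M := by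
  calc |Lap u x| ≤ ∑ j, |qd u j j x| := Finset.abs_sum_le_sum_abs _ _
    _ ≤ ∑ j : Fin 4, M := Finset.sum_le_sum fun j _ => hM x j j
    _ = _ := by simp

omit h in
theorem _root_.Dr_zero {u : E4 → ℝ} {x : E4} (hx : x ∉ tsupport u) : Dr u x = 0 := by
  simp [Dr, pd_zero hx]

omit h in
theorem _root_.Lap_zero {u : E4 → ℝ} {x : E4} (hx : x ∉ tsupport u) : Lap u x = 0 := by
  simp [Lap, qd_zero hx]

omit h in
theorem _root_.u_zero {u : E4 → ℝ} {x : E4} (hx : x ∉ tsupport u) : u x = 0 :=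
  image_eq_zero_of_notMem_tsupport hx

/-- Functions dominated by the squares of `Δu`, `|x|⁻² x·∇u` and `|x|⁻² E₁⁻¹ u` are integrable: the three
quantities are `O(1)`, `O(|x|⁻¹)` and `O(|x|⁻² E₁⁻¹)`. -/
theorem int_of {f : E4 → ℝ} (C : ℝ) (hf : Measurable f) (hf0 : ∀ x ∉ tsupport u, f x = 0)
    (hb : ∀ x, x ≠ 0 → ‖x‖ ≤ R →
      |f x| ≤ C * (Lap u x ^ 2 + (kk x * Dr u x) ^ 2 + (kk x * tau R x * u x) ^ 2)) :
    Integrable f := by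
  obtain ⟨M, hM, hB⟩ := h.bound
  have hR := h.pos
  refine integrable_of_omg (C := |C| * (16 * M ^ 2 * R ^ 4 + 16 * M ^ 2 * R ^ 2 + M ^ 2)) hR hf ?_
  intro x hx
  by_cases hxs : x ∈ tsupport u
  swap
  · rw [hf0 x hxs, abs_zero]
    exact mul_nonneg (by positivity) (omg_nonneg _ _)
  have hxR := h.supp x hxs
  obtain ⟨o1, o2, o3, o4⟩ := omg_bounds hR hx hxR
  have hn : 0 < ‖x‖ := norm_pos_iff.mpr hx
  have a1 : Lap u x ^ 2 ≤ (4 * M) ^ 2 := sq_le_sq' (abs_le.mp (Lap_bound (fun x => (hB x).2.2) x)).1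
      (abs_le.mp (Lap_bound (fun x => (hB x).2.2) x)).2
  have a2 : (kk x * Dr u x) ^ 2 ≤ 16 * M ^ 2 * (‖x‖ ^ 2)⁻¹ := by
    have := Dr_bound (fun x => (hB x).2.1) x
    have h2 : Dr u x ^ 2 ≤ (4 * M * ‖x‖) ^ 2 := sq_le_sq' (abs_le.mp this).1 (abs_le.mp this).2
    calc (kk x * Dr u x) ^ 2 = kk x ^ 2 * Dr u x ^ 2 := by ring
      _ ≤ kk x ^ 2 * (4 * M * ‖x‖) ^ 2 := by gcongr
      _ = _ := by unfold kk; field_simp; ring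
  have a3 : (kk x * tau R x * u x) ^ 2 ≤ M ^ 2 * ((‖x‖ ^ 4)⁻¹ * (E1 (‖x‖ / R) ^ 2)⁻¹) := by
    have h2 : u x ^ 2 ≤ M ^ 2 := sq_le_sq' (abs_le.mp (hB x).1).1 (abs_le.mp (hB x).1).2
    have e : (‖x‖ ^ 4)⁻¹ * (E1 (‖x‖ / R) ^ 2)⁻¹ = (kk x * tau R x) ^ 2 := by
      unfold kk tau; rw [mul_pow, inv_pow, inv_pow]; ring_nf
    rw [e, mul_pow, mul_comm]; gcongr
  have ho := omg_nonneg R x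
  refine (hb x hx hxR).trans ?_
  rw [mul_assoc |C|]
  refine mul_le_mul (le_abs_self C) ?_ (by positivity) (abs_nonneg C)
  have b1 : 16 * M ^ 2 * 1 ≤ 16 * M ^ 2 * (R ^ 4 * omg R x) := by gcongr
  have b2 : 16 * M ^ 2 * (‖x‖ ^ 2)⁻¹ ≤ 16 * M ^ 2 * (R ^ 2 * omg R x) := by gcongr
  have b3 : M ^ 2 * ((‖x‖ ^ 4)⁻¹ * (E1 (‖x‖ / R) ^ 2)⁻¹) ≤ M ^ 2 * omg R x := by gcongr
  nlinarith

theorem meas_u : Measurable u := h.smooth.continuous.measurable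
theorem meas_pd (i : Fin 4) : Measurable (pd u i) := (h.pd_smooth i).continuous.measurable
theorem meas_Dr : Measurable (Dr u) := h.Dr_smooth.continuous.measurable
theorem meas_Lap : Measurable (Lap u) := h.Lap_cont.measurable

end Adm

/-- Divergence of the Rellich–Pohozaev type field `|x|⁻² ((x·∇u) ∇u - ½ |∇u|² x)`. -/
noncomputable def d1 (u : E4 → ℝ) (x : E4) : ℝ :=
  kk x * Dr u x * Lap u x - 2 * (kk x * Dr u x) ^ 2

/-- The logarithmic multiplier `½ E₁⁻¹ (1 + E₂⁻¹)`. -/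
noncomputable def FF (R : ℝ) (x : E4) : ℝ := tau R x * (1 + psi R x) / 2

/-- Divergence of the field `|x|⁻⁴ F u² x`. -/
noncomputable def d2 (R : ℝ) (u : E4 → ℝ) (x : E4) : ℝ :=
  2 * kk x ^ 2 * FF R x * u x * Dr u x
    + kk x ^ 2 * (tau R x ^ 2 * (1 + psi R x + psi R x ^ 2)) / 2 * u x ^ 2

/-- Energy density: the squares that make up the Leray–Rellich remainder. -/
noncomputable def en (R : ℝ) (u : E4 → ℝ) (x : E4) : ℝ :=
  (Lap u x - 2 * (kk x * Dr u x)) ^ 2 + 4 * (kk x * (Dr u x + FF R x * u x)) ^ 2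
    + (kk x * u x * tau R x * psi R x) ^ 2

theorem en_nonneg (R : ℝ) (u : E4 → ℝ) (x : E4) : 0 ≤ en R u x := by unfold en; positivity

/-- The pointwise identity `e = (Δu)² - k² τ² u² - 4 d₁ + 4 d₂`. -/
theorem en_eq (R : ℝ) (u : E4 → ℝ) (x : E4) :
    en R u x = Lap u x ^ 2 - (kk x * tau R x * u x) ^ 2 - 4 * d1 u x + 4 * d2 R u x := by
  unfold en d1 d2 FF; ring

theorem measurable_FF (R : ℝ) : Measurable (FF R) := by
  have := measurable_tau R; have := measurable_psi R
  unfold FF; fun_prop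

namespace Adm
variable {R : ℝ} {u : E4 → ℝ} (h : Adm R u)
include h

theorem meas_d1 : Measurable (d1 u) := by
  have := measurable_kk; have := h.meas_Dr; have := h.meas_Lap
  unfold d1; fun_prop

theorem meas_d2 : Measurable (d2 R u) := by
  have := measurable_kk; have := h.meas_Dr; have := h.meas_u; have := measurable_FF R
  have := measurable_tau R; have := measurable_psi R
  unfold d2; fun_prop

theorem int_d1 : Integrable (d1 u) := by
  refine h.int_of 3 h.meas_d1 (fun x hx => by simp [d1, Dr_zero hx]) fun x hx hxR => ?_
  unfold d1
  rw [abs_le]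
  constructor <;>
    nlinarith [sq_nonneg (kk x * Dr u x + Lap u x), sq_nonneg (kk x * Dr u x - Lap u x),
      sq_nonneg (kk x * Dr u x), sq_nonneg (Lap u x), sq_nonneg (kk x * tau R x * u x)]

theorem FF_mem {x : E4} (hx : x ≠ 0) (hxR : ‖x‖ ≤ R) : 0 < FF R x ∧ FF R x ≤ tau R x := by
  obtain ⟨t0, t1⟩ := tau_mem h.pos hx hxR
  obtain ⟨p0, p1⟩ := psi_mem h.pos hx hxR
  unfold FF
  constructor
  · positivity
  · nlinarith

theorem int_d2 : Integrable (d2 R u) := by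
  refine h.int_of 4 h.meas_d2 (fun x hx => by simp [d2, u_zero hx]) fun x hx hxR => ?_
  obtain ⟨t0, t1⟩ := tau_mem h.pos hx hxR
  obtain ⟨p0, p1⟩ := psi_mem h.pos hx hxR
  set b := kk x * Dr u x
  set z := kk x * tau R x * u x
  have e : d2 R u x = (1 + psi R x) * (z * b) + (1 + psi R x + psi R x ^ 2) / 2 * z ^ 2 := by
    unfold d2 FF; ring
  have h1 : |z * b| ≤ (z ^ 2 + b ^ 2) / 2 := by
    rw [abs_le]; constructor <;> nlinarith [sq_nonneg (z + b), sq_nonneg (z - b)]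
  have h2 : psi R x ^ 2 ≤ 1 := by nlinarith
  calc |d2 R u x| ≤ |(1 + psi R x) * (z * b)| + |(1 + psi R x + psi R x ^ 2) / 2 * z ^ 2| := by
        rw [e]; exact abs_add_le _ _
    _ = (1 + psi R x) * |z * b| + (1 + psi R x + psi R x ^ 2) / 2 * z ^ 2 := by
        rw [abs_mul, abs_of_pos (by positivity : 0 < 1 + psi R x),
          abs_of_nonneg (by positivity : 0 ≤ (1 + psi R x + psi R x ^ 2) / 2 * z ^ 2)]
    _ ≤ 2 * ((z ^ 2 + b ^ 2) / 2) + 3 / 2 * z ^ 2 := by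
        gcongr <;> linarith
    _ ≤ _ := by nlinarith [sq_nonneg (Lap u x), sq_nonneg z, sq_nonneg b]

/-- The field is `O(|x|⁻¹)` at the origin. -/
theorem integral_d1 : ∫ x, d1 u x = 0 := by
  obtain ⟨M, hM, hB⟩ := h.bound
  let V : Fin 4 → E4 → ℝ := fun i x =>
    kk x * (Dr u x * pd u i x - (∑ j, pd u j x * pd u j x) * ((1/2) * x i))
  let D : Fin 4 → E4 → ℝ := fun i x =>
    (-2 * kk x ^ 2 * x i) * (Dr u x * pd u i x - (∑ j, pd u j x * pd u j x) * ((1/2) * x i))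
      + kk x * (((pd u i x + ∑ j, x j * qd u i j x) * pd u i x + Dr u x * qd u i i x)
        - ((∑ j, (qd u i j x * pd u j x + pd u j x * qd u i j x)) * ((1/2) * x i)
          + (∑ j, pd u j x * pd u j x) * (1/2)))
  -- the cubic terms `xⱼ ∂ᵢu ∂ᵢ∂ⱼu` cancel by symmetry of second derivatives; the rest is `k |x|² = 1`
  have hsum : ∀ x, x ≠ 0 → ∑ i, D i x = d1 u x := by
    intro x hx
    have hk := kk_sum hx
    have s := fun i j => h.qd_symm x i j
    simp only [D, d1, Dr, Lap, Fin.sum_univ_four]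
    rw [s 1 0, s 2 0, s 3 0, s 2 1, s 3 1, s 3 2]
    linear_combination (kk x * (pd u 0 x ^ 2 + pd u 1 x ^ 2 + pd u 2 x ^ 2 + pd u 3 x ^ 2)) * hk
  have hae : d1 u =ᵐ[volume] fun x => ∑ i, D i x := by
    filter_upwards [ae_ne_zero] with x hx using (hsum x hx).symm
  rw [integral_congr_ae hae]
  refine punctured_divergence (V := V) (S := tsupport u) h.cpt ?_ ?_ ?_ ?_ ?_ (h.int_d1.congr hae)
  · intro i x _ hx
    have c1 := fun j => (h.pd_smooth j).contDiffAt (x := x) |>.of_le (m := 1) (by simp)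
    have c2 := h.Dr_smooth.contDiffAt (x := x) |>.of_le (m := 1) (by simp)
    have c3 : ContDiffAt ℝ 1 (fun y : E4 => y i) x :=
      (EuclideanSpace.proj i : E4 →L[ℝ] ℝ).contDiff.contDiffAt
    exact (cd_kk hx).mul ((c2.mul (c1 i)).sub
      ((ContDiffAt.sum fun j _ => (c1 j).mul (c1 j)).mul (contDiffAt_const.mul c3)))
  · intro i x hx
    simp [V, pd_zero hx]
  · intro i x hx
    simp [D, pd_zero hx, Dr_zero hx]
  · intro i x _ hx
    refine ld_congr (ld_mul (ld_kk hx i) (ld_sub (ld_mul (h.ld_Dr x i) (h.ld_pd x i i))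
      (ld_mul (ld_sum fun j => ld_mul (h.ld_pd x i j) (h.ld_pd x i j))
        (ld_mul (ld_const (1/2)) (ld_coord x i i))))) ?_
    simp only [D]; simp
  · intro i
    refine flux_lim (R := R) (C := 6 * M ^ 2) h.pos fun x hx hxR => ?_
    have hn : 0 < ‖x‖ := norm_pos_iff.mpr hx
    have hk := kk_pos hx
    have a1 : |Dr u x * pd u i x| ≤ 4 * M * ‖x‖ * M := by
      rw [abs_mul]
      exact mul_le_mul (Dr_bound (fun x => (hB x).2.1) x) ((hB x).2.1 i) (abs_nonneg _)
        (by positivity)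
    have a2 : |∑ j, pd u j x * pd u j x| ≤ 4 * M ^ 2 := by
      calc _ ≤ ∑ j, |pd u j x * pd u j x| := Finset.abs_sum_le_sum_abs _ _
        _ ≤ ∑ j : Fin 4, M ^ 2 := Finset.sum_le_sum fun j _ => by
            rw [abs_mul, ← pow_two]; exact pow_le_pow_left₀ (abs_nonneg _) ((hB x).2.1 j) 2
        _ = _ := by simp
    have a3 : |(1/2) * x i| ≤ (1/2) * ‖x‖ := by
      rw [abs_mul, abs_of_pos (by norm_num)]; gcongr; exact coord_le x i
    simp only [V]
    rw [abs_mul, abs_of_pos hk]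
    calc _ ≤ kk x * (4 * M * ‖x‖ * M + 4 * M ^ 2 * ((1/2) * ‖x‖)) := by
          gcongr
          refine (abs_sub _ _).trans (add_le_add a1 ?_)
          rw [abs_mul]
          exact mul_le_mul a2 a3 (abs_nonneg _) (by positivity)
      _ = 6 * M ^ 2 * ‖x‖⁻¹ := by unfold kk; field_simp; ring

/-- The field is only `O(|x|⁻³ τ)` at the origin; its flux vanishes because `τ = 1/E₁ → 0`. -/
theorem integral_d2 : ∫ x, d2 R u x = 0 := by
  obtain ⟨M, hM, hB⟩ := h.bound
  have hR := h.pos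
  let V : Fin 4 → E4 → ℝ := fun i x =>
    kk x * kk x * (tau R x * (1 + psi R x) * (u x * u x * ((1/2) * x i)))
  let D : Fin 4 → E4 → ℝ := fun i x =>
    ((-2 * kk x ^ 2 * x i) * kk x + kk x * (-2 * kk x ^ 2 * x i))
        * (tau R x * (1 + psi R x) * (u x * u x * ((1/2) * x i)))
      + kk x * kk x * (((tau R x ^ 2 * kk x * x i) * (1 + psi R x)
          + tau R x * (tau R x * psi R x ^ 2 * kk x * x i)) * (u x * u x * ((1/2) * x i))
        + tau R x * (1 + psi R x) * ((pd u i x * u x + u x * pd u i x) * ((1/2) * x i)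
          + u x * u x * (1/2)))
  have hsum : ∀ x, x ≠ 0 → ∑ i, D i x = d2 R u x := by
    intro x hx
    have hk := kk_sum hx
    simp only [D, d2, FF, Dr, Fin.sum_univ_four]
    linear_combination (kk x ^ 2 * u x ^ 2 * (-2 * (tau R x * (1 + psi R x))
      + tau R x ^ 2 * (1 + psi R x + psi R x ^ 2) / 2)) * hk
  have hae : d2 R u =ᵐ[volume] fun x => ∑ i, D i x := by
    filter_upwards [ae_ne_zero] with x hx using (hsum x hx).symm
  rw [integral_congr_ae hae]
  refine punctured_divergence (V := V) (S := tsupport u) h.cpt ?_ ?_ ?_ ?_ ?_ (h.int_d2.congr hae)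
  · intro i x hxs hx
    have c1 := h.smooth.contDiffAt (x := x) |>.of_le (m := 1) (by simp)
    have c3 : ContDiffAt ℝ 1 (fun y : E4 => y i) x :=
      (EuclideanSpace.proj i : E4 →L[ℝ] ℝ).contDiff.contDiffAt
    have hxR := h.supp x hxs
    exact ((cd_kk hx).mul (cd_kk hx)).mul (((cd_tau hR hx hxR).mul
      (contDiffAt_const.add (cd_psi hR hx hxR))).mul ((c1.mul c1).mul (contDiffAt_const.mul c3)))
  · intro i x hx
    simp [V, u_zero hx]
  · intro i x hx
    simp [D, u_zero hx]
  · intro i x hxs hx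
    have hxR := h.supp x hxs
    refine ld_congr (ld_mul (ld_mul (ld_kk hx i) (ld_kk hx i)) (ld_mul (ld_mul (ld_tau hR hx hxR i)
      (ld_add (ld_const 1) (ld_psi hR hx hxR i))) (ld_mul (ld_mul (h.ld_u x i) (h.ld_u x i))
        (ld_mul (ld_const (1/2)) (ld_coord x i i))))) ?_
    simp only [D]; simp
  · intro i
    have h1 : Tendsto (fun x : E4 => M ^ 2 * tau R x) (𝓝[≠] 0) (𝓝 0) := by
      simpa using (tau_tendsto hR).const_mul (M ^ 2)
    refine squeeze_zero_norm' ?_ h1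
    filter_upwards [near_zero hR] with x hx
    obtain ⟨t0, t1⟩ := tau_mem hR hx.1 hx.2
    obtain ⟨p0, p1⟩ := psi_mem hR hx.1 hx.2
    have hn : 0 < ‖x‖ := norm_pos_iff.mpr hx.1
    have hk := kk_pos hx.1
    have hu : |u x * u x| ≤ M ^ 2 := by
      rw [abs_mul, ← pow_two]; exact pow_le_pow_left₀ (abs_nonneg _) (hB x).1 2
    have hx3 : |(1/2) * x i| ≤ (1/2) * ‖x‖ := by
      rw [abs_mul, abs_of_pos (by norm_num)]; gcongr; exact coord_le x i
    have e : ‖‖x‖ ^ 3 * V i x‖ = ‖x‖ ^ 3 * (kk x * kk x * (tau R x * (1 + psi R x)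
        * (|u x * u x| * |(1/2) * x i|))) := by
      simp only [V, Real.norm_eq_abs]
      rw [abs_mul, abs_mul, abs_mul (tau R x * (1 + psi R x)), abs_mul (u x * u x),
        abs_of_pos (by positivity : 0 < ‖x‖ ^ 3), abs_of_pos (by positivity : 0 < kk x * kk x),
        abs_of_pos (by positivity : 0 < tau R x * (1 + psi R x))]
    rw [e]
    calc _ ≤ ‖x‖ ^ 3 * (kk x * kk x * (tau R x * (1 + 1) * (M ^ 2 * ((1/2) * ‖x‖)))) := by
          gcongr
      _ = M ^ 2 * tau R x := by unfold kk; field_simp; ring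

theorem meas_en : Measurable (en R u) := by
  have := measurable_kk; have := h.meas_Dr; have := h.meas_Lap; have := h.meas_u
  have := measurable_FF R; have := measurable_tau R; have := measurable_psi R
  unfold en; fun_prop

theorem int_Lap_sq : Integrable (fun x => Lap u x ^ 2) := by
  refine h.int_of 1 (h.meas_Lap.pow_const 2) (fun x hx => by simp [Lap_zero hx]) fun x hx hxR => ?_
  rw [abs_of_nonneg (by positivity)]
  nlinarith [sq_nonneg (kk x * Dr u x), sq_nonneg (kk x * tau R x * u x)]

theorem int_leray : Integrable (fun x => (kk x * tau R x * u x) ^ 2) := by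
  have m : Measurable (fun x => (kk x * tau R x * u x) ^ 2) := by
    have := measurable_kk; have := h.meas_u; have := measurable_tau R
    fun_prop
  refine h.int_of 1 m (fun x hx => by simp [u_zero hx]) fun x hx hxR => ?_
  rw [abs_of_nonneg (by positivity)]
  nlinarith [sq_nonneg (kk x * Dr u x), sq_nonneg (Lap u x)]

/-- The Leray–Rellich functional is the integral of the energy density. -/
theorem integral_en : Integrable (en R u) ∧
    ∫ x, en R u x = (∫ x, Lap u x ^ 2) - ∫ x, (kk x * tau R x * u x) ^ 2 := by
  have e : en R u = fun x => Lap u x ^ 2 - (kk x * tau R x * u x) ^ 2 - 4 * d1 u x + 4 * d2 R u x :=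
    funext (en_eq R u)
  have i1 := h.int_Lap_sq.sub h.int_leray
  have i2 := h.int_d1.const_mul 4
  have i3 := h.int_d2.const_mul 4
  constructor
  · rw [e]; exact (i1.sub i2).add i3
  · have a1 := integral_add (i1.sub i2) i3
    have a2 := integral_sub i1 i2
    have a3 := integral_sub h.int_Lap_sq h.int_leray
    simp only [Pi.sub_apply, integral_const_mul, h.integral_d1, h.integral_d2] at a1 a2 a3
    rw [e]; linarith

end Adm

/-! ### The transformed function and Green’s identity -/

/-- The transformed function `w = u / E₂(|x|/R)`. -/
noncomputable def ww (R : ℝ) (u : E4 → ℝ) (x : E4) : ℝ := u x * psi R x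

/-- `∂ᵢw` away from the origin. -/
noncomputable def pw (R : ℝ) (u : E4 → ℝ) (i : Fin 4) (x : E4) : ℝ :=
  pd u i x * psi R x + u x * (tau R x * (psi R x * psi R x) * (kk x * x i))

/-- `Δw` away from the origin. -/
noncomputable def qw (R : ℝ) (u : E4 → ℝ) (x : E4) : ℝ :=
  psi R x * Lap u x + 2 * kk x * tau R x * psi R x ^ 2 * Dr u x
    + kk x * u x * (2 * tau R x * psi R x ^ 2 + tau R x ^ 2 * psi R x ^ 2
      + 2 * tau R x ^ 2 * psi R x ^ 3)

/-- The regularised kernel `y ↦ (|x - y|² + s)⁻¹`. -/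
noncomputable def KK (s : ℝ) (x y : E4) : ℝ := (‖x - y‖ ^ 2 + s)⁻¹

theorem KK_pos {s : ℝ} (hs : 0 < s) (x y : E4) : 0 < KK s x y := by unfold KK; positivity

theorem KK_le {s : ℝ} (hs : 0 < s) (x y : E4) : KK s x y ≤ s⁻¹ := by
  unfold KK; gcongr; nlinarith [sq_nonneg ‖x - y‖]

theorem measurable_KK (s : ℝ) (x : E4) : Measurable (KK s x) := by unfold KK; fun_prop

theorem ld_KK {s : ℝ} (hs : 0 < s) (x y : E4) (i : Fin 4) :
    HasLineDerivAt ℝ (KK s x) (2 * (x i - y i) * (KK s x y * KK s x y)) y (bv i) := by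
  have := ld_comp (hasDerivAt_inv (by positivity : ‖x - y‖ ^ 2 + s ≠ 0))
    (ld_add (ld_nsq y x i) (ld_const s))
  exact ld_congr this (by unfold KK; field_simp; ring)

theorem cd_KK {s : ℝ} (hs : 0 < s) (x y : E4) : ContDiffAt ℝ 1 (KK s x) y := by
  have : ContDiffAt ℝ 1 (fun y : E4 => ‖x - y‖ ^ 2 + s) y :=
    ((contDiff_const.sub contDiff_id).norm_sq ℝ).contDiffAt.add contDiffAt_const
  exact this.inv (by positivity)

theorem KK_sum {s : ℝ} (hs : 0 < s) (x y : E4) :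
    KK s x y * ((x 0 - y 0) ^ 2 + (x 1 - y 1) ^ 2 + (x 2 - y 2) ^ 2 + (x 3 - y 3) ^ 2 + s) = 1 := by
  have e := nsq_eq (x - y)
  simp only [PiLp.sub_apply, Fin.sum_univ_four] at e
  rw [← e]; unfold KK; field_simp

namespace Adm
variable {R : ℝ} {u : E4 → ℝ} (h : Adm R u)
include h

theorem meas_qw : Measurable (qw R u) := by
  have := measurable_kk; have := h.meas_Dr; have := h.meas_Lap; have := h.meas_u
  have := measurable_tau R; have := measurable_psi R
  unfold qw; fun_prop

theorem meas_ww : Measurable (ww R u) := by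
  have := h.meas_u; have := measurable_psi R
  unfold ww; fun_prop

/-- `Δw` is controlled by the energy density. -/
theorem qw_sq_le {x : E4} (hx : x ≠ 0) (hxR : ‖x‖ ≤ R) : qw R u x ^ 2 ≤ 6 * en R u x := by
  obtain ⟨t0, t1⟩ := tau_mem h.pos hx hxR
  obtain ⟨p0, p1⟩ := psi_mem h.pos hx hxR
  set a := Lap u x - 2 * (kk x * Dr u x) with ha
  set b := 2 * (kk x * (Dr u x + FF R x * u x)) with hb
  set z := kk x * u x * tau R x * psi R x with hz
  have e1 : en R u x = a ^ 2 + b ^ 2 + z ^ 2 := by rw [hb]; unfold en; ring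
  -- with `F = ½ τ (1 + ψ)` the coefficients of `a`, `b`, `z` are bounded by `1`, `2`, `1`, and
  -- `(|a| + 2|b| + |z|)² ≤ (1 + 4 + 1)(a² + b² + z²)`
  have e2 : qw R u x = psi R x * a + (psi R x * (1 + tau R x * psi R x)) * b
      + (-1 + psi R x + tau R x * psi R x ^ 2) * z := by
    rw [ha, hb, hz]; unfold qw FF; ring
  have q : tau R x * psi R x ≤ 1 := mul_le_one₀ t1 p0.le p1
  have q0 : 0 < tau R x * psi R x := by positivity
  have q2 : tau R x * psi R x ^ 2 ≤ 1 := mul_le_one₀ t1 (by positivity) (by nlinarith)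
  have c1 : |psi R x * a| ≤ |a| := by
    rw [abs_mul, abs_of_pos p0]; exact mul_le_of_le_one_left (abs_nonneg _) p1
  have c2 : |(psi R x * (1 + tau R x * psi R x)) * b| ≤ 2 * |b| := by
    rw [abs_mul, abs_of_pos (by positivity)]
    gcongr; nlinarith
  have c3 : |(-1 + psi R x + tau R x * psi R x ^ 2) * z| ≤ |z| := by
    rw [abs_mul]
    refine mul_le_of_le_one_left (abs_nonneg _) (abs_le.mpr ⟨?_, ?_⟩)
    · have : 0 < tau R x * psi R x ^ 2 := by positivity
      linarith
    · linarith
  have c4 : |qw R u x| ≤ |a| + 2 * |b| + |z| := by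
    rw [e2]
    exact (abs_add_three _ _ _).trans (by linarith)
  rw [e1, ← sq_abs, ← sq_abs a, ← sq_abs b, ← sq_abs z]
  have := pow_le_pow_left₀ (abs_nonneg _) c4 2
  nlinarith [sq_nonneg (|a| - |z|), sq_nonneg (2 * |a| - |b|), sq_nonneg (|b| - 2 * |z|)]

omit h in
theorem _root_.qw_zero {x : E4} (hx : x ∉ tsupport u) : qw R u x = 0 := by
  simp [qw, Lap_zero hx, Dr_zero hx, u_zero hx]

theorem int_supp : Integrable ((tsupport u).indicator fun _ => (1 : ℝ)) :=
  (integrable_indicator_iff (isClosed_tsupport u).measurableSet).mpr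
    (integrableOn_const h.cpt.measure_lt_top.ne)

theorem int_KKqw {s : ℝ} (hs : 0 < s) (x : E4) : Integrable (fun y => KK s x y * qw R u y) := by
  refine (((h.int_supp).add (h.integral_en.1.const_mul 6)).const_mul s⁻¹).mono'
    ((measurable_KK s x).mul h.meas_qw).aestronglyMeasurable ?_
  filter_upwards [ae_ne_zero] with y hy
  simp only [Pi.add_apply]
  have he := en_nonneg R u y
  by_cases hys : y ∈ tsupport u
  · rw [norm_mul, Real.norm_eq_abs, Real.norm_eq_abs, abs_of_pos (KK_pos hs x y),
      Set.indicator_of_mem hys]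
    have h1 := h.qw_sq_le hy (h.supp y hys)
    have h2 : |qw R u y| ≤ 1 + 6 * en R u y := by
      rw [← sq_abs] at h1; nlinarith [sq_nonneg (|qw R u y| - 1)]
    exact mul_le_mul (KK_le hs x y) h2 (abs_nonneg _) (by positivity)
  · rw [qw_zero hys, Set.indicator_of_notMem hys]; simp; positivity

theorem ww_bound {M : ℝ} (hM : 0 ≤ M) (hB : ∀ x, |u x| ≤ M) {x : E4} (hx : x ≠ 0) : |ww R u x| ≤ M := by
  by_cases hxs : x ∈ tsupport u
  · obtain ⟨p0, p1⟩ := psi_mem h.pos hx (h.supp x hxs)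
    unfold ww
    rw [abs_mul, abs_of_pos p0]
    exact (mul_le_of_le_one_right (abs_nonneg _) p1).trans (hB x)
  · simpa [ww, u_zero hxs] using hM

theorem int_ww : Integrable (ww R u) := by
  obtain ⟨M, hM, hB⟩ := h.bound
  refine (h.int_supp.const_mul M).mono' h.meas_ww.aestronglyMeasurable ?_
  filter_upwards [ae_ne_zero] with y hy
  by_cases hys : y ∈ tsupport u
  · rw [Set.indicator_of_mem hys, mul_one]
    exact h.ww_bound hM (fun x => (hB x).1) hy
  · simp [ww, u_zero hys, Set.indicator_of_notMem hys]

theorem int_KKww {s : ℝ} (hs : 0 < s) (x : E4) :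
    Integrable (fun y => 8 * s * KK s x y ^ 3 * ww R u y) := by
  refine (h.int_ww).bdd_mul (c := 8 * s * s⁻¹ ^ 3) ?_ ?_
  · exact (((measurable_KK s x).pow_const 3).const_mul (8 * s)).aestronglyMeasurable
  · refine Eventually.of_forall fun y => ?_
    have := KK_pos hs x y
    rw [Real.norm_eq_abs, abs_of_pos (by positivity)]
    gcongr
    exact KK_le hs x y

theorem ld_ww {y : E4} (hy : y ≠ 0) (hyR : ‖y‖ ≤ R) (i : Fin 4) :
    HasLineDerivAt ℝ (ww R u) (pw R u i y) y (bv i) :=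
  ld_congr (ld_mul (h.ld_u y i) (ld_psi h.pos hy hyR i)) (by unfold pw; ring)

/-- Green's identity for `w` against the regularised kernel, whose Laplacian is `-8 s (|x - y|² + s)⁻³`. -/
theorem green {s : ℝ} (hs : 0 < s) (x : E4) :
    ∫ y, 8 * s * KK s x y ^ 3 * ww R u y = -∫ y, KK s x y * qw R u y := by
  obtain ⟨M, hM, hB⟩ := h.bound
  have hR := h.pos
  let V : Fin 4 → E4 → ℝ := fun i y =>
    KK s x y * (pd u i y * psi R y + u y * (tau R y * (psi R y * psi R y) * (kk y * y i)))
      - ww R u y * (2 * (x i - y i) * (KK s x y * KK s x y))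
  let K1 : Fin 4 → E4 → ℝ := fun i y => 2 * (x i - y i) * (KK s x y * KK s x y)
  let P : Fin 4 → E4 → ℝ := fun i y => tau R y * psi R y ^ 2 * kk y * y i
  let D : Fin 4 → E4 → ℝ := fun i y =>
    K1 i y * pw R u i y
      + KK s x y * ((qd u i i y * psi R y + pd u i y * P i y)
        + (pd u i y * (tau R y * (psi R y * psi R y) * (kk y * y i))
          + u y * (((tau R y ^ 2 * kk y * y i) * (psi R y * psi R y)
              + tau R y * (P i y * psi R y + psi R y * P i y)) * (kk y * y i)
            + tau R y * (psi R y * psi R y) * (-2 * kk y ^ 2 * y i * y i + kk y * 1))))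
      - (pw R u i y * K1 i y
        + ww R u y * (((0 * (x i - y i)) + 2 * (0 - 1)) * (KK s x y * KK s x y)
          + 2 * (x i - y i) * (K1 i y * KK s x y + KK s x y * K1 i y)))
  have hsum : ∀ y, y ≠ 0 → ∑ i, D i y = KK s x y * qw R u y + 8 * s * KK s x y ^ 3 * ww R u y := by
    intro y hy
    have hk := kk_sum hy
    have hK := KK_sum hs x y
    simp only [D, K1, P, qw, pw, ww, Dr, Lap, Fin.sum_univ_four]
    linear_combination (KK s x y * kk y * u y * tau R y * psi R y ^ 2
      * (tau R y + 2 * tau R y * psi R y - 2)) * hk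
      - 8 * u y * psi R y * KK s x y ^ 2 * hK
  have i1 := h.int_KKqw hs x
  have i2 := h.int_KKww hs x
  have hae : (fun y => KK s x y * qw R u y + 8 * s * KK s x y ^ 3 * ww R u y)
      =ᵐ[volume] fun y => ∑ i, D i y := by
    filter_upwards [ae_ne_zero] with y hy using (hsum y hy).symm
  have key : ∫ y, ∑ i, D i y = 0 := by
    refine punctured_divergence (V := V) (S := tsupport u) h.cpt ?_ ?_ ?_ ?_ ?_ ((i1.add i2).congr hae)
    · intro i y hys hy
      have hyR := h.supp y hys
      have c1 := h.smooth.contDiffAt (x := y) |>.of_le (m := 1) (by simp)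
      have c2 := (h.pd_smooth i).contDiffAt (x := y) |>.of_le (m := 1) (by simp)
      have c3 : ContDiffAt ℝ 1 (fun y : E4 => y i) y :=
        (EuclideanSpace.proj i : E4 →L[ℝ] ℝ).contDiff.contDiffAt
      have cK := cd_KK hs x y
      have cp := cd_psi hR hy hyR
      exact (cK.mul ((c2.mul cp).add (c1.mul (((cd_tau hR hy hyR).mul (cp.mul cp)).mul
        ((cd_kk hy).mul c3))))).sub ((c1.mul cp).mul ((contDiffAt_const.mul
          (contDiffAt_const.sub c3)).mul (cK.mul cK)))
    · intro i y hy
      simp [V, ww, u_zero hy, pd_zero hy]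
    · intro i y hy
      simp [D, pw, ww, u_zero hy, pd_zero hy, qd_zero hy]
    · intro i y hys hy
      have hyR := h.supp y hys
      have lp := ld_psi hR hy hyR i
      have lK := ld_KK hs x y i
      have lc := ld_coord y i i
      refine ld_congr (ld_sub (ld_mul lK (ld_add (ld_mul (h.ld_pd y i i) lp) (ld_mul (h.ld_u y i)
        (ld_mul (ld_mul (ld_tau hR hy hyR i) (ld_mul lp lp)) (ld_mul (ld_kk hy i) lc)))))
        (ld_mul (h.ld_ww hy hyR i) (ld_mul (ld_mul (ld_const 2) (ld_sub (ld_const (x i)) lc))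
          (ld_mul lK lK)))) ?_
      simp only [D, K1, P, pw, if_true]
    · intro i
      refine flux_lim (R := R) (C := s⁻¹ * (M * R + M) + M * (2 * (‖x‖ + R) * (s⁻¹ * s⁻¹)) * R)
        h.pos fun y hy hyR => ?_
      have hn : 0 < ‖y‖ := norm_pos_iff.mpr hy
      have hk := kk_pos hy
      obtain ⟨t0, t1⟩ := tau_mem hR hy hyR
      obtain ⟨p0, p1⟩ := psi_mem hR hy hyR
      have kp := KK_pos hs x y
      have kl := KK_le hs x y
      have b1 : |pd u i y * psi R y| ≤ M * 1 := by
        rw [abs_mul, abs_of_pos p0]; exact mul_le_mul ((hB y).2.1 i) p1 p0.le hM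
      have b2 : |u y * (tau R y * (psi R y * psi R y) * (kk y * y i))| ≤ M * (1 * (1 * 1) * (kk y * ‖y‖)) := by
        rw [abs_mul, abs_mul, abs_mul (kk y), abs_of_pos hk, abs_of_pos (by positivity : 0 < tau R y * (psi R y * psi R y))]
        gcongr
        · exact (hB y).1
        · exact coord_le y i
      have b3 : |ww R u y| ≤ M := h.ww_bound hM (fun x => (hB x).1) hy
      have b4 : |2 * (x i - y i) * (KK s x y * KK s x y)| ≤ 2 * (‖x‖ + R) * (s⁻¹ * s⁻¹) := by
        rw [abs_mul, abs_mul, abs_of_pos (by norm_num : (0:ℝ) < 2), abs_of_pos (by positivity : 0 < KK s x y * KK s x y)]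
        gcongr
        exact (abs_sub _ _).trans (add_le_add (coord_le x i) ((coord_le y i).trans hyR))
      have e1 : kk y * ‖y‖ = ‖y‖⁻¹ := by unfold kk; field_simp
      have e2 : 1 ≤ R * ‖y‖⁻¹ := by rw [← div_eq_mul_inv, one_le_div hn]; exact hyR
      calc |V i y| ≤ s⁻¹ * (M * 1 + M * (1 * (1 * 1) * (kk y * ‖y‖)))
            + M * (2 * (‖x‖ + R) * (s⁻¹ * s⁻¹)) := by
            refine (abs_sub _ _).trans (add_le_add ?_ ?_)
            · rw [abs_mul, abs_of_pos kp]
              gcongr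
              exact (abs_add_le _ _).trans (add_le_add b1 b2)
            · rw [abs_mul]; gcongr
        _ ≤ s⁻¹ * (M * (R * ‖y‖⁻¹) + M * ‖y‖⁻¹)
            + M * (2 * (‖x‖ + R) * (s⁻¹ * s⁻¹)) * (R * ‖y‖⁻¹) := by
            rw [e1, one_mul, one_mul, one_mul]
            refine add_le_add ?_ (le_mul_of_one_le_right (by positivity) e2)
            gcongr
        _ = _ := by ring
  have a1 := integral_congr_ae hae
  rw [key] at a1
  have a2 := integral_add i1 i2
  linarith

end Adm

/-! ### Pointwise bound and exponential integrability -/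

/-- The profile of the approximate identity `8 s (|x - y|² + s)⁻³` at `s = 1`. -/
noncomputable def bub (z : E4) : ℝ := 8 * ((1 + ‖z‖ ^ 2)⁻¹) ^ 3

/-- Total mass of `bub`. -/
noncomputable def c0 : ℝ := ∫ z, bub z

theorem bub_integrable : Integrable bub := by
  have h := (integrable_rpow_neg_one_add_norm_sq (E := E4) (μ := volume) (r := 6)
    (by simp; norm_num)).const_mul 8
  refine h.congr (Eventually.of_forall fun z => ?_)
  have e : (-(6 : ℝ) / 2) = -((3 : ℕ) : ℝ) := by norm_num
  simp only [bub]
  rw [e, Real.rpow_neg (by positivity), Real.rpow_natCast, inv_pow]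

theorem bub_nonneg (z : E4) : 0 ≤ bub z := by unfold bub; positivity

theorem c0_pos : 0 < c0 := by
  refine integral_pos_of_integrable_nonneg_nonzero (x := 0) ?_ bub_integrable bub_nonneg ?_
  · unfold bub
    exact continuous_const.mul (((continuous_const.add (continuous_norm.pow 2)).inv₀
      (fun z => (by positivity : (0 : ℝ) < 1 + ‖z‖ ^ 2).ne')).pow 3)
  · simp [bub]

theorem c4_pos : 0 < c4 :=
  ENNReal.toReal_pos (Metric.measure_ball_pos volume _ one_pos).ne'
    (measure_ball_lt_top).ne

/-- As `s → 0` the kernels `8 s (|x - y|² + s)⁻³`, all of mass `c0`, concentrate at `x`, so a bound on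
the averages of `g` that is uniform in `s` passes to `g x`. -/
theorem peak {g : E4 → ℝ} (hg : Integrable g) {x : E4} (hx : ContinuousAt g x) {Q : ℝ}
    (hQ : ∀ s, 0 < s → |∫ y, 8 * s * KK s x y ^ 3 * g y| ≤ Q) : c0 * |g x| ≤ Q := by
  have hc := c0_pos
  have hlim : Tendsto (fun z : E4 => ‖z‖ ^ Module.finrank ℝ E4 * (c0⁻¹ * bub z))
      (Bornology.cobounded E4) (𝓝 0) := by
    have h1 : Tendsto (fun z : E4 => 8 * c0⁻¹ * (1 + ‖z‖ ^ 2)⁻¹) (Bornology.cobounded E4) (𝓝 0) := by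
      have : Tendsto (fun z : E4 => 1 + ‖z‖ ^ 2) (Bornology.cobounded E4) atTop :=
        tendsto_atTop_add_const_left _ _
          ((tendsto_pow_atTop (by norm_num)).comp tendsto_norm_cobounded_atTop)
      simpa using this.inv_tendsto_atTop.const_mul (8 * c0⁻¹)
    refine squeeze_zero (fun z => ?_) (fun z => ?_) h1
    · have := bub_nonneg z; positivity
    · have e : Module.finrank ℝ E4 = 4 := by simp
      have h2 : ‖z‖ ^ 2 * (1 + ‖z‖ ^ 2)⁻¹ ≤ 1 := by
        rw [← div_eq_mul_inv, div_le_one (by positivity)]; linarith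
      rw [e]
      calc ‖z‖ ^ 4 * (c0⁻¹ * bub z)
          = 8 * c0⁻¹ * (1 + ‖z‖ ^ 2)⁻¹ * (‖z‖ ^ 2 * (1 + ‖z‖ ^ 2)⁻¹) ^ 2 := by unfold bub; ring
        _ ≤ 8 * c0⁻¹ * (1 + ‖z‖ ^ 2)⁻¹ * 1 := by
            gcongr; exact pow_le_one₀ (by positivity) h2
        _ = _ := by ring
  have T := tendsto_integral_comp_smul_smul_of_integrable' (μ := (volume : Measure E4))
    (φ := fun z : E4 => c0⁻¹ * bub z) (fun z => mul_nonneg (inv_nonneg.mpr hc.le) (bub_nonneg z))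
    (by rw [integral_const_mul]; exact inv_mul_cancel₀ hc.ne') hlim hg hx
  have hb : ∀ᶠ c : ℝ in atTop,
      |∫ y, (c ^ (Module.finrank ℝ E4) * (c0⁻¹ * bub (c • (x - y)))) • g y| ≤ c0⁻¹ * Q := by
    filter_upwards [eventually_gt_atTop 0] with c hcpos
    -- the dilation by `c` corresponds to `s = c⁻²`
    have hs : 0 < (c ^ 2)⁻¹ := by positivity
    have e : (fun y => (c ^ (Module.finrank ℝ E4) * (c0⁻¹ * bub (c • (x - y)))) • g y)
        = fun y => c0⁻¹ * (8 * (c ^ 2)⁻¹ * KK (c ^ 2)⁻¹ x y ^ 3 * g y) := by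
      funext y
      have e4 : Module.finrank ℝ E4 = 4 := by simp
      have e2 : 1 + c ^ 2 * ‖x - y‖ ^ 2 = c ^ 2 * (‖x - y‖ ^ 2 + (c ^ 2)⁻¹) := by
        field_simp; ring
      rw [e4, bub, norm_smul, mul_pow, Real.norm_eq_abs, sq_abs, e2, smul_eq_mul, mul_inv]
      change _ = c0⁻¹ * (8 * (c ^ 2)⁻¹ * KK (c ^ 2)⁻¹ x y ^ 3 * g y)
      unfold KK
      generalize (‖x - y‖ ^ 2 + (c ^ 2)⁻¹)⁻¹ = q
      field_simp
    rw [e, integral_const_mul, abs_mul, abs_of_pos (inv_pos.mpr hc)]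
    exact mul_le_mul_of_nonneg_left (hQ _ hs) (inv_nonneg.mpr hc.le)
  have := le_of_tendsto T.abs hb
  rwa [inv_mul_eq_div, le_div_iff₀ hc, mul_comm] at this

/-- Truncated kernel `(|z|² (|z|² + s))⁻¹` on the ball of radius `2R`. -/
noncomputable def JJ (R s : ℝ) (z : E4) : ℝ :=
  if ‖z‖ ≤ 2 * R then (‖z‖ ^ 2 * (‖z‖ ^ 2 + s))⁻¹ else 0

theorem JJ_nonneg (R : ℝ) {s : ℝ} (hs : 0 < s) (z : E4) : 0 ≤ JJ R s z := by
  unfold JJ; split_ifs <;> positivity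

namespace Adm
variable {R : ℝ} {u : E4 → ℝ} (h : Adm R u)
include h

/-- Young's inequality for `|x-y|⁻² |Δw|` with the weight `1 + s|x-y|⁻²`. -/
theorem young {s t l : ℝ} (hs : 0 < s) (ht : 0 < t) (hl : 0 < l) {x y : E4} (hxR : ‖x‖ ≤ R)
    (hy : y ≠ 0) (hyx : y ≠ x) : |KK t x y * qw R u y| ≤
      l / 2 * 6 * (en R u y + s * (en R u y * kker (2 * R) (x - y)))
        + 1 / (2 * l) * JJ R s (x - y) := by
  have he0 := en_nonneg R u y
  have hk0 := kker_nonneg (2 * R) (x - y)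
  have hJ0 := JJ_nonneg R hs (x - y)
  by_cases hys : y ∈ tsupport u
  swap
  · rw [qw_zero hys, mul_zero, abs_zero]; positivity
  have hyR := h.supp y hys
  have hn : 0 < ‖x - y‖ := norm_pos_iff.mpr (sub_ne_zero.mpr (Ne.symm hyx))
  have hxy : ‖x - y‖ ≤ 2 * R := (norm_sub_le x y).trans (by linarith)
  have e1 : kker (2 * R) (x - y) = (‖x - y‖ ^ 2)⁻¹ := by simp [kker, hxy]
  have e2 : JJ R s (x - y) = ((‖x - y‖ ^ 2)⁻¹) ^ 2 / (1 + s * (‖x - y‖ ^ 2)⁻¹) := by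
    unfold JJ; rw [if_pos hxy]; field_simp
  have hK : KK t x y ≤ (‖x - y‖ ^ 2)⁻¹ := by
    unfold KK; gcongr; linarith
  have hKp := KK_pos ht x y
  have hq := h.qw_sq_le hy hyR
  rw [← sq_abs] at hq
  have ha0 := abs_nonneg (qw R u y)
  have kp : 0 < (‖x - y‖ ^ 2)⁻¹ := by positivity
  rw [abs_mul, abs_of_pos hKp, e1, e2]
  generalize (‖x - y‖ ^ 2)⁻¹ = k at hK kp ⊢
  generalize |qw R u y| = a at hq ha0 ⊢
  generalize en R u y = E at hq he0 ⊢
  have hm0 : 0 < 1 + s * k := by positivity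
  calc KK t x y * a ≤ k * a := by gcongr
    _ ≤ l / 2 * (a ^ 2 * (1 + s * k)) + 1 / (2 * l) * (k ^ 2 / (1 + s * k)) := by
        generalize 1 + s * k = m at hm0
        have e : l / 2 * (a ^ 2 * m) + 1 / (2 * l) * (k ^ 2 / m) - k * a
            = (l * a * m - k) ^ 2 / (2 * l * m) := by field_simp; ring
        have : 0 ≤ (l * a * m - k) ^ 2 / (2 * l * m) := by positivity
        linarith
    _ ≤ l / 2 * (6 * E * (1 + s * k)) + 1 / (2 * l) * (k ^ 2 / (1 + s * k)) := by gcongr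
    _ = _ := by ring

/-- Green's identity and Young's inequality, integrated, before optimising the parameters. -/
theorem ww_le {s l : ℝ} (hs : 0 < s) (hl : 0 < l) {x : E4} (hx : x ≠ 0) (hxR : ‖x‖ ≤ R)
    (hG : Integrable (fun y => en R u y * kker (2 * R) (x - y))) :
    c0 * |ww R u x| ≤ l / 2 * 6 * ((∫ y, en R u y)
      + s * ∫ y, en R u y * kker (2 * R) (x - y))
      + 1 / (2 * l) * (2 * c4 * Real.log (1 + (2 * R) ^ 2 / s)) := by
  have hR := h.pos
  obtain ⟨j1, j2⟩ : Integrable (JJ R s) ∧ ∫ x, JJ R s x = 2 * c4 * Real.log (1 + (2 * R) ^ 2 / s) := by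
    unfold JJ; exact J_int (ρ := 2 * R) (s := s) (by positivity) hs
  have j1' : Integrable (fun y => JJ R s (x - y)) := j1.comp_sub_left x
  have j2' : ∫ y, JJ R s (x - y) = 2 * c4 * Real.log (1 + (2 * R) ^ 2 / s) := by
    rw [integral_sub_left_eq_self (JJ R s)]; exact j2
  have i1 := h.integral_en.1.add (hG.const_mul s)
  have i2 := i1.const_mul (l / 2 * 6)
  have i3 := j1'.const_mul (1 / (2 * l))
  have hIe : ∫ y, (l / 2 * 6 * (en R u y + s * (en R u y * kker (2 * R) (x - y)))
      + 1 / (2 * l) * JJ R s (x - y)) = l / 2 * 6 * ((∫ y, en R u y)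
      + s * ∫ y, en R u y * kker (2 * R) (x - y))
      + 1 / (2 * l) * (2 * c4 * Real.log (1 + (2 * R) ^ 2 / s)) := by
    have a1 := integral_add i2 i3
    have a2 := integral_add h.integral_en.1 (hG.const_mul s)
    simp only [Pi.add_apply] at a1
    rw [a1, integral_const_mul, integral_const_mul, a2, integral_const_mul, j2']
  refine peak h.int_ww ?_ fun t ht => ?_
  · exact h.smooth.continuous.continuousAt.mul (cd_psi hR hx hxR).continuousAt
  · have hne : ∀ᵐ y : E4, y ≠ x := by simp [ae_iff, measure_singleton]
    rw [h.green ht x, abs_neg, ← hIe]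
    refine abs_integral_le_integral_abs.trans
      (integral_mono_ae (h.int_KKqw ht x).abs (i2.add i3) ?_)
    filter_upwards [ae_ne_zero, hne] with y hy hyx
    exact h.young hs ht hl hxR hy hyx

/-- Potential-theoretic bound: at a point `x` where the truncated Riesz potential
`G = e * |·|⁻²` of the energy density is finite, `w(x)²` grows at most like `log (1 + G)`.
The weight parameter is `s = (1 + G)⁻¹`; the constant is `98 c4 = 7² · 2 c4`. -/
theorem log_bound (he : ∫ y, en R u y ≤ 1) {x : E4} (hx : x ≠ 0) (hxR : ‖x‖ ≤ R)
    (hG : Integrable (fun y => en R u y * kker (2 * R) (x - y))) :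
    c0 ^ 2 * ww R u x ^ 2 ≤ 98 * c4 *
      Real.log ((1 + 4 * R ^ 2) * (1 + ∫ y, en R u y * kker (2 * R) (x - y))) := by
  have hR := h.pos
  have hc := c4_pos
  have hG0 : 0 ≤ ∫ y, en R u y * kker (2 * R) (x - y) :=
    integral_nonneg fun y => mul_nonneg (en_nonneg _ _ _) (kker_nonneg _ _)
  have key := fun s l hs hl => h.ww_le (s := s) (l := l) hs hl hx hxR hG
  generalize (∫ y, en R u y * kker (2 * R) (x - y)) = G at hG0 key ⊢
  have hs : 0 < (1 + G)⁻¹ := by positivity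
  have hsG : (1 + G)⁻¹ * G ≤ 1 := by
    rw [inv_mul_eq_div, div_le_one (by positivity)]; linarith
  -- the optimal Young parameter is `l = √J` up to a constant, with `J` the mass of the kernel
  have hJ : 0 < 2 * c4 * Real.log (1 + (2 * R) ^ 2 / (1 + G)⁻¹) := by
    have : 0 < (2 * R) ^ 2 / (1 + G)⁻¹ := by positivity
    have := Real.log_pos (by linarith : 1 < 1 + (2 * R) ^ 2 / (1 + G)⁻¹)
    positivity
  have e : 1 + (2 * R) ^ 2 / (1 + G)⁻¹ ≤ (1 + 4 * R ^ 2) * (1 + G) := by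
    rw [div_inv_eq_mul]; nlinarith [sq_nonneg R]
  have hlog := Real.log_le_log (by positivity) e
  have hlp := Real.sqrt_pos.mpr hJ
  have hl2 := Real.sq_sqrt hJ.le
  have k1 := key _ _ hs hlp
  generalize √(2 * c4 * Real.log (1 + (2 * R) ^ 2 / (1 + G)⁻¹)) = l at hlp hl2 k1
  rw [← hl2] at k1
  have hmain : c0 * |ww R u x| ≤ 7 * l := by
    have e1 : 1 / (2 * l) * l ^ 2 = l / 2 := by field_simp
    have : l / 2 * 6 * ((∫ y, en R u y) + (1 + G)⁻¹ * G) ≤ l / 2 * 6 * (1 + 1) := by gcongr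
    linarith
  have hsq := pow_le_pow_left₀ (mul_nonneg c0_pos.le (abs_nonneg _)) hmain 2
  rw [mul_pow, sq_abs, mul_pow, hl2] at hsq
  nlinarith

end Adm

/-- Leray–Adams inequality in dimension four (Theorem 1). -/
theorem stmt0 (Ω : Set (EuclideanSpace ℝ (Fin 4))) (hopen : IsOpen Ω) (hconn : IsConnected Ω)
    (hbdd : Bornology.IsBounded Ω) (h0 : (0 : EuclideanSpace ℝ (Fin 4)) ∈ Ω)
    (β R : ℝ) (hβ : 1 ≤ β) (hR : ∀ x ∈ Ω, ‖x‖ ≤ R) :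
    ∃ A B : ℝ, 0 < A ∧ 0 < B ∧
      ∀ c : ℝ, 0 < c → c < A →
        ∀ u : EuclideanSpace ℝ (Fin 4) → ℝ,
          ContDiff ℝ (⊤ : ℕ∞) u → HasCompactSupport u → tsupport u ⊆ Ω →
          tildeI4 Ω R u ≤ 1 →
          (∫ x in Ω, Real.exp (c * (|u x| / (E2 (‖x‖ / R)) ^ β) ^ 2)) ≤
            B * (volume Ω).toReal := by
  have hc0 := c0_pos
  have hc4 := c4_pos
  have hRpos : 0 < R := by
    obtain ⟨r, hr, hball⟩ := Metric.isOpen_iff.mp hopen 0 h0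
    have hmem : EuclideanSpace.single (0 : Fin 4) (r / 2) ∈ Ω := hball (by
      simp [abs_of_pos hr]; linarith)
    have := hR _ hmem
    simp [abs_of_pos hr] at this
    linarith
  have hΩfin : volume Ω < ⊤ := hbdd.measure_lt_top
  have hΩpos : 0 < (volume Ω).toReal :=
    ENNReal.toReal_pos (hopen.measure_pos volume ⟨0, h0⟩).ne' hΩfin.ne
  set v := (volume Ω).toReal with hv
  set κ := ∫ y, kker (2 * R) y with hκ
  have hκ0 : 0 ≤ κ := integral_nonneg fun y => kker_nonneg _ _
  -- `A` is dictated by `Adm.log_bound`, and `B |Ω| = (1 + 4R²)(|Ω| + κ)`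
  refine ⟨c0 ^ 2 / (98 * c4), (1 + 4 * R ^ 2) * (1 + κ / v), by positivity, by positivity, ?_⟩
  intro c hc hcA u hu hcs hsupp hI
  have h : Adm R u := ⟨hRpos, hu, hcs, fun x hx => hR x (hsupp hx)⟩
  have he : ∫ y, en R u y ≤ 1 := by
    rw [h.integral_en.2]
    unfold tildeI4 at hI
    rw [setIntegral_eq_integral_of_forall_compl_eq_zero, setIntegral_eq_integral_of_forall_compl_eq_zero]
      at hI
    · have e : (fun x => (kk x * tau R x * u x) ^ 2)
          = fun x => u x ^ 2 / (‖x‖ ^ 4 * E1 (‖x‖ / R) ^ 2) := by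
        funext x; unfold kk tau
        generalize E1 (‖x‖ / R) = a
        rw [div_eq_mul_inv (u x ^ 2), mul_inv, mul_pow, mul_pow, inv_pow, inv_pow]; ring
      rw [e]; exact hI
    · intro x hx; simp [u_zero fun hm => hx (hsupp hm)]
    · intro x hx; rw [lap_eq, Lap_zero fun hm => hx (hsupp hm)]; simp
  -- the Riesz potential of the energy density is integrable and finite almost everywhere
  set L := ContinuousLinearMap.mul ℝ ℝ
  have hen := h.integral_en.1
  have hkk := kker_integrable (2 * R)
  have hex : ∀ᵐ x : E4, Integrable (fun y => en R u y * kker (2 * R) (x - y)) :=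
    hen.ae_convolution_exists L hkk
  have hGi : Integrable (fun x => ∫ y, en R u y * kker (2 * R) (x - y)) :=
    hen.integrable_convolution L hkk
  have hGe : ∫ x, ∫ y, en R u y * kker (2 * R) (x - y) = (∫ y, en R u y) * κ :=
    integral_convolution L hen hkk
  set G : E4 → ℝ := fun x => ∫ y, en R u y * kker (2 * R) (x - y) with hG
  have hG0 : ∀ x, 0 ≤ G x := fun x =>
    integral_nonneg fun y => mul_nonneg (en_nonneg _ _ _) (kker_nonneg _ _)
  have hGκ : ∫ x in Ω, G x ≤ κ := by
    calc ∫ x in Ω, G x ≤ ∫ x, G x := setIntegral_le_integral hGi (Eventually.of_forall hG0)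
      _ = (∫ y, en R u y) * κ := hGe
      _ ≤ 1 * κ := by gcongr
      _ = κ := one_mul κ
  have hpt : ∀ᵐ x ∂(volume.restrict Ω), Real.exp (c * (|u x| / (E2 (‖x‖ / R)) ^ β) ^ 2)
      ≤ (1 + 4 * R ^ 2) * (1 + G x) := by
    filter_upwards [ae_restrict_of_ae ae_ne_zero, ae_restrict_of_ae hex,
      ae_restrict_mem hopen.measurableSet] with x hx hxG hxΩ
    have hxR := hR x hxΩ
    have hE2 := E2_ge hRpos ⟨norm_pos_iff.mpr hx, hxR⟩
    have hb := h.log_bound he hx hxR hxG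
    have hpow : E2 (‖x‖ / R) ≤ E2 (‖x‖ / R) ^ β := Real.self_le_rpow_of_one_le hE2 hβ
    have hle : (|u x| / (E2 (‖x‖ / R)) ^ β) ^ 2 ≤ ww R u x ^ 2 := by
      have e : ww R u x ^ 2 = (|u x| / E2 (‖x‖ / R)) ^ 2 := by
        unfold ww psi; rw [div_pow, sq_abs]; field_simp
      rw [e]
      have : 0 < E2 (‖x‖ / R) := by linarith
      gcongr
    have hlog : 0 < (1 + 4 * R ^ 2) * (1 + G x) := by have := hG0 x; positivity
    rw [← Real.le_log_iff_exp_le hlog]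
    calc c * (|u x| / (E2 (‖x‖ / R)) ^ β) ^ 2 ≤ c0 ^ 2 / (98 * c4) * ww R u x ^ 2 := by gcongr
      _ ≤ _ := by
        rw [div_mul_eq_mul_div, div_le_iff₀ (by positivity), mul_comm (Real.log _)]
        exact hb
  have hone : IntegrableOn (fun _ : E4 => (1 : ℝ)) Ω := integrableOn_const hΩfin.ne
  have hRi : IntegrableOn (fun x => (1 + 4 * R ^ 2) * (1 + G x)) Ω :=
    (hone.add hGi.integrableOn).const_mul _
  calc _ ≤ ∫ x in Ω, (1 + 4 * R ^ 2) * (1 + G x) :=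
        integral_mono_of_nonneg (Eventually.of_forall fun x => (Real.exp_pos _).le) hRi hpt
    _ = (1 + 4 * R ^ 2) * (v + ∫ x in Ω, G x) := by
        rw [integral_const_mul, integral_add hone hGi.integrableOn]
        simp [Measure.real, hv]
    _ ≤ (1 + 4 * R ^ 2) * (v + κ) := by gcongr
    _ = _ := by field_simp
end

section
/- Let Ω be a bounded domain in ℝ⁴ containing the origin, let R ≥ R_Ω and let β be a real number with β < 1/2. Then for every c > 0 the supremum of ∫_Ω exp( c · ( |u(x)| / E₂(|x|/R)^β )² ) dx over all u ∈ C₀^∞(Ω) with Ĩ₄[u,Ω,R] ≤ 1 is infinite; that is, for every c > 0 and every M > 0 there exists u ∈ C₀^∞(Ω) with Ĩ₄[u,Ω,R] ≤ 1 and ∫_Ω exp( c · ( |u(x)| / E₂(|x|/R)^β )² ) dx > M. -/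
/-!
With `τ = E₁(|x|/R)` and a radial `u(x) = w(τ)`, the Laplacian in dimension four is
`|x|² Δu = w'' - 2 w'` and `dx` becomes `|x|⁴ dτ` up to the area of the sphere, so
`Ĩ₄[u] = const · ∫ (w'' - 2 w')² - w²/τ² dτ`.  The integrand has the exact decomposition
`w''² + 4 (w' - w/(2τ))² + d/dτ (2 w²/τ - 2 w'²)`, in which the Hardy term is absorbed
(`radial_energy`, `remainder_le`).

The test functions are `w(τ) = A √τ φ(ln τ / L)` with `φ` a fixed bump function equal to `1` on
`[2,3]` and supported in `[1,4]`.  For these `w' - w/(2τ) = A φ'(ln τ / L) / (L √τ)`, so the energy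
is `O(A²/L)` and the amplitude `A ~ √L` is admissible (`energy_le`).  Where `ln τ ∈ [2L, 3L]`,
`c u² / E₂^{2β}` is at least a constant times `τ L / (1 + 3L)^{2β⁺}` with `β⁺ = max β 0`; since
`β⁺ < 1/2` this exceeds `5τ` for large `L` (`large_exp`).  The shell `T ≤ τ ≤ T + 1` with
`T = e^{2L}` has volume of order `e^{-4T}`, so the exponential integral is at least of order `e^T`.
-/


open MeasureTheory Real

/-! ### The Laplacian of a radial function -/

theorem lap_radial (g : ℝ → ℝ) (hg : ContDiff ℝ (⊤ : ℕ∞) g) (x : EuclideanSpace ℝ (Fin 4)) :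
    lap (fun y => g (‖y‖ ^ 2)) x
      = 8 * deriv g (‖x‖ ^ 2) + 4 * ‖x‖ ^ 2 * deriv (deriv g) (‖x‖ ^ 2) := by
  have hg1 : ∀ q, HasDerivAt g (deriv g q) q := fun q =>
    (hg.differentiable (by simp)).differentiableAt.hasDerivAt
  have hg2 : ∀ q, HasDerivAt (deriv g) (deriv (deriv g) q) q := fun q =>
    (((contDiff_infty_iff_deriv.1 hg).2).differentiable (by simp)).differentiableAt.hasDerivAt
  have hN : ∀ y : EuclideanSpace ℝ (Fin 4),
      HasFDerivAt (fun z : EuclideanSpace ℝ (Fin 4) => ‖z‖ ^ 2) (2 • innerSL ℝ y) y := fun y =>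
    (hasStrictFDerivAt_norm_sq y).hasFDerivAt
  have h1 : ∀ i : Fin 4, (fun y : EuclideanSpace ℝ (Fin 4) =>
      fderiv ℝ (fun y => g (‖y‖ ^ 2)) y (EuclideanSpace.single i 1))
      = fun y => deriv g (‖y‖ ^ 2) * (2 * y i) := by
    intro i; funext y
    have := (hg1 (‖y‖ ^ 2)).comp_hasFDerivAt y (hN y)
    rw [HasFDerivAt.fderiv (f := fun y => g (‖y‖ ^ 2)) this]
    simp [EuclideanSpace.inner_single_right]
  unfold lap
  simp only [h1]
  have h2 : ∀ i : Fin 4, fderiv ℝ (fun y : EuclideanSpace ℝ (Fin 4) =>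
      deriv g (‖y‖ ^ 2) * (2 * y i)) x (EuclideanSpace.single i 1)
      = 2 * deriv g (‖x‖ ^ 2) + 4 * (x i) ^ 2 * deriv (deriv g) (‖x‖ ^ 2) := by
    intro i
    have hA := (hg2 (‖x‖ ^ 2)).comp_hasFDerivAt x (hN x)
    have hB : HasFDerivAt (fun y : EuclideanSpace ℝ (Fin 4) => 2 * y i)
        ((2 : ℝ) • (EuclideanSpace.proj i : EuclideanSpace ℝ (Fin 4) →L[ℝ] ℝ)) x :=
      (EuclideanSpace.proj i : EuclideanSpace ℝ (Fin 4) →L[ℝ] ℝ).hasFDerivAt.const_mul 2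
    have := hA.mul hB
    rw [HasFDerivAt.fderiv (f := fun y : EuclideanSpace ℝ (Fin 4) =>
      deriv g (‖y‖ ^ 2) * (2 * y i)) this]
    simp [EuclideanSpace.inner_single_right]
    ring
  simp only [h2]
  rw [EuclideanSpace.real_norm_sq_eq x]
  simp only [Fin.sum_univ_four]
  ring

/-! ### The profile in the variables `ln τ` and `τ` -/

/-- The cutoff in the variable `ln τ / L`: equal to `1` on `[2,3]` and to `0` outside `(1,4)`. -/
noncomputable def phi : ContDiffBump (5 / 2 : ℝ) := ⟨1 / 2, 3 / 2, by norm_num, by norm_num⟩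

theorem phi_zero {s : ℝ} (h : s ≤ 1 ∨ 4 ≤ s) : phi s = 0 := by
  apply phi.zero_of_le_dist
  change (3 / 2 : ℝ) ≤ _
  rw [Real.dist_eq, le_abs]
  rcases h with h | h
  · right; linarith
  · left; linarith

theorem phi_one {s : ℝ} (h2 : 2 ≤ s) (h3 : s ≤ 3) : phi s = 1 := by
  apply phi.one_of_mem_closedBall
  rw [Metric.mem_closedBall, Real.dist_eq]
  change _ ≤ (1 / 2 : ℝ)
  rw [abs_le]; constructor <;> linarith

theorem deriv_phi_zero {s : ℝ} (h : s ≤ 1 ∨ 4 ≤ s) : deriv phi s = 0 := by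
  apply IsLocalMin.deriv_eq_zero
  refine Filter.Eventually.of_forall fun y => ?_
  rw [phi_zero h]
  exact phi.nonneg

theorem phi_smooth : ContDiff ℝ (⊤ : ℕ∞) phi := phi.contDiff

theorem phi_hasDerivAt (s : ℝ) : HasDerivAt phi (deriv phi s) s :=
  (phi_smooth.differentiable (by simp)).differentiableAt.hasDerivAt

theorem dphi_smooth : ContDiff ℝ (⊤ : ℕ∞) (deriv phi) := (contDiff_infty_iff_deriv.1 phi_smooth).2

theorem ddphi_smooth : ContDiff ℝ (⊤ : ℕ∞) (deriv (deriv phi)) :=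
  (contDiff_infty_iff_deriv.1 dphi_smooth).2

theorem dphi_hasDerivAt (s : ℝ) : HasDerivAt (deriv phi) (deriv (deriv phi) s) s :=
  (dphi_smooth.differentiable (by simp)).differentiableAt.hasDerivAt

theorem exists_bound : ∃ K : ℝ, 1 ≤ K ∧ ∀ s, |deriv phi s| ≤ K ∧ |deriv (deriv phi) s| ≤ K := by
  obtain ⟨K1, h1⟩ := phi.hasCompactSupport.deriv.exists_bound_of_continuous dphi_smooth.continuous
  obtain ⟨K2, h2⟩ := phi.hasCompactSupport.deriv.deriv.exists_bound_of_continuous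
    ddphi_smooth.continuous
  refine ⟨max 1 (max K1 K2), le_max_left _ _, fun s => ⟨?_, ?_⟩⟩
  · exact (h1 s).trans ((le_max_left _ _).trans (le_max_right _ _))
  · exact (h2 s).trans ((le_max_right _ _).trans (le_max_right _ _))

/-- The test function in the variable `τ`: the virtual ground state `√τ` of the one-dimensional
Hardy operator, cut off logarithmically. It vanishes for `τ ≤ 0` because `√τ = 0` there. -/
noncomputable def W0 (A L τ : ℝ) : ℝ := A * √τ * phi (log τ / L)

/-- The derivative of `W0 A L` on `τ > 0`. -/
noncomputable def W1 (A L τ : ℝ) : ℝ :=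
  A / √τ * (phi (log τ / L) / 2 + deriv phi (log τ / L) / L)

/-- The second derivative of `W0 A L` on `τ > 0`. -/
noncomputable def W2 (A L τ : ℝ) : ℝ :=
  A / (τ * √τ) * (deriv (deriv phi) (log τ / L) / L ^ 2 - phi (log τ / L) / 4)

theorem W0_hasDerivAt (A L : ℝ) {τ : ℝ} (hτ : 0 < τ) : HasDerivAt (W0 A L) (W1 A L τ) τ := by
  have hs := Real.hasDerivAt_sqrt hτ.ne'
  have hl := (Real.hasDerivAt_log hτ.ne').div_const L
  have hp := (phi_hasDerivAt (log τ / L)).comp τ hl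
  have := (hs.const_mul A).mul hp
  refine this.congr_deriv ?_
  have h1 : τ = √τ * √τ := (Real.mul_self_sqrt hτ.le).symm
  have h0 : √τ ≠ 0 := (Real.sqrt_pos.2 hτ).ne'
  simp only [Function.comp, W1]
  have h2 : τ⁻¹ = (√τ * √τ)⁻¹ := by rw [← h1]
  rw [h2]
  field_simp

theorem W1_hasDerivAt (A L : ℝ) {τ : ℝ} (hτ : 0 < τ) : HasDerivAt (W1 A L) (W2 A L τ) τ := by
  have h0 : √τ ≠ 0 := (Real.sqrt_pos.2 hτ).ne'
  have hs := (Real.hasDerivAt_sqrt hτ.ne').inv h0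
  have hl := (Real.hasDerivAt_log hτ.ne').div_const L
  have hp := (phi_hasDerivAt (log τ / L)).comp τ hl
  have hp2 := (dphi_hasDerivAt (log τ / L)).comp τ hl
  have := (hs.const_mul A).mul ((hp.div_const 2).add (hp2.div_const L))
  refine (this.congr_deriv ?_).congr_of_eventuallyEq (Filter.Eventually.of_forall fun x => ?_)
  · have h1 : √τ ^ 2 = τ := Real.sq_sqrt hτ.le
    simp only [Function.comp, W2, Pi.inv_apply, Pi.add_apply]
    have h2 : τ⁻¹ = (√τ ^ 2)⁻¹ := by rw [h1]
    rw [h2, show τ * √τ = √τ ^ 2 * √τ by rw [h1]]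
    by_cases hL : L = 0
    · subst hL; field_simp; simp; ring
    field_simp
    ring
  · simp [W1, div_eq_mul_inv, Function.comp]

theorem W0_zero (A : ℝ) {L : ℝ} (hL : 0 < L) {τ : ℝ} (h : τ ≤ exp L ∨ exp (4 * L) ≤ τ) :
    W0 A L τ = 0 := by
  unfold W0
  rcases le_or_gt τ 0 with h0 | h0
  · rw [Real.sqrt_eq_zero_of_nonpos h0]; simp
  · rw [phi_zero, mul_zero]
    rw [div_le_one hL, le_div_iff₀ hL, Real.log_le_iff_le_exp h0, Real.le_log_iff_exp_le h0]
    exact h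

/-- At the endpoints of its support `φ` is at a minimum, so `φ'` vanishes there as well; this removes
the boundary terms of the energy. -/
theorem W1_zero (A : ℝ) {L : ℝ} (hL : 0 < L) {τ : ℝ} (h : τ = exp L ∨ τ = exp (4 * L)) :
    W1 A L τ = 0 := by
  unfold W1
  have : log τ / L ≤ 1 ∨ 4 ≤ log τ / L := by
    rcases h with h | h
    · left; rw [h, Real.log_exp, div_self hL.ne']
    · right; rw [h, Real.log_exp, mul_div_cancel_right₀ _ hL.ne']
  rw [phi_zero this, deriv_phi_zero this]; simp

theorem W0_contDiff (A : ℝ) {L : ℝ} (hL : 0 < L) : ContDiff ℝ (⊤ : ℕ∞) (W0 A L) := by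
  rw [contDiff_iff_contDiffAt]
  intro τ
  rcases lt_or_ge 0 τ with h | h
  · have h1 : ContDiffAt ℝ (⊤ : ℕ∞) (fun τ : ℝ => √τ) τ := Real.contDiffAt_sqrt h.ne'
    have h2 : ContDiffAt ℝ (⊤ : ℕ∞) Real.log τ := Real.contDiffAt_log.2 h.ne'
    exact (contDiffAt_const.mul h1).mul (phi_smooth.contDiffAt.comp τ (h2.div_const L))
  · have : W0 A L =ᶠ[nhds τ] fun _ => 0 := by
      filter_upwards [Iio_mem_nhds (h.trans_lt (Real.exp_pos L))] with t ht
      exact W0_zero A hL (Or.inl (le_of_lt ht))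
    exact contDiffAt_const.congr_of_eventuallyEq this

/-! ### The profile in the variable `q = |x|²` -/

/-- The test function as a function of `q = |x|²`, a choice that makes it smooth at the origin of
`ℝ⁴`. As `Real.log` is even, so is `G R A L`. -/
noncomputable def G (R A L q : ℝ) : ℝ := W0 A L (1 - log (q / R ^ 2) / 2)

/-- The radius `r = R e^{1-τ}` at which `E₁(r/R) = τ`; it decreases in `τ`. -/
noncomputable def rad (R τ : ℝ) : ℝ := R * exp (1 - τ)

theorem rad_pos {R : ℝ} (hR : 0 < R) (τ : ℝ) : 0 < rad R τ := mul_pos hR (exp_pos _)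

theorem rad_lt {R : ℝ} (hR : 0 < R) {s t : ℝ} (h : s < t) : rad R t < rad R s := by
  unfold rad; gcongr

theorem E1_rad {R : ℝ} (hR : 0 < R) (τ : ℝ) : E1 (rad R τ / R) = τ := by
  unfold E1 rad
  rw [mul_div_cancel_left₀ _ hR.ne', Real.log_exp]; ring

theorem G_sq (R A L r : ℝ) :
    G R A L (r ^ 2) = W0 A L (E1 (r / R)) := by
  unfold G E1
  rw [← div_pow, Real.log_pow]; push_cast; ring_nf

theorem le_E1 {R : ℝ} (hR : 0 < R) {r τ : ℝ} (hr : 0 < r) : τ ≤ E1 (r / R) ↔ r ≤ rad R τ := by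
  unfold E1 rad
  rw [le_sub_comm, Real.log_le_iff_le_exp (by positivity), div_le_iff₀' hR]

theorem E1_le_s1 {R : ℝ} (hR : 0 < R) {r τ : ℝ} (hr : 0 < r) : E1 (r / R) ≤ τ ↔ rad R τ ≤ r := by
  unfold E1 rad
  rw [sub_le_comm, Real.le_log_iff_exp_le (by positivity), le_div_iff₀' hR]

/-- `G` vanishes unless `√|q|` lies between the two radii. -/
theorem G_zero {R : ℝ} (hR : 0 < R) (A : ℝ) {L : ℝ} (hL : 0 < L) {q : ℝ}
    (h : |q| ≤ rad R (exp (4 * L)) ^ 2 ∨ rad R (exp L) ^ 2 ≤ |q|) : G R A L q = 0 := by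
  rcases eq_or_ne q 0 with rfl | h0
  · unfold G
    exact W0_zero A hL (Or.inl (by simpa using hL.le))
  have hq : G R A L q = W0 A L (E1 (√|q| / R)) := by
    rw [← G_sq, Real.sq_sqrt (abs_nonneg _)]
    unfold G
    rw [← Real.log_abs (q / R ^ 2), abs_div, abs_of_pos (pow_pos hR 2)]
  have hp : 0 < √|q| := Real.sqrt_pos.2 (abs_pos.2 h0)
  rw [hq]
  apply W0_zero A hL
  rw [le_E1 hR hp, E1_le_s1 hR hp]
  rcases h with h | h
  · right; exact (Real.sqrt_le_left (rad_pos hR _).le).2 h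
  · left; exact (Real.le_sqrt (rad_pos hR _).le (abs_nonneg _)).2 h

theorem G_contDiff {R : ℝ} (hR : 0 < R) (A : ℝ) {L : ℝ} (hL : 0 < L) :
    ContDiff ℝ (⊤ : ℕ∞) (G R A L) := by
  rw [contDiff_iff_contDiffAt]
  intro q
  rcases eq_or_ne q 0 with rfl | h0
  · have : G R A L =ᶠ[nhds 0] fun _ => 0 := by
      have hb : 0 < rad R (exp (4 * L)) ^ 2 := pow_pos (rad_pos hR _) 2
      filter_upwards [(continuous_abs.tendsto (0 : ℝ)).eventually
        (Iio_mem_nhds (by simpa using hb))] with t ht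
      exact G_zero hR A hL (Or.inl (le_of_lt ht))
    exact contDiffAt_const.congr_of_eventuallyEq this
  · have h1 : ContDiffAt ℝ (⊤ : ℕ∞) (fun q : ℝ => 1 - log (q / R ^ 2) / 2) q := by
      refine contDiffAt_const.sub (ContDiffAt.div_const ?_ 2)
      exact (contDiffAt_id.div_const _).log (by simp only [id]; positivity)
    exact (W0_contDiff A hL).contDiffAt.comp q h1

theorem tau_hasDerivAt {R : ℝ} (hR : 0 < R) {q : ℝ} (hq : 0 < q) :
    HasDerivAt (fun q : ℝ => 1 - log (q / R ^ 2) / 2) (-1 / (2 * q)) q := by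
  have := ((((hasDerivAt_id q).div_const (R ^ 2)).log (by simp only [id]; positivity)).div_const
    2).const_sub 1
  refine this.congr_deriv ?_
  simp only [id]; field_simp

theorem G_deriv {R : ℝ} (hR : 0 < R) (A L : ℝ) {q : ℝ} (hq : 0 < q)
    (hτ : 0 < 1 - log (q / R ^ 2) / 2) :
    deriv (G R A L) q = -W1 A L (1 - log (q / R ^ 2) / 2) / (2 * q) := by
  have := (W0_hasDerivAt A L hτ).comp q (tau_hasDerivAt hR hq)
  rw [HasDerivAt.deriv (f := G R A L) this]; ring

theorem G_deriv2 {R : ℝ} (hR : 0 < R) (A L : ℝ) {q : ℝ} (hq : 0 < q)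
    (hτ : 0 < 1 - log (q / R ^ 2) / 2) :
    deriv (deriv (G R A L)) q = W1 A L (1 - log (q / R ^ 2) / 2) / (2 * q ^ 2)
      + W2 A L (1 - log (q / R ^ 2) / 2) / (4 * q ^ 2) := by
  have hev : deriv (G R A L) =ᶠ[nhds q]
      fun q => -W1 A L (1 - log (q / R ^ 2) / 2) / (2 * q) := by
    filter_upwards [Ioi_mem_nhds hq, (tau_hasDerivAt hR hq).continuousAt.eventually
      (Ioi_mem_nhds hτ)] with t ht ht2
    exact G_deriv hR A L ht ht2
  have h1 := ((W1_hasDerivAt A L hτ).comp q (tau_hasDerivAt hR hq)).neg.div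
    ((hasDerivAt_id q).const_mul 2) (by simp only [id]; positivity)
  rw [hev.deriv_eq, HasDerivAt.deriv
    (f := fun q => -W1 A L (1 - log (q / R ^ 2) / 2) / (2 * q)) h1]
  simp only [id, Function.comp, Pi.neg_apply]
  field_simp
  ring

/-! ### The radial energy -/

/-- The part of the energy density that is left after the Hardy term has been absorbed. The bound
by `const / τ` is integrated as a multiple of `d (ln τ)`. -/
theorem remainder_le {K : ℝ} (hK : 1 ≤ K)
    (hb : ∀ s, |deriv phi s| ≤ K ∧ |deriv (deriv phi) s| ≤ K) (A : ℝ) {L : ℝ} (hL : 1 ≤ L)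
    {τ : ℝ} (hτ : exp L ≤ τ) :
    W2 A L τ ^ 2 + 4 * (W1 A L τ - W0 A L τ / (2 * τ)) ^ 2 ≤ 8 * A ^ 2 * K ^ 2 / L ^ 2 / τ := by
  have hL0 : 0 < L := by linarith
  have h0 : 0 < τ := (exp_pos L).trans_le hτ
  have hLτ : L ≤ τ := by linarith [Real.add_one_le_exp L]
  have hs : 0 < √τ := Real.sqrt_pos.2 h0
  have hsq : √τ ^ 2 = τ := Real.sq_sqrt h0.le
  obtain ⟨h1, h2⟩ := hb (log τ / L)
  have e1 : W1 A L τ - W0 A L τ / (2 * τ) = A / √τ * (deriv phi (log τ / L) / L) := by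
    unfold W1 W0
    rw [show 2 * τ = 2 * √τ ^ 2 by rw [hsq]]
    field_simp
    ring
  have h3 : (deriv phi (log τ / L)) ^ 2 ≤ K ^ 2 := sq_le_sq' (by linarith [abs_le.1 h1])
    (abs_le.1 h1).2
  have h4 : (deriv (deriv phi) (log τ / L) / L ^ 2 - phi (log τ / L) / 4) ^ 2 ≤ (2 * K) ^ 2 := by
    have h5 : |deriv (deriv phi) (log τ / L) / L ^ 2| ≤ K := by
      rw [abs_div, abs_of_pos (pow_pos hL0 2)]
      exact (div_le_self (abs_nonneg _) (one_le_pow₀ hL)).trans h2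
    have h6 : 0 ≤ phi (log τ / L) := phi.nonneg
    have h7 : phi (log τ / L) ≤ 1 := phi.le_one
    rw [abs_le] at h5
    apply sq_le_sq' <;> linarith
  rw [e1]
  have e2 : W2 A L τ ^ 2 = A ^ 2 / τ ^ 3 *
      (deriv (deriv phi) (log τ / L) / L ^ 2 - phi (log τ / L) / 4) ^ 2 := by
    unfold W2
    rw [mul_pow, div_pow, mul_pow, hsq]; ring
  have e3 : (A / √τ * (deriv phi (log τ / L) / L)) ^ 2
      = A ^ 2 / (τ * L ^ 2) * (deriv phi (log τ / L)) ^ 2 := by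
    rw [mul_pow, div_pow, div_pow, hsq]
    field_simp
  have e4 : A ^ 2 / τ ^ 3 ≤ A ^ 2 / (τ * L ^ 2) := by
    have : L ^ 2 ≤ τ ^ 2 := by gcongr
    rw [show τ ^ 3 = τ * τ ^ 2 by ring]
    gcongr
  rw [e2, e3]
  calc _ ≤ A ^ 2 / (τ * L ^ 2) * (2 * K) ^ 2 + 4 * (A ^ 2 / (τ * L ^ 2) * K ^ 2) := by gcongr
    _ = _ := by field_simp; ring

theorem E1_hasDerivAt {R : ℝ} (hR : 0 < R) {r : ℝ} (hr : 0 < r) :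
    HasDerivAt (fun r => E1 (r / R)) (-1 / r) r := by
  have := (((hasDerivAt_id r).div_const R).log (by simp only [id]; positivity)).const_sub 1
  refine this.congr_deriv ?_
  simp only [id]; field_simp

/-- With `τ = E₁(r/R)`, a function of `r` whose derivative bounds the energy density: minus the
exact part `2 w²/τ - 2 w'²` and minus `B ln τ`, the signs coming from `dτ/dr = -1/r`. -/
noncomputable def prim (R A L B r : ℝ) : ℝ :=
  2 * W0 A L (E1 (r / R)) ^ 2 * -(E1 (r / R))⁻¹ + 2 * W1 A L (E1 (r / R)) ^ 2 -
    B * log (E1 (r / R))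

theorem prim_hasDerivAt {R : ℝ} (hR : 0 < R) (A L B : ℝ) {r : ℝ} (hr : 0 < r)
    (hτ : 0 < E1 (r / R)) : HasDerivAt (prim R A L B)
      ((-4 * W1 A L (E1 (r / R)) * W2 A L (E1 (r / R))
        + 4 * W0 A L (E1 (r / R)) * W1 A L (E1 (r / R)) / E1 (r / R)
        - 2 * W0 A L (E1 (r / R)) ^ 2 / E1 (r / R) ^ 2 + B / E1 (r / R)) / r) r := by
  have hE := E1_hasDerivAt hR hr
  have h0 := (W0_hasDerivAt A L hτ).comp r hE
  have h1 := (W1_hasDerivAt A L hτ).comp r hE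
  have := ((((h0.pow 2).const_mul 2).mul (hE.inv hτ.ne').neg).add
    ((h1.pow 2).const_mul 2)).sub ((hE.log hτ.ne').const_mul B)
  refine (this.congr_deriv ?_).congr_of_eventuallyEq (Filter.Eventually.of_forall fun x => ?_)
  · simp only [Function.comp, Pi.neg_apply, Pi.inv_apply, Pi.pow_apply]
    field_simp
    push_cast
    ring
  · simp [prim, Function.comp]

/-- The Laplacian of `x ↦ G R A L (‖x‖²)` on `ℝ⁴`, as a function of `r = ‖x‖`. -/
noncomputable def D (R A L r : ℝ) : ℝ :=
  8 * deriv (G R A L) (r ^ 2) + 4 * r ^ 2 * deriv (deriv (G R A L)) (r ^ 2)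

theorem D_eq {R : ℝ} (hR : 0 < R) (A L : ℝ) {r : ℝ} (hr : 0 < r) (hτ : 0 < E1 (r / R)) :
    D R A L r = (W2 A L (E1 (r / R)) - 2 * W1 A L (E1 (r / R))) / r ^ 2 := by
  have e : 1 - log (r ^ 2 / R ^ 2) / 2 = E1 (r / R) := by
    unfold E1; rw [← div_pow, Real.log_pow]; push_cast; ring
  unfold D
  rw [G_deriv hR A L (by positivity) (by rw [e]; exact hτ),
    G_deriv2 hR A L (by positivity) (by rw [e]; exact hτ), e]
  field_simp
  ring

theorem D_zero {R : ℝ} (hR : 0 < R) (A : ℝ) {L : ℝ} (hL : 0 < L) {r : ℝ} (hr : 0 ≤ r)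
    (h : r ∉ Set.Icc (rad R (exp (4 * L))) (rad R (exp L))) : D R A L r = 0 := by
  have ha := rad_pos hR (exp (4 * L))
  have hb := rad_pos hR (exp L)
  have hev : G R A L =ᶠ[nhds (r ^ 2)] fun _ => 0 := by
    rw [Set.mem_Icc, not_and_or, not_le, not_le] at h
    have hc := continuous_abs.tendsto (r ^ 2)
    rw [abs_of_nonneg (sq_nonneg r)] at hc
    rcases h with h | h
    · filter_upwards [hc.eventually (Iio_mem_nhds (show r ^ 2 < rad R (exp (4 * L)) ^ 2 by
        gcongr))] with t ht
      exact G_zero hR A hL (Or.inl (le_of_lt ht))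
    · filter_upwards [hc.eventually (Ioi_mem_nhds (show rad R (exp L) ^ 2 < r ^ 2 by
        gcongr))] with t ht
      exact G_zero hR A hL (Or.inr (le_of_lt ht))
  unfold D
  rw [hev.deriv_eq, hev.deriv.deriv_eq]
  simp

theorem D_continuous {R : ℝ} (hR : 0 < R) (A : ℝ) {L : ℝ} (hL : 0 < L) :
    Continuous (D R A L) := by
  have h1 : ContDiff ℝ (⊤ : ℕ∞) (deriv (G R A L)) :=
    (contDiff_infty_iff_deriv.1 (G_contDiff hR A hL)).2
  have h2 : ContDiff ℝ (⊤ : ℕ∞) (deriv (deriv (G R A L))) := (contDiff_infty_iff_deriv.1 h1).2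
  have := h1.continuous
  have := h2.continuous
  unfold D
  fun_prop

/-- The energy of the test function up to the factor `4 vol(B₁)`: the boundary terms of `prim` vanish
except for `B ln τ`, which contributes `3 L B` with `B = 8 A² K² / L²`. -/
theorem radial_energy {R : ℝ} (hR : 0 < R) {K : ℝ} (hK : 1 ≤ K)
    (hb : ∀ s, |deriv phi s| ≤ K ∧ |deriv (deriv phi) s| ≤ K) (A : ℝ) {L : ℝ} (hL : 1 ≤ L) :
    (∫ r in Set.Ioi (0 : ℝ), r ^ 3 * D R A L r ^ 2)
      - (∫ r in Set.Ioi (0 : ℝ), r ^ 3 * (G R A L (r ^ 2) ^ 2 / (r ^ 4 * E1 (r / R) ^ 2)))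
      ≤ 24 * A ^ 2 * K ^ 2 / L := by
  have hL0 : 0 < L := by linarith
  set a := rad R (exp (4 * L)) with ha
  set b := rad R (exp L) with hbdef
  have ha0 : 0 < a := rad_pos hR _
  have hab : a < b := rad_lt hR (by gcongr; linarith)
  have hEa : E1 (a / R) = exp (4 * L) := E1_rad hR _
  have hEb : E1 (b / R) = exp L := E1_rad hR _
  have hE : ∀ r ∈ Set.Icc a b, exp L ≤ E1 (r / R) := fun r hr =>
    (le_E1 hR (ha0.trans_le hr.1)).2 hr.2
  have hsub : Set.Icc a b ⊆ Set.Ioi 0 := fun r hr => ha0.trans_le hr.1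
  have hred : ∀ f : ℝ → ℝ, (∀ r, 0 < r → r ∉ Set.Icc a b → f r = 0) →
      ∫ r in Set.Ioi (0 : ℝ), f r = ∫ r in a..b, f r := by
    intro f hf
    rw [intervalIntegral.integral_of_le hab.le, ← integral_Icc_eq_integral_Ioc]
    exact setIntegral_eq_of_subset_of_forall_sdiff_eq_zero measurableSet_Ioi hsub
      fun r hr => hf r hr.1 hr.2
  have hGz : ∀ r, 0 < r → r ∉ Set.Icc a b → G R A L (r ^ 2) = 0 := by
    intro r hr h
    rw [Set.mem_Icc, not_and_or, not_le, not_le] at h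
    apply G_zero hR A hL0
    rw [abs_of_nonneg (sq_nonneg r)]
    rcases h with h | h
    · left; exact pow_le_pow_left₀ hr.le h.le 2
    · right; exact pow_le_pow_left₀ (rad_pos hR _).le h.le 2
  rw [hred _ (fun r hr h => by rw [D_zero hR A hL0 hr.le h]; ring),
    hred _ (fun r hr h => by rw [hGz r hr h]; simp)]
  have hu : Set.uIcc a b = Set.Icc a b := Set.uIcc_of_le hab.le
  have hcE : ContinuousOn (fun r => E1 (r / R)) (Set.Icc a b) := fun r hr =>
    (E1_hasDerivAt hR (ha0.trans_le hr.1)).continuousAt.continuousWithinAt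
  have hEpos : ∀ r ∈ Set.Icc a b, 0 < E1 (r / R) := fun r hr => (exp_pos L).trans_le (hE r hr)
  have hcG : Continuous (G R A L) := (G_contDiff hR A hL0).continuous
  have i1 : IntervalIntegrable (fun r => r ^ 3 * D R A L r ^ 2) volume a b :=
    ((continuous_pow 3).mul ((D_continuous hR A hL0).pow 2)).intervalIntegrable a b
  have i2 : IntervalIntegrable
      (fun r => r ^ 3 * (G R A L (r ^ 2) ^ 2 / (r ^ 4 * E1 (r / R) ^ 2))) volume a b := by
    apply ContinuousOn.intervalIntegrable
    rw [hu]
    refine (continuous_pow 3).continuousOn.mul (ContinuousOn.div ?_ ?_ ?_)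
    · exact ((hcG.comp (continuous_pow 2)).pow 2).continuousOn
    · exact (continuous_pow 4).continuousOn.mul (hcE.pow 2)
    · intro r hr
      have := hEpos r hr
      have := ha0.trans_le hr.1
      positivity
  set B := 8 * A ^ 2 * K ^ 2 / L ^ 2 with hB
  have hcW : ∀ r ∈ Set.Icc a b, ContinuousAt (fun r => W1 A L (E1 (r / R))) r := fun r hr =>
    ContinuousAt.comp (f := fun r => E1 (r / R)) (g := W1 A L)
      (W1_hasDerivAt A L (hEpos r hr)).continuousAt
      (E1_hasDerivAt hR (ha0.trans_le hr.1)).continuousAt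
  have hcW0 : ∀ r ∈ Set.Icc a b, ContinuousAt (fun r => W0 A L (E1 (r / R))) r := fun r hr =>
    ContinuousAt.comp (f := fun r => E1 (r / R)) (g := W0 A L)
      (W0_hasDerivAt A L (hEpos r hr)).continuousAt
      (E1_hasDerivAt hR (ha0.trans_le hr.1)).continuousAt
  -- `W2` is recovered from the Laplacian, whose continuity is already known
  have hcW2 : ContinuousOn (fun r => W2 A L (E1 (r / R))) (Set.Icc a b) := by
    have h1 : ContinuousOn (fun r => r ^ 2 * D R A L r + 2 * W1 A L (E1 (r / R)))
        (Set.Icc a b) :=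
      ((continuous_pow 2).mul (D_continuous hR A hL0)).continuousOn.add
        (continuousOn_const.mul fun r hr => (hcW r hr).continuousWithinAt)
    refine h1.congr fun r hr => ?_
    have := ha0.trans_le hr.1
    simp only [D_eq hR A L this (hEpos r hr)]
    field_simp
    ring
  have hcW1 : ContinuousOn (fun r => W1 A L (E1 (r / R))) (Set.Icc a b) :=
    fun r hr => (hcW r hr).continuousWithinAt
  have hcW0' : ContinuousOn (fun r => W0 A L (E1 (r / R))) (Set.Icc a b) :=
    fun r hr => (hcW0 r hr).continuousWithinAt
  have i3 : IntervalIntegrable (fun r => (-4 * W1 A L (E1 (r / R)) * W2 A L (E1 (r / R))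
        + 4 * W0 A L (E1 (r / R)) * W1 A L (E1 (r / R)) / E1 (r / R)
        - 2 * W0 A L (E1 (r / R)) ^ 2 / E1 (r / R) ^ 2 + B / E1 (r / R)) / r) volume a b := by
    apply ContinuousOn.intervalIntegrable
    rw [hu]
    have hne : ∀ r ∈ Set.Icc a b, E1 (r / R) ≠ 0 := fun r hr => (hEpos r hr).ne'
    refine ContinuousOn.div (((((continuousOn_const.mul hcW1).mul hcW2).add
      (((continuousOn_const.mul hcW0').mul hcW1).div hcE hne)).sub
      ((continuousOn_const.mul (hcW0'.pow 2)).div (hcE.pow 2)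
        fun r hr => pow_ne_zero 2 (hne r hr))).add (continuousOn_const.div hcE hne))
      continuousOn_id fun r hr => (ha0.trans_le hr.1).ne'
  rw [← intervalIntegral.integral_sub i1 i2]
  have hmono := intervalIntegral.integral_mono_on hab.le (i1.sub i2) i3 (fun r hr => by
    have hr0 := ha0.trans_le hr.1
    have hτ := hEpos r hr
    have hrem := remainder_le hK hb A hL (hE r hr)
    rw [← hB] at hrem
    rw [D_eq hR A L hr0 hτ, G_sq]
    generalize E1 (r / R) = τ at *
    generalize W0 A L τ = w0 at *
    generalize W1 A L τ = w1 at *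
    generalize W2 A L τ = w2 at *
    have e1 : r ^ 3 * ((w2 - 2 * w1) / r ^ 2) ^ 2 - r ^ 3 * (w0 ^ 2 / (r ^ 4 * τ ^ 2))
        = ((w2 ^ 2 + 4 * (w1 - w0 / (2 * τ)) ^ 2) + (-4 * w1 * w2 + 4 * w0 * w1 / τ
          - 2 * w0 ^ 2 / τ ^ 2)) / r := by
      field_simp; ring
    rw [e1]
    gcongr ?_ / r
    linarith)
  refine hmono.trans ?_
  rw [intervalIntegral.integral_eq_sub_of_hasDerivAt (f := prim R A L B) (fun r hr => by
    rw [hu] at hr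
    exact prim_hasDerivAt hR A L B (ha0.trans_le hr.1) (hEpos r hr)) i3]
  unfold prim
  rw [hEa, hEb, W0_zero A hL0 (Or.inl le_rfl), W0_zero A hL0 (Or.inr le_rfl),
    W1_zero A hL0 (Or.inl rfl), W1_zero A hL0 (Or.inr rfl), Real.log_exp, Real.log_exp, hB]
  apply le_of_eq
  field_simp
  ring

/-! ### The test function on `ℝ⁴` -/

/-- The test function on `ℝ⁴`. -/
noncomputable def U (R A L : ℝ) (x : EuclideanSpace ℝ (Fin 4)) : ℝ := G R A L (‖x‖ ^ 2)

theorem U_contDiff {R : ℝ} (hR : 0 < R) (A : ℝ) {L : ℝ} (hL : 0 < L) :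
    ContDiff ℝ (⊤ : ℕ∞) (U R A L) :=
  (G_contDiff hR A hL).comp (contDiff_norm_sq ℝ)

theorem U_tsupport {R : ℝ} (hR : 0 < R) (A : ℝ) {L : ℝ} (hL : 0 < L) :
    tsupport (U R A L) ⊆ Metric.closedBall 0 (rad R (exp L)) := by
  refine closure_minimal (fun x hx => ?_) Metric.isClosed_closedBall
  rw [mem_closedBall_zero_iff]
  by_contra h
  rw [not_le] at h
  apply hx
  apply G_zero hR A hL
  right
  rw [abs_of_nonneg (sq_nonneg _)]
  exact pow_le_pow_left₀ (rad_pos hR _).le h.le 2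

theorem energy_le {R : ℝ} (hR : 0 < R) {K : ℝ} (hK : 1 ≤ K)
    (hb : ∀ s, |deriv phi s| ≤ K ∧ |deriv (deriv phi) s| ≤ K) (A : ℝ) {L : ℝ} (hL : 1 ≤ L)
    {Ω : Set (EuclideanSpace ℝ (Fin 4))} (hΩ : Metric.closedBall 0 (rad R (exp L)) ⊆ Ω) :
    tildeI4 Ω R (U R A L) ≤ 4 * (volume : Measure (EuclideanSpace ℝ (Fin 4))).real
      (Metric.ball 0 1) * (24 * A ^ 2 * K ^ 2 / L) := by
  have hL0 : 0 < L := by linarith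
  have hlap : ∀ x, lap (U R A L) x = D R A L ‖x‖ := fun x => lap_radial _ (G_contDiff hR A hL0) x
  have hout : ∀ x, x ∉ Ω → rad R (exp L) < ‖x‖ := by
    intro x hx
    by_contra h
    exact hx (hΩ (mem_closedBall_zero_iff.2 (not_lt.1 h)))
  unfold tildeI4
  simp only [hlap]
  rw [setIntegral_eq_integral_of_forall_compl_eq_zero (fun x hx => by
      rw [D_zero hR A hL0 (norm_nonneg x) (fun h => absurd h.2 (not_le.2 (hout x hx)))]; simp),
    setIntegral_eq_integral_of_forall_compl_eq_zero (fun x hx => by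
      rw [U, G_zero hR A hL0 (Or.inr (by
        rw [abs_of_nonneg (sq_nonneg _)]
        exact pow_le_pow_left₀ (rad_pos hR _).le (hout x hx).le 2))]; simp)]
  have h1 := integral_fun_norm_addHaar (volume : Measure (EuclideanSpace ℝ (Fin 4)))
    (fun r => D R A L r ^ 2)
  have h2 := integral_fun_norm_addHaar (volume : Measure (EuclideanSpace ℝ (Fin 4)))
    (fun r => G R A L (r ^ 2) ^ 2 / (r ^ 4 * E1 (r / R) ^ 2))
  simp only [finrank_euclideanSpace_fin, smul_eq_mul, nsmul_eq_mul] at h1 h2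
  unfold U
  rw [h1, h2]
  have := radial_energy hR hK hb A hL
  simp only [Nat.add_one_sub_one, Nat.cast_ofNat]
  rw [← mul_assoc, ← mul_assoc, ← mul_sub]
  gcongr

/-- Without integrability the Bochner integral would be `0` by convention. Where `U ≠ 0` one has
`1 ≤ E₂ ≤ 1 + 4L`, hence the integrand is bounded. -/
theorem integrable_exp {R : ℝ} (hR : 0 < R) (A : ℝ) {L : ℝ} (hL : 0 < L) {c : ℝ} (hc : 0 < c)
    (β : ℝ) {Ω : Set (EuclideanSpace ℝ (Fin 4))} (hΩ : volume Ω < ⊤) :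
    IntegrableOn (fun x => exp (c * (|U R A L x| / (E2 (‖x‖ / R)) ^ β) ^ 2)) Ω := by
  have hcont : Continuous (U R A L) := (U_contDiff hR A hL).continuous
  have hcs : HasCompactSupport (U R A L) :=
    (isCompact_closedBall _ _).of_isClosed_subset (isClosed_tsupport _) (U_tsupport hR A hL)
  obtain ⟨C, hC⟩ := hcs.exists_bound_of_continuous hcont
  have hmeas : Measurable fun x => exp (c * (|U R A L x| / (E2 (‖x‖ / R)) ^ β) ^ 2) := by
    have := hcont.measurable
    unfold E2 E1
    fun_prop
  have : IsFiniteMeasure (volume.restrict Ω) := ⟨by simpa using hΩ⟩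
  refine Integrable.of_bound hmeas.aestronglyMeasurable
    (exp (c * (C * (1 + 4 * L) ^ |β|) ^ 2)) (Filter.Eventually.of_forall fun x => ?_)
  have hC0 : 0 ≤ C := (norm_nonneg _).trans (hC x)
  rw [Real.norm_eq_abs, abs_of_pos (exp_pos _)]
  by_cases hU : U R A L x = 0
  · rw [hU]
    rw [abs_zero, zero_div]
    gcongr
    positivity
  · have hτ : exp L < E1 (‖x‖ / R) ∧ E1 (‖x‖ / R) < exp (4 * L) := by
      unfold U at hU
      rw [G_sq] at hU
      by_contra h
      rw [not_and_or, not_lt, not_lt] at h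
      exact hU (W0_zero A hL h)
    have h0 : 0 < E1 (‖x‖ / R) := (exp_pos L).trans hτ.1
    have h1 : 1 ≤ E2 (‖x‖ / R) := by
      unfold E2
      have := (Real.le_log_iff_exp_le h0).2 hτ.1.le
      linarith
    have h2 : E2 (‖x‖ / R) ≤ 1 + 4 * L := by
      unfold E2
      have := (Real.log_le_iff_le_exp h0).2 hτ.2.le
      linarith
    have h3 : (E2 (‖x‖ / R) ^ β)⁻¹ ≤ (1 + 4 * L) ^ |β| := by
      rw [← Real.rpow_neg (by linarith)]
      calc _ ≤ E2 (‖x‖ / R) ^ |β| := Real.rpow_le_rpow_of_exponent_le h1 (neg_le_abs β)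
        _ ≤ _ := Real.rpow_le_rpow (by linarith) h2 (abs_nonneg β)
    have h4 : 0 < E2 (‖x‖ / R) ^ β := Real.rpow_pos_of_pos (by linarith) _
    have h5 : |U R A L x| ≤ C := hC x
    rw [div_eq_mul_inv]
    gcongr

/-- On the shell `T ≤ τ ≤ T + 1`, `T = e^{2L}`, the cutoff equals `1`, and the exponent is at least
`5τ`. -/
theorem large_exp {R A : ℝ} (hA : 0 ≤ A) {L : ℝ} (hL : 1 ≤ L) {c : ℝ}
    (hc : 0 < c) {β γ : ℝ} (hβ : β ≤ γ) (hγ : 0 ≤ γ)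
    (h5 : 5 ≤ c * A ^ 2 / ((1 + 3 * L) ^ γ) ^ 2)
    {x : EuclideanSpace ℝ (Fin 4)} (hx1 : exp (2 * L) ≤ E1 (‖x‖ / R))
    (hx2 : E1 (‖x‖ / R) ≤ exp (2 * L) + 1) :
    exp (5 * exp (2 * L)) ≤ exp (c * (|U R A L x| / (E2 (‖x‖ / R)) ^ β) ^ 2) := by
  have hL0 : 0 < L := by linarith
  unfold U E2
  rw [G_sq]
  generalize E1 (‖x‖ / R) = τ at *
  have h0 : 0 < τ := (exp_pos _).trans_le hx1
  have hx3 : τ ≤ exp (3 * L) := by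
    refine hx2.trans ?_
    have e1 : exp (3 * L) = exp (2 * L) * exp L := by rw [← Real.exp_add]; ring_nf
    have e2 : 2 ≤ exp L := by linarith [Real.add_one_le_exp L]
    have e3 : 1 ≤ exp (2 * L) := Real.one_le_exp (by linarith)
    rw [e1]; nlinarith
  have l1 : 2 * L ≤ log τ := (Real.le_log_iff_exp_le h0).2 hx1
  have l2 : log τ ≤ 3 * L := (Real.log_le_iff_le_exp h0).2 hx3
  have hW : W0 A L τ = A * √τ := by
    unfold W0
    rw [phi_one ((le_div_iff₀ hL0).2 l1) ((div_le_iff₀ hL0).2 l2), mul_one]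
  rw [hW, abs_of_nonneg (by positivity), div_pow, mul_pow, Real.sq_sqrt h0.le]
  have h4 : 0 < (1 + log τ) ^ β := Real.rpow_pos_of_pos (by linarith) _
  have h6 : (1 + log τ) ^ β ≤ (1 + 3 * L) ^ γ :=
    (Real.rpow_le_rpow_of_exponent_le (by linarith) hβ).trans
      (Real.rpow_le_rpow (by linarith) (by linarith) hγ)
  rw [Real.exp_le_exp]
  calc 5 * exp (2 * L) ≤ c * A ^ 2 / ((1 + 3 * L) ^ γ) ^ 2 * τ := by gcongr
    _ = c * (A ^ 2 * τ / ((1 + 3 * L) ^ γ) ^ 2) := by ring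
    _ ≤ _ := by gcongr

/-! ### Blow-up of the exponential integral -/

/-- Failure of the Leray–Adams inequality for `β < 1/2` (second part of Theorem 1). -/
theorem stmt1 (Ω : Set (EuclideanSpace ℝ (Fin 4))) (hopen : IsOpen Ω) (hconn : IsConnected Ω)
    (hbdd : Bornology.IsBounded Ω) (h0 : (0 : EuclideanSpace ℝ (Fin 4)) ∈ Ω)
    (β R : ℝ) (hβ : β < 1 / 2) (hR : ∀ x ∈ Ω, ‖x‖ ≤ R) :
    ∀ c : ℝ, 0 < c → ∀ M : ℝ, 0 < M →
      ∃ u : EuclideanSpace ℝ (Fin 4) → ℝ,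
        ContDiff ℝ (⊤ : ℕ∞) u ∧ HasCompactSupport u ∧ tsupport u ⊆ Ω ∧
        tildeI4 Ω R u ≤ 1 ∧
        M < ∫ x in Ω, Real.exp (c * (|u x| / (E2 (‖x‖ / R)) ^ β) ^ 2) := by
  intro c hc M hM
  obtain ⟨δ, hδ, hball⟩ := Metric.isOpen_iff.1 hopen 0 h0
  have hR0 : 0 < R := by
    have h1 : ‖EuclideanSpace.single (0 : Fin 4) (δ / 2)‖ = δ / 2 := by
      simp [abs_of_pos hδ]
    have h2 := hR (EuclideanSpace.single (0 : Fin 4) (δ / 2)) (hball (by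
      rw [mem_ball_zero_iff, h1]; linarith))
    linarith
  obtain ⟨K, hK, hb⟩ := exists_bound
  set κ := (volume : Measure (EuclideanSpace ℝ (Fin 4))).real (Metric.ball 0 1) with hκ
  have hκ0 : 0 < κ := by
    rw [hκ, measureReal_def]
    exact ENNReal.toReal_pos (Metric.measure_ball_pos _ _ one_pos).ne' measure_ball_lt_top.ne
  set γ := max β 0 with hγ
  have hγ0 : 0 ≤ γ := le_max_right _ _
  have hγ1 : 0 < 1 - 2 * γ := by
    have : γ < 1 / 2 := max_lt hβ (by norm_num)
    linarith
  -- `A² = η L` makes the energy bound `4 κ · 24 A² K² / L` equal to `1`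
  set η := 1 / (96 * κ * K ^ 2) with hη
  have hη0 : 0 < η := by positivity
  have t1 : ∀ᶠ L : ℝ in Filter.atTop, 1 ≤ L := Filter.eventually_ge_atTop 1
  have t2 : ∀ᶠ L : ℝ in Filter.atTop, rad R (exp L) < δ := by
    have h1 : Filter.Tendsto (fun L : ℝ => 1 - exp L) Filter.atTop Filter.atBot :=
      Filter.tendsto_atBot_add_const_left _ 1
        (Filter.tendsto_neg_atTop_atBot.comp Real.tendsto_exp_atTop)
    have h2 := (Real.tendsto_exp_atBot.comp h1).const_mul R
    rw [mul_zero] at h2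
    exact h2.eventually (gt_mem_nhds hδ)
  have t3 : ∀ᶠ L : ℝ in Filter.atTop, 5 * ((4 : ℝ) ^ γ) ^ 2 / (c * η) ≤ L ^ (1 - 2 * γ) :=
    (tendsto_rpow_atTop hγ1).eventually_ge_atTop _
  have t4 : ∀ᶠ L : ℝ in Filter.atTop, M / (κ * (R / 4) ^ 4) < exp (exp (2 * L)) := by
    have h1 : Filter.Tendsto (fun L : ℝ => 2 * L) Filter.atTop Filter.atTop :=
      Filter.tendsto_id.const_mul_atTop two_pos
    exact (Real.tendsto_exp_atTop.comp (Real.tendsto_exp_atTop.comp h1)).eventually_gt_atTop _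
  obtain ⟨L, hL, hLδ, hL5, hLM⟩ := (t1.and (t2.and (t3.and t4))).exists
  have hL0 : 0 < L := by linarith
  set A := √(η * L) with hA
  have hA2 : A ^ 2 = η * L := Real.sq_sqrt (by positivity)
  have h5 : 5 ≤ c * A ^ 2 / ((1 + 3 * L) ^ γ) ^ 2 := by
    have h1 : (1 + 3 * L) ^ γ ≤ 4 ^ γ * L ^ γ := by
      rw [← Real.mul_rpow (by norm_num) hL0.le]
      exact Real.rpow_le_rpow (by linarith) (by linarith) hγ0
    have h2 : L = L ^ (1 - 2 * γ) * (L ^ γ) ^ 2 := by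
      rw [← Real.rpow_natCast (L ^ γ) 2, ← Real.rpow_mul hL0.le, ← Real.rpow_add hL0]
      push_cast
      rw [show 1 - 2 * γ + γ * 2 = 1 by ring, Real.rpow_one]
    have h3 : (0 : ℝ) < (1 + 3 * L) ^ γ := Real.rpow_pos_of_pos (by linarith) _
    rw [le_div_iff₀ (by positivity), hA2]
    rw [div_le_iff₀ (by positivity)] at hL5
    calc 5 * ((1 + 3 * L) ^ γ) ^ 2 ≤ 5 * (4 ^ γ * L ^ γ) ^ 2 := by gcongr
      _ = 5 * (4 ^ γ) ^ 2 * (L ^ γ) ^ 2 := by ring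
      _ ≤ L ^ (1 - 2 * γ) * (c * η) * (L ^ γ) ^ 2 := by gcongr
      _ = c * (η * (L ^ (1 - 2 * γ) * (L ^ γ) ^ 2)) := by ring
      _ = _ := by rw [← h2]
  have hsub : Metric.closedBall 0 (rad R (exp L)) ⊆ Ω :=
    (Metric.closedBall_subset_ball hLδ).trans hball
  have hts := U_tsupport hR0 A hL0
  refine ⟨U R A L, U_contDiff hR0 A hL0,
    (isCompact_closedBall _ _).of_isClosed_subset (isClosed_tsupport _) hts,
    hts.trans hsub, ?_, ?_⟩
  · refine (energy_le hR0 hK hb A hL hsub).trans (le_of_eq ?_)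
    rw [← hκ, hA2, hη]
    field_simp
    norm_num
  · have hint := integrable_exp hR0 A hL0 hc β hbdd.measure_lt_top
    set T := exp (2 * L) with hT
    set p := rad R (T + 1) with hp
    have hp0 : 0 < p := rad_pos hR0 _
    have hpe : p = R * exp (-T) := by rw [hp]; unfold rad; ring_nf
    have hTp : 2 * p ≤ rad R T := by
      have e1 : rad R T = exp 1 * p := by
        rw [hpe]; unfold rad
        rw [sub_eq_add_neg, Real.exp_add]; ring
      have := Real.add_one_le_exp (1 : ℝ)
      rw [e1]
      gcongr
      linarith
    -- a ball of radius `p / 4` inside the shell `p ≤ ‖x‖ ≤ 2 p`, which lies in `T ≤ τ ≤ T + 1`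
    set x0 : EuclideanSpace ℝ (Fin 4) := EuclideanSpace.single 0 (3 / 2 * p) with hx0
    have hn0 : ‖x0‖ = 3 / 2 * p := by
      simp only [hx0, PiLp.norm_single, Real.norm_eq_abs]
      exact abs_of_pos (by positivity)
    have hnorm : ∀ x ∈ Metric.ball x0 (p / 4), p ≤ ‖x‖ ∧ ‖x‖ ≤ 2 * p := by
      intro x hx
      rw [mem_ball_iff_norm] at hx
      have h1 := norm_sub_norm_le x x0
      have h2 := norm_sub_norm_le x0 x
      rw [norm_sub_rev] at h2
      constructor <;> linarith
    have hTL : rad R T ≤ rad R (exp L) := (rad_lt hR0 (by rw [hT]; gcongr; linarith)).le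
    have hBΩ : Metric.ball x0 (p / 4) ⊆ Ω := fun x hx =>
      hsub (mem_closedBall_zero_iff.2 (((hnorm x hx).2.trans hTp).trans hTL))
    have hlow : ∀ x ∈ Metric.ball x0 (p / 4), exp (5 * T) ≤
        exp (c * (|U R A L x| / (E2 (‖x‖ / R)) ^ β) ^ 2) := by
      intro x hx
      obtain ⟨h1, h2⟩ := hnorm x hx
      have hx0 : 0 < ‖x‖ := hp0.trans_le h1
      exact large_exp (Real.sqrt_nonneg _) hL hc (le_max_left β 0) hγ0 h5
        ((le_E1 hR0 hx0).2 (h2.trans hTp)) ((E1_le_s1 hR0 hx0).2 h1)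
    have hvol : (volume : Measure (EuclideanSpace ℝ (Fin 4))).real (Metric.ball x0 (p / 4))
        = (p / 4) ^ 4 * κ := by
      rw [measureReal_def, Measure.addHaar_ball _ _ (by positivity), finrank_euclideanSpace_fin,
        ENNReal.toReal_mul, ENNReal.toReal_ofReal (by positivity)]
      rfl
    calc M < exp T * (κ * (R / 4) ^ 4) := by rwa [div_lt_iff₀ (by positivity)] at hLM
      _ = exp (5 * T) * volume.real (Metric.ball x0 (p / 4)) := by
        rw [hvol, hpe, show (R * exp (-T) / 4) ^ 4 = (R / 4) ^ 4 * exp (-T) ^ 4 by ring,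
          ← Real.exp_nat_mul, show exp (5 * T) * ((R / 4) ^ 4 * exp ((4 : ℕ) * -T) * κ)
            = (exp (5 * T) * exp ((4 : ℕ) * -T)) * (κ * (R / 4) ^ 4) by ring, ← Real.exp_add]
        push_cast
        ring_nf
      _ ≤ ∫ x in Metric.ball x0 (p / 4), exp (c * (|U R A L x| / (E2 (‖x‖ / R)) ^ β) ^ 2) :=
        setIntegral_ge_of_const_le_real Metric.isOpen_ball.measurableSet
          measure_ball_lt_top.ne hlow (hint.mono_set hBΩ)
      _ ≤ _ := setIntegral_mono_set hint
        (Filter.Eventually.of_forall fun x => (exp_pos _).le) (Filter.Eventually.of_forall hBΩ)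
end

section
/- Let Ω be a bounded domain in ℝ⁴ containing the origin. Then the Leray–Trudinger-type estimate of Laplacian type fails without a logarithmic correction: for every c > 0, the supremum of ∫_Ω exp( c · u(x)² ) dx over all u ∈ C₀^∞(Ω) with Ĩ₄[u,Ω,R_Ω] ≤ 1 is infinite; that is, for every c > 0 and every M > 0 there exists u ∈ C₀^∞(Ω) with Ĩ₄[u,Ω,R_Ω] ≤ 1 and ∫_Ω exp( c · u(x)² ) dx > M. -/
/-!
For a radial function `u(x) = w(s)`, `s = E₁(|x| / R) = 1 - log (|x| / R)`, in dimension four one has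
`|x|² Δu = w'' - 2 w'`, so the functional becomes the one-dimensional expression
`K ∫ ((w'' - 2 w')² - w² / s²) ds`, with `K` the area of the unit sphere (`lap_radial`,
`integral_radial`). Its leading part `4 ∫ w'² - ∫ w² / s²` is the Hardy functional, with the sharp
constant and with virtual extremal `√s`. Accordingly take `w(s) = √s v(y)`, `y = log (s / S)`, with
`v` smooth and compactly supported. The functional is then
`K (∫ ((v'' - v/4) e^{-y} / S - (2 v' + v))² dy - ∫ v² dy)` (`tildeI4_testFn`), which tends to
`4 K ∫ v'² dy` as `S → ∞` (`tendsto_energy`).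

On the line, `v` can equal an arbitrary constant `h` on `[-1, 1]` while `∫ v'²` is as small as desired
(`exists_cutoff`). On the shell `S ≤ s ≤ S + 1`, whose volume is comparable to `e^{-4S}`, one has
`u² ≥ S h²`. Choosing `c h² = 8 > 4`, the exponential integral is at least a constant times `e^{4S}`
(`exp_integral_lower`), which is unbounded as `S → ∞`, whereas the functional stays below `1`. The
supports shrink to the origin as `S → ∞`, so the test functions are admissible for any `Ω`.
-/

open MeasureTheory Real

/-- `R_Ω = sup_{x ∈ Ω} |x|`. -/
noncomputable def ROmega (Ω : Set (EuclideanSpace ℝ (Fin 4))) : ℝ :=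
  sSup ((fun x => ‖x‖) '' Ω)

local notation "E4" => EuclideanSpace ℝ (Fin 4)

/-! ### Radial functions in the variable `s = E₁(|x| / R)` -/

lemma hasFDerivAt_logRadius {R : ℝ} (hR : 0 < R) {x : E4} (hx : x ≠ 0) :
    HasFDerivAt (fun y : E4 => E1 (‖y‖ / R)) (-((‖x‖ ^ 2)⁻¹ • innerSL ℝ x)) x := by
  have hx2 : ‖x‖ ^ 2 ≠ 0 := pow_ne_zero _ (norm_ne_zero_iff.2 hx)
  have h1 : HasFDerivAt (fun y : E4 => ‖y‖ ^ 2) (2 • innerSL ℝ x) x :=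
    (hasStrictFDerivAt_norm_sq x).hasFDerivAt
  have h2 := ((h1.log hx2).const_mul (1 / 2)).const_sub (1 + Real.log R)
  have h3 : (fun y : E4 => 1 + Real.log R - 1 / 2 * Real.log (‖y‖ ^ 2)) =ᶠ[nhds x]
      (fun y : E4 => E1 (‖y‖ / R)) := by
    filter_upwards [isOpen_ne.mem_nhds hx] with y hy
    have : ‖y‖ ≠ 0 := norm_ne_zero_iff.2 hy
    simp only [E1]
    rw [Real.log_div this hR.ne', Real.log_pow]
    push_cast; ring
  refine (h2.congr_of_eventuallyEq h3.symm).congr_fderiv ?_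
  ext z
  simp
  ring

/-- In dimension four, `Δ (w ∘ s) = (w''(s) - 2 w'(s)) / |x|²` for `s = 1 - log (|x| / R)`. -/
lemma lap_radial_s3 {R : ℝ} (hR : 0 < R) {w : ℝ → ℝ} (hw : ContDiff ℝ (⊤ : ℕ∞) w) {x : E4}
    (hx : x ≠ 0) :
    lap (fun y : E4 => w (E1 (‖y‖ / R))) x =
      (deriv (deriv w) (E1 (‖x‖ / R)) - 2 * deriv w (E1 (‖x‖ / R))) / ‖x‖ ^ 2 := by
  have hw1 : ContDiff ℝ (⊤ : ℕ∞) (deriv w) := by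
    exact ((contDiff_infty_iff_deriv (f := w)).1 hw).2
  have hd : ∀ s, HasDerivAt w (deriv w s) s := fun s =>
    (hw.differentiable (by simp)).differentiableAt.hasDerivAt
  have hd1 : ∀ s, HasDerivAt (deriv w) (deriv (deriv w) s) s := fun s =>
    (hw1.differentiable (by simp)).differentiableAt.hasDerivAt
  have hx2 : ‖x‖ ^ 2 ≠ 0 := pow_ne_zero _ (norm_ne_zero_iff.2 hx)
  have hin : ∀ (i : Fin 4) (y : E4), inner ℝ (EuclideanSpace.single i (1 : ℝ)) y = y i := by
    intro i y; simp [EuclideanSpace.inner_single_left]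
  have hin' : ∀ (i : Fin 4) (y : E4), inner ℝ y (EuclideanSpace.single i (1 : ℝ)) = y i := by
    intro i y; simp [EuclideanSpace.inner_single_right]
  have key : ∀ i : Fin 4,
      fderiv ℝ (fun y => fderiv ℝ (fun y : E4 => w (E1 (‖y‖ / R))) y
        (EuclideanSpace.single i 1)) x (EuclideanSpace.single i 1) =
      (deriv (deriv w) (E1 (‖x‖ / R)) + 2 * deriv w (E1 (‖x‖ / R))) * (x i) ^ 2 / (‖x‖ ^ 2) ^ 2
        - deriv w (E1 (‖x‖ / R)) / ‖x‖ ^ 2 := by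
    intro i
    -- away from the origin, `∂ᵢ u = -w'(s) yᵢ / |y|²`
    have h3 : (fun y => fderiv ℝ (fun y : E4 => w (E1 (‖y‖ / R))) y
        (EuclideanSpace.single i 1)) =ᶠ[nhds x]
        (fun y : E4 => -(deriv w (E1 (‖y‖ / R)) * (inner ℝ (EuclideanSpace.single i (1 : ℝ)) y * (‖y‖ ^ 2)⁻¹))) := by
      filter_upwards [isOpen_ne.mem_nhds hx] with y hy
      have := (hd (E1 (‖y‖ / R))).comp_hasFDerivAt y (hasFDerivAt_logRadius hR hy)
      erw [this.fderiv]
      simp only [smul_neg, neg_apply, smul_apply,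
        innerSL_apply_apply, hin, hin', smul_eq_mul]
      ring
    rw [h3.fderiv_eq]
    have h1 : HasFDerivAt (fun y : E4 => ‖y‖ ^ 2) (2 • innerSL ℝ x) x :=
      (hasStrictFDerivAt_norm_sq x).hasFDerivAt
    have h4 := (hasDerivAt_inv hx2).comp_hasFDerivAt x h1
    have h5 : HasFDerivAt (fun y : E4 => (inner ℝ (EuclideanSpace.single i (1 : ℝ)) y : ℝ))
      (innerSL ℝ (EuclideanSpace.single i (1 : ℝ))) x :=
      (innerSL ℝ (EuclideanSpace.single i (1 : ℝ))).hasFDerivAt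
    have h6 := (hd1 (E1 (‖x‖ / R))).comp_hasFDerivAt x (hasFDerivAt_logRadius hR hx)
    have h7 := (h6.mul (h5.mul h4)).neg
    erw [h7.fderiv]
    simp [hin, hin']
    field_simp
    ring
  unfold lap
  rw [Finset.sum_congr rfl fun i _ => key i, Finset.sum_sub_distrib, ← Finset.sum_div,
    ← Finset.mul_sum]
  have : ∑ i, (x i) ^ 2 = ‖x‖ ^ 2 := by
    rw [EuclideanSpace.norm_sq_eq]; simp
  rw [this]
  simp
  field_simp
  ring

/-- Polar coordinates followed by `r = R e^{1-s}`. No integrability is needed: both steps are valid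
for the Bochner integral of an arbitrary function. -/
lemma integral_radial {R : ℝ} (hR : 0 < R) (G : ℝ → ℝ) :
    ∫ x : E4, G (E1 (‖x‖ / R)) / ‖x‖ ^ 4 =
      4 * (volume : Measure E4).real (Metric.ball 0 1) * ∫ s, G s := by
  have h := integral_fun_norm_addHaar (volume : Measure E4) (fun r => G (E1 (r / R)) / r ^ 4)
  rw [h]
  have himg : (fun s : ℝ => R * Real.exp (1 - s)) '' Set.univ = Set.Ioi 0 := by
    ext r
    simp only [Set.image_univ, Set.mem_range, Set.mem_Ioi]
    constructor
    · rintro ⟨s, rfl⟩; positivity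
    · intro hr
      refine ⟨1 - Real.log (r / R), ?_⟩
      rw [sub_sub_cancel, Real.exp_log (by positivity)]
      field_simp
  have hder : ∀ s ∈ (Set.univ : Set ℝ), HasDerivWithinAt (fun s : ℝ => R * Real.exp (1 - s))
      (-(R * Real.exp (1 - s))) Set.univ s := by
    intro s _
    have := (((hasDerivAt_id s).const_sub 1).exp.const_mul R).hasDerivWithinAt (s := Set.univ)
    simpa using this
  have hinj : Set.InjOn (fun s : ℝ => R * Real.exp (1 - s)) Set.univ := by
    intro a _ b _ hab
    have := Real.exp_injective (mul_left_cancel₀ hR.ne' hab)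
    linarith
  rw [← himg, integral_image_eq_integral_abs_deriv_smul MeasurableSet.univ hder hinj]
  simp only [finrank_euclideanSpace, Fintype.card_fin, nsmul_eq_mul, smul_eq_mul,
    Measure.restrict_univ]
  have : ∀ s : ℝ, |-(R * Real.exp (1 - s))| * ((R * Real.exp (1 - s)) ^ (4 - 1) *
      (G (E1 (R * Real.exp (1 - s) / R)) / (R * Real.exp (1 - s)) ^ 4)) = G s := by
    intro s
    have hE : E1 (R * Real.exp (1 - s) / R) = s := by
      rw [mul_div_cancel_left₀ _ hR.ne', E1, Real.log_exp]; ring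
    have hp : 0 < R * Real.exp (1 - s) := by positivity
    rw [hE, abs_neg, abs_of_pos hp]
    generalize R * Real.exp (1 - s) = q at hp
    norm_num
    field_simp
  simp only [this]
  push_cast; ring

/-- The substitution `s = S e^y` on the half-line `s > 0`. -/
lemma integral_exp_subst {S : ℝ} (hS : 0 < S) (G : ℝ → ℝ) (hG : ∀ s ≤ 0, G s = 0) :
    ∫ s, G s = ∫ y, (S * Real.exp y) * G (S * Real.exp y) := by
  have himg : (fun s : ℝ => S * Real.exp s) '' Set.univ = Set.Ioi 0 := by
    ext r
    simp only [Set.image_univ, Set.mem_range, Set.mem_Ioi]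
    constructor
    · rintro ⟨s, rfl⟩; positivity
    · intro hr
      refine ⟨Real.log (r / S), ?_⟩
      rw [Real.exp_log (by positivity)]
      field_simp
  have hder : ∀ s ∈ (Set.univ : Set ℝ), HasDerivWithinAt (fun s : ℝ => S * Real.exp s)
      (S * Real.exp s) Set.univ s := fun s _ =>
    ((Real.hasDerivAt_exp s).const_mul S).hasDerivWithinAt
  have hinj : Set.InjOn (fun s : ℝ => S * Real.exp s) Set.univ := by
    intro a _ b _ hab
    exact Real.exp_injective (mul_left_cancel₀ hS.ne' hab)
  have h := integral_image_eq_integral_abs_deriv_smul MeasurableSet.univ hder hinj G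
  rw [himg, setIntegral_eq_integral_of_forall_compl_eq_zero
    (fun s hs => hG s (by simpa using hs))] at h
  rw [h, Measure.restrict_univ]
  congr 1; ext y
  rw [abs_of_pos (by positivity), smul_eq_mul]

/-! ### The Hardy profile and the test functions -/

/-- The one-dimensional profile `w(s) = √s · v(log (s / S))`: the factor `√s` is the virtual
extremal of the one-dimensional Hardy inequality, `v` is a cutoff in the logarithmic variable and
`S` a dilation parameter. For `s ≤ 0` it vanishes since `√s = 0`. -/
noncomputable def prof (v : ℝ → ℝ) (S s : ℝ) : ℝ := √s * v (Real.log (s / S))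

lemma prof_low {v : ℝ → ℝ} {S B s : ℝ} (hS : 0 < S) (hv : ∀ y, B ≤ |y| → v y = 0)
    (hs : s ≤ S * Real.exp (-B)) : prof v S s = 0 := by
  rcases le_or_gt s 0 with h | h
  · simp [prof, Real.sqrt_eq_zero_of_nonpos h]
  · have : Real.log (s / S) ≤ -B := by
      rw [Real.log_le_iff_le_exp (by positivity), div_le_iff₀ hS]; linarith
    rw [prof, hv _ (by have := neg_abs_le (Real.log (s / S)); linarith), mul_zero]

lemma prof_high {v : ℝ → ℝ} {S B s : ℝ} (hS : 0 < S) (hv : ∀ y, B ≤ |y| → v y = 0)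
    (hs : S * Real.exp B ≤ s) : prof v S s = 0 := by
  have h : 0 < s := lt_of_lt_of_le (by positivity) hs
  have : B ≤ Real.log (s / S) := by
    rw [Real.le_log_iff_exp_le (by positivity), le_div_iff₀ hS]; linarith
  rw [prof, hv _ (this.trans (le_abs_self _)), mul_zero]

lemma prof_contDiff {v : ℝ → ℝ} (hvs : ContDiff ℝ (⊤ : ℕ∞) v) {S B : ℝ} (hS : 0 < S)
    (hv : ∀ y, B ≤ |y| → v y = 0) : ContDiff ℝ (⊤ : ℕ∞) (prof v S) := by
  rw [contDiff_iff_contDiffAt]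
  intro s
  rcases lt_or_ge s (S * Real.exp (-B)) with h | h
  · refine (contDiffAt_const (c := (0 : ℝ))).congr_of_eventuallyEq ?_
    filter_upwards [isOpen_Iio.mem_nhds h] with z hz
    exact prof_low hS hv (le_of_lt hz)
  · have hs : 0 < s := lt_of_lt_of_le (by positivity) h
    exact (contDiffAt_id.sqrt hs.ne').mul (hvs.contDiffAt.comp s
      ((contDiffAt_id.div_const S).log (div_pos hs hS).ne'))

lemma prof_hasDerivAt {v : ℝ → ℝ} (hvs : Differentiable ℝ v) {S : ℝ} (hS : 0 < S) {s : ℝ}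
    (hs : 0 < s) :
    HasDerivAt (prof v S)
      ((√s)⁻¹ * (deriv v (Real.log (s / S)) + v (Real.log (s / S)) / 2)) s := by
  have h1 : HasDerivAt (fun s : ℝ => Real.log (s / S)) ((1 / S) / (s / S)) s :=
    ((hasDerivAt_id s).div_const S).log (div_pos hs hS).ne'
  have h2 := (Real.hasDerivAt_sqrt hs.ne').mul
    ((hvs (Real.log (s / S))).hasDerivAt.comp s h1)
  refine h2.congr_deriv ?_
  have h3 : 0 < √s := Real.sqrt_pos.2 hs
  have h4 : s = √s ^ 2 := (Real.sq_sqrt hs.le).symm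
  simp only [Function.comp]
  generalize deriv v (Real.log (s / S)) = a
  generalize v (Real.log (s / S)) = b
  generalize √s = q at *
  subst h4
  field_simp
  ring

lemma prof_deriv2 {v : ℝ → ℝ} (hvs : ContDiff ℝ (⊤ : ℕ∞) v) {S : ℝ} (hS : 0 < S) {s : ℝ}
    (hs : 0 < s) :
    deriv (deriv (prof v S)) s =
      (√s)⁻¹ ^ 3 * (deriv (deriv v) (Real.log (s / S)) - v (Real.log (s / S)) / 4) := by
  have hv1 : Differentiable ℝ v := hvs.differentiable (by simp)
  have hv2 : Differentiable ℝ (deriv v) :=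
    ((contDiff_infty_iff_deriv (f := v)).1 hvs).2.differentiable (by simp)
  have h0 : deriv (prof v S) =ᶠ[nhds s]
      fun s => (√s)⁻¹ * (deriv v (Real.log (s / S)) + v (Real.log (s / S)) / 2) := by
    filter_upwards [isOpen_Ioi.mem_nhds hs] with z hz
    exact (prof_hasDerivAt hv1 hS hz).deriv
  rw [h0.deriv_eq]
  have h1 : HasDerivAt (fun s : ℝ => Real.log (s / S)) ((1 / S) / (s / S)) s :=
    ((hasDerivAt_id s).div_const S).log (div_pos hs hS).ne'
  have h3 : 0 < √s := Real.sqrt_pos.2 hs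
  have h2 : HasDerivAt (fun s => (√s)⁻¹ * (deriv v (Real.log (s / S)) + v (Real.log (s / S)) / 2))
    _ s := ((Real.hasDerivAt_sqrt hs.ne').inv h3.ne').mul
    (((hv2 (Real.log (s / S))).hasDerivAt.comp s h1).add
      (((hv1 (Real.log (s / S))).hasDerivAt.comp s h1).div_const 2))
  rw [h2.deriv]
  have h4 : s = √s ^ 2 := (Real.sq_sqrt hs.le).symm
  simp only [Pi.inv_apply]
  generalize deriv (deriv v) (Real.log (s / S)) = c
  generalize deriv v (Real.log (s / S)) = a
  generalize v (Real.log (s / S)) = b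
  generalize √s = q at *
  subst h4
  field_simp
  ring

/-- The radial test function with profile `prof v S` in the variable `s = E₁(|x| / R)`. -/
noncomputable def testFn (R : ℝ) (v : ℝ → ℝ) (S : ℝ) (x : E4) : ℝ := prof v S (E1 (‖x‖ / R))

lemma testFn_far {R S B : ℝ} {v : ℝ → ℝ} (hR : 0 < R) (hS : 0 < S)
    (hv : ∀ y, B ≤ |y| → v y = 0) {x : E4}
    (hx : R * Real.exp (1 - S * Real.exp (-B)) ≤ ‖x‖) : testFn R v S x = 0 := by
  apply prof_low hS hv
  have h0 : 0 < ‖x‖ := lt_of_lt_of_le (by positivity) hx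
  have : 1 - S * Real.exp (-B) ≤ Real.log (‖x‖ / R) := by
    rw [Real.le_log_iff_exp_le (by positivity), le_div_iff₀ hR]; linarith
  rw [E1]; linarith

/-- The test function vanishes near the origin. At the origin itself `E₁` takes the junk value `1`,
where the profile vanishes because of `hSB`. -/
lemma testFn_near {R S B : ℝ} {v : ℝ → ℝ} (hR : 0 < R) (hS : 0 < S) (hSB : 1 ≤ S * Real.exp (-B))
    (hv : ∀ y, B ≤ |y| → v y = 0) {x : E4}
    (hx : ‖x‖ ≤ R * Real.exp (1 - S * Real.exp B)) : testFn R v S x = 0 := by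
  rcases eq_or_ne x 0 with rfl | h
  · apply prof_low hS hv
    simpa [E1] using hSB
  · apply prof_high hS hv
    have h0 : 0 < ‖x‖ := norm_pos_iff.2 h
    have : Real.log (‖x‖ / R) ≤ 1 - S * Real.exp B := by
      rw [Real.log_le_iff_le_exp (by positivity), div_le_iff₀ hR]; linarith
    rw [E1]; linarith

lemma testFn_contDiff {R S B : ℝ} {v : ℝ → ℝ} (hR : 0 < R) (hS : 0 < S)
    (hSB : 1 ≤ S * Real.exp (-B)) (hvs : ContDiff ℝ (⊤ : ℕ∞) v)
    (hv : ∀ y, B ≤ |y| → v y = 0) : ContDiff ℝ (⊤ : ℕ∞) (testFn R v S) := by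
  rw [contDiff_iff_contDiffAt]
  intro x
  rcases eq_or_ne x 0 with rfl | h
  · refine (contDiffAt_const (c := (0 : ℝ))).congr_of_eventuallyEq ?_
    filter_upwards [Metric.ball_mem_nhds (0 : E4)
      (by positivity : 0 < R * Real.exp (1 - S * Real.exp B))] with z hz
    exact testFn_near hR hS hSB hv (by simpa using (Metric.mem_ball.1 hz).le)
  · have h0 : 0 < ‖x‖ := norm_pos_iff.2 h
    exact (prof_contDiff hvs hS hv).contDiffAt.comp x (contDiffAt_const.sub
      ((((contDiffAt_id.norm ℝ h).div_const R)).log (div_pos h0 hR).ne'))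

lemma testFn_tsupport {R S B : ℝ} {v : ℝ → ℝ} (hR : 0 < R) (hS : 0 < S)
    (hv : ∀ y, B ≤ |y| → v y = 0) :
    tsupport (testFn R v S) ⊆ Metric.closedBall 0 (R * Real.exp (1 - S * Real.exp (-B))) := by
  apply closure_minimal _ Metric.isClosed_closedBall
  intro x hx
  by_contra hc
  exact hx (testFn_far hR hS hv (by simp at hc; exact hc.le))

/-! ### The energy of the test functions -/

/-- The exact value of the functional on the test functions: in the variable `y = log (s / S)`,
only the correction factor `e^{-y} / S` depends on the dilation parameter. -/
lemma tildeI4_testFn {R S B : ℝ} {v : ℝ → ℝ} {Ω : Set E4} (hR : 0 < R) (hS : 0 < S)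
    (hvs : ContDiff ℝ (⊤ : ℕ∞) v) (hv : ∀ y, B ≤ |y| → v y = 0)
    (hsub : tsupport (testFn R v S) ⊆ Ω) :
    tildeI4 Ω R (testFn R v S) = 4 * (volume : Measure E4).real (Metric.ball 0 1) *
      ((∫ y, ((deriv (deriv v) y - v y / 4) * Real.exp (-y) * S⁻¹ - (2 * deriv v y + v y)) ^ 2)
        - ∫ y, v y ^ 2) := by
  have hlap : ∀ x ∉ Ω, lap (testFn R v S) x = 0 := by
    intro x hx
    have hx' : x ∉ tsupport (testFn R v S) := fun h => hx (hsub h)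
    rw [notMem_tsupport_iff_eventuallyEq] at hx'
    have h1 : ∀ i : Fin 4, (fun y => fderiv ℝ (testFn R v S) y (EuclideanSpace.single i 1))
        =ᶠ[nhds x] fun _ => (0 : ℝ) := by
      intro i
      filter_upwards [hx'.fderiv (𝕜 := ℝ)] with z hz
      rw [hz]; simp
    unfold lap
    refine Finset.sum_eq_zero fun i _ => ?_
    rw [(h1 i).fderiv_eq]; simp
  have hu0 : ∀ x ∉ Ω, testFn R v S x = 0 := fun x hx =>
    image_eq_zero_of_notMem_tsupport fun h => hx (hsub h)
  have hvd : Differentiable ℝ v := hvs.differentiable (by simp)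
  have hw := prof_contDiff hvs hS hv
  have hlow : ∀ s ≤ 0, prof v S s = 0 := fun s hs => by
    simp [prof, Real.sqrt_eq_zero_of_nonpos hs]
  have hlowev : ∀ s ≤ 0, prof v S =ᶠ[nhds s] 0 := by
    intro s hs
    filter_upwards [isOpen_Iio.mem_nhds (show s < S * Real.exp (-B) from
      lt_of_le_of_lt hs (by positivity))] with z hz
    exact prof_low hS hv (le_of_lt hz)
  have hlow1 : ∀ s ≤ 0, deriv (prof v S) s = 0 := fun s hs => by
    rw [(hlowev s hs).deriv_eq]; simp
  have hlow2 : ∀ s ≤ 0, deriv (deriv (prof v S)) s = 0 := fun s hs => by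
    rw [(hlowev s hs).deriv.deriv_eq]; simp
  have hlog : ∀ y : ℝ, Real.log (S * Real.exp y / S) = y := fun y => by
    rw [mul_div_cancel_left₀ _ hS.ne', Real.log_exp]
  unfold tildeI4
  rw [setIntegral_eq_integral_of_forall_compl_eq_zero (fun x hx => by simp [hlap x hx]),
    setIntegral_eq_integral_of_forall_compl_eq_zero (fun x hx => by simp [hu0 x hx]), mul_sub]
  congr 1
  · have hae : ∀ᵐ x : E4, lap (testFn R v S) x ^ 2 =
        (fun s => (deriv (deriv (prof v S)) s - 2 * deriv (prof v S) s) ^ 2) (E1 (‖x‖ / R))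
          / ‖x‖ ^ 4 := by
      have : ∀ᵐ x : E4, x ≠ 0 := by simp [ae_iff]
      filter_upwards [this] with x hx
      have := lap_radial_s3 hR hw hx
      unfold testFn
      rw [this, div_pow]; ring
    rw [integral_congr_ae hae, integral_radial hR
      (fun s => (deriv (deriv (prof v S)) s - 2 * deriv (prof v S) s) ^ 2), integral_exp_subst hS _ (fun s hs => by
      simp [hlow1 s hs, hlow2 s hs])]
    congr 2; ext y
    have hs : 0 < S * Real.exp y := by positivity
    rw [prof_deriv2 hvs hS hs, (prof_hasDerivAt hvd hS hs).deriv, hlog]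
    have h3 : 0 < √(S * Real.exp y) := Real.sqrt_pos.2 hs
    have h4 : S * Real.exp y = √(S * Real.exp y) ^ 2 := (Real.sq_sqrt hs.le).symm
    have h5 : Real.exp (-y) * S⁻¹ = (√(S * Real.exp y) ^ 2)⁻¹ := by
      rw [← h4, Real.exp_neg, mul_inv, mul_comm]
    rw [mul_assoc (_ - _) (Real.exp (-y)), h5]
    nth_rw 1 [h4]
    generalize √(S * Real.exp y) = q at *
    field_simp
  · have : ∀ x : E4, testFn R v S x ^ 2 / (‖x‖ ^ 4 * E1 (‖x‖ / R) ^ 2) =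
        (fun s => prof v S s ^ 2 / s ^ 2) (E1 (‖x‖ / R)) / ‖x‖ ^ 4 := fun x => by
      simp only [testFn]; rw [div_div, mul_comm]
    simp only [this]
    rw [integral_radial hR (fun s => prof v S s ^ 2 / s ^ 2),
      integral_exp_subst hS _ (fun s hs => by simp [hlow s hs])]
    congr 2; ext y
    have hs : 0 < S * Real.exp y := by positivity
    rw [prof, hlog, mul_pow, Real.sq_sqrt hs.le]
    field_simp

lemma integrable_of_zero {f : ℝ → ℝ} (hf : Continuous f) {B : ℝ} (h : ∀ y, B < |y| → f y = 0) :
    Integrable f :=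
  hf.integrable_of_hasCompactSupport (HasCompactSupport.of_support_subset_isCompact
    (isCompact_Icc (a := -B) (b := B)) fun y hy => abs_le.1 (not_lt.1 fun hc => hy (h y hc)))

/-- As `S → ∞` the functional converges to the Dirichlet energy of `v`: the cross term `∫ v v'`
vanishes, and the Hardy term cancels `∫ v²`. -/
lemma tendsto_energy {B : ℝ} {v : ℝ → ℝ} (hvs : ContDiff ℝ (⊤ : ℕ∞) v)
    (hv : ∀ y, B ≤ |y| → v y = 0) :
    Filter.Tendsto (fun S : ℝ =>
      (∫ y, ((deriv (deriv v) y - v y / 4) * Real.exp (-y) * S⁻¹ - (2 * deriv v y + v y)) ^ 2)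
        - ∫ y, v y ^ 2) Filter.atTop (nhds (4 * ∫ y, deriv v y ^ 2)) := by
  have hvd : Differentiable ℝ v := hvs.differentiable (by simp)
  have hv1s := ((contDiff_infty_iff_deriv (f := v)).1 hvs).2
  have hv2s := ((contDiff_infty_iff_deriv (f := deriv v)).1 hv1s).2
  have c0 := hvs.continuous
  have c1 := hv1s.continuous
  have c2 := hv2s.continuous
  have hev : ∀ y, B < |y| → v =ᶠ[nhds y] 0 := by
    intro y hy
    filter_upwards [(isOpen_lt continuous_const continuous_abs).mem_nhds hy] with z hz
    exact hv z (le_of_lt hz)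
  have z0 : ∀ y, B < |y| → v y = 0 := fun y hy => hv y hy.le
  have z1 : ∀ y, B < |y| → deriv v y = 0 := fun y hy => by rw [(hev y hy).deriv_eq]; simp
  have z2 : ∀ y, B < |y| → deriv (deriv v) y = 0 := fun y hy => by
    rw [(hev y hy).deriv.deriv_eq]; simp
  set P : ℝ → ℝ := fun y => (deriv (deriv v) y - v y / 4) * Real.exp (-y) with hP
  have cP : Continuous P := by fun_prop
  have zP : ∀ y, B < |y| → P y = 0 := fun y hy => by simp [hP, z0 y hy, z2 y hy]
  have i1 : Integrable (fun y => P y ^ 2) :=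
    integrable_of_zero (B := B) (by fun_prop) fun y hy => by simp [zP y hy]
  have i2 : Integrable (fun y => P y * (2 * deriv v y + v y)) :=
    integrable_of_zero (B := B) (by fun_prop) fun y hy => by simp [zP y hy]
  have i3 : Integrable (fun y => deriv v y ^ 2) :=
    integrable_of_zero (B := B) (by fun_prop) fun y hy => by simp [z1 y hy]
  have i4 : Integrable (fun y => v y * deriv v y) :=
    integrable_of_zero (B := B) (by fun_prop) fun y hy => by simp [z1 y hy]
  have i5 : Integrable (fun y => v y ^ 2) :=
    integrable_of_zero (B := B) (by fun_prop) fun y hy => by simp [z0 y hy]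
  have hcross : ∫ y, v y * deriv v y = 0 := by
    have := integral_mul_deriv_eq_deriv_mul_of_integrable (u := v) (v := v) (u' := deriv v)
      (v' := deriv v) (fun x _ => (hvd x).hasDerivAt) (fun x _ => (hvd x).hasDerivAt) i4
      (by simpa [mul_comm, Pi.mul_def] using i4) (by simpa [sq, Pi.mul_def] using i5)
    simp only [mul_comm (deriv v _)] at this
    linarith
  have hexp : ∀ S : ℝ, (∫ y, (P y * S⁻¹ - (2 * deriv v y + v y)) ^ 2) - ∫ y, v y ^ 2 =
      (S⁻¹) ^ 2 * (∫ y, P y ^ 2) - 2 * S⁻¹ * (∫ y, P y * (2 * deriv v y + v y))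
        + 4 * ∫ y, deriv v y ^ 2 := by
    intro S
    have : ∀ y, (P y * S⁻¹ - (2 * deriv v y + v y)) ^ 2 = (((S⁻¹) ^ 2 * P y ^ 2
        - 2 * S⁻¹ * (P y * (2 * deriv v y + v y))) + 4 * deriv v y ^ 2) + 4 * (v y * deriv v y)
          + v y ^ 2 := fun y => by ring
    simp only [this]
    rw [integral_add, integral_add, integral_add, integral_sub]
    · simp only [integral_const_mul, hcross]; ring
    all_goals fun_prop
  change Filter.Tendsto (fun S : ℝ =>
    (∫ y, (P y * S⁻¹ - (2 * deriv v y + v y)) ^ 2) - ∫ y, v y ^ 2) _ _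
  simp only [hexp]
  have ht := tendsto_inv_atTop_zero (𝕜 := ℝ)
  have := (((ht.pow 2).mul_const (∫ y, P y ^ 2)).sub ((ht.const_mul 2).mul_const
    (∫ y, P y * (2 * deriv v y + v y)))).add_const (4 * ∫ y, deriv v y ^ 2)
  simpa using this

/-! ### Failure of the exponential estimate -/

/-- A compactly supported function on the line with a plateau of any height can have arbitrarily
small Dirichlet energy: stretching a fixed bump by `L` divides its energy by `L`. -/
lemma exists_cutoff (h : ℝ) {ε : ℝ} (hε : 0 < ε) :
    ∃ (v : ℝ → ℝ) (B : ℝ), ContDiff ℝ (⊤ : ℕ∞) v ∧ (∀ y, B ≤ |y| → v y = 0) ∧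
      (∀ y, |y| ≤ 1 → v y = h) ∧ ∫ y, deriv v y ^ 2 < ε := by
  let φ : ContDiffBump (0 : ℝ) := ⟨1, 2, by norm_num, by norm_num⟩
  have hφ : ContDiff ℝ (⊤ : ℕ∞) φ := φ.contDiff
  set D := ∫ y, deriv φ y ^ 2 with hD
  have hD0 : 0 ≤ D := integral_nonneg fun y => sq_nonneg _
  set L := h ^ 2 * D / ε + 1 with hL
  have hL1 : 1 ≤ L := by
    have : 0 ≤ h ^ 2 * D / ε := by positivity
    linarith
  have hL0 : 0 < L := by linarith
  refine ⟨fun y => h * φ (y / L), 2 * L, contDiff_const.mul (hφ.comp (contDiff_id.div_const L)),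
    ?_, ?_, ?_⟩
  · intro y hy
    have : φ (y / L) = 0 := φ.zero_of_le_dist (by
      rw [Real.dist_eq, sub_zero, abs_div, abs_of_pos hL0, le_div_iff₀ hL0]; exact hy)
    simp [this]
  · intro y hy
    have : φ (y / L) = 1 := φ.one_of_mem_closedBall (by
      rw [Metric.mem_closedBall, Real.dist_eq, sub_zero, abs_div, abs_of_pos hL0, div_le_iff₀ hL0]
      change |y| ≤ 1 * L
      linarith)
    simp [this]
  · have hd : ∀ y, deriv (fun y => h * φ (y / L)) y ^ 2 =
        (h / L) ^ 2 * (fun z => deriv φ z ^ 2) (y / L) := by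
      intro y
      have h1 := (((hφ.differentiable (by simp)) (y / L)).hasDerivAt.comp y
        ((hasDerivAt_id y).div_const L)).const_mul h
      have h2 : deriv (fun y => h * φ (y / L)) y = h * (deriv φ (y / L) * (1 / L)) := h1.deriv
      rw [h2]; ring
    simp only [hd]
    rw [integral_const_mul, Measure.integral_comp_div (fun z => deriv φ z ^ 2) L, ← hD,
      abs_of_pos hL0, smul_eq_mul]
    have : (h / L) ^ 2 * (L * D) = h ^ 2 * D / L := by field_simp
    rw [this, div_lt_iff₀ hL0, hL, mul_add, mul_div_cancel₀ _ hε.ne']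
    linarith

/-- On the shell `S ≤ s ≤ S + 1` the test function satisfies `u² ≥ S h²`, while the shell has volume
comparable to `e^{-4S}`. -/
lemma exp_integral_lower {R S B h c : ℝ} {v : ℝ → ℝ} {Ω : Set E4} (hR : 0 < R) (hS : 1 ≤ S)
    (hSB : 1 ≤ S * Real.exp (-B)) (hvs : ContDiff ℝ (⊤ : ℕ∞) v)
    (hv : ∀ y, B ≤ |y| → v y = 0) (hv1 : ∀ y, |y| ≤ 1 → v y = h)
    (hh : c * h ^ 2 = 8) (hbdd : Bornology.IsBounded Ω)
    (hΩ : Metric.closedBall 0 (R * Real.exp (1 - S)) ⊆ Ω) :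
    R ^ 4 * (volume : Measure E4).real (Metric.ball 0 1) * (Real.exp 4 - 1) * Real.exp (4 * S) ≤
      ∫ x in Ω, Real.exp (c * testFn R v S x ^ 2) := by
  have hS0 : 0 < S := by linarith
  set A : Set E4 := Metric.closedBall 0 (R * Real.exp (1 - S)) \
    Metric.closedBall 0 (R * Real.exp (-S)) with hA
  have hAm : MeasurableSet A := measurableSet_closedBall.diff measurableSet_closedBall
  have hAΩ : A ⊆ Ω := Set.sdiff_subset.trans hΩ
  have hcont : Continuous fun x => Real.exp (c * testFn R v S x ^ 2) := by
    have := (testFn_contDiff hR hS0 hSB hvs hv).continuous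
    fun_prop
  have hint : IntegrableOn (fun x => Real.exp (c * testFn R v S x ^ 2)) Ω :=
    (hcont.continuousOn.integrableOn_compact hbdd.isCompact_closure).mono_set subset_closure
  have hlow : ∀ x ∈ A, Real.exp (8 * S) ≤ Real.exp (c * testFn R v S x ^ 2) := by
    rintro x ⟨hx1, hx2⟩
    rw [mem_closedBall_zero_iff] at hx1 hx2
    rw [not_le] at hx2
    have h0 : 0 < ‖x‖ := lt_trans (by positivity) hx2
    have h1 : Real.log (‖x‖ / R) ≤ 1 - S := by
      rw [Real.log_le_iff_le_exp (by positivity), div_le_iff₀ hR]; linarith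
    have h2 : -S ≤ Real.log (‖x‖ / R) := by
      rw [Real.le_log_iff_exp_le (by positivity), le_div_iff₀ hR]; linarith
    apply Real.exp_le_exp.2
    unfold testFn
    have hs1 : S ≤ E1 (‖x‖ / R) := by rw [E1]; linarith
    have hs2 : E1 (‖x‖ / R) ≤ 1 + S := by rw [E1]; linarith
    generalize E1 (‖x‖ / R) = s at hs1 hs2
    have hs0 : 0 < s := by linarith
    have hle : |Real.log (s / S)| ≤ 1 := by
      rw [abs_of_nonneg (Real.log_nonneg (by rwa [le_div_iff₀ hS0, one_mul]))]
      have h4 := Real.log_le_sub_one_of_pos (div_pos hs0 hS0)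
      have h5 : s / S ≤ 2 := by rw [div_le_iff₀ hS0]; linarith
      linarith
    rw [prof, hv1 _ hle, mul_pow, Real.sq_sqrt hs0.le]
    calc 8 * S ≤ 8 * s := by linarith
      _ = c * (s * h ^ 2) := by rw [← hh]; ring
  have hvol : (volume : Measure E4).real A =
      R ^ 4 * (volume : Measure E4).real (Metric.ball 0 1) * (Real.exp 4 - 1)
        * Real.exp (-(4 * S)) := by
    rw [hA, measureReal_sdiff (Metric.closedBall_subset_closedBall (by gcongr; linarith))
      measurableSet_closedBall measure_closedBall_lt_top.ne]
    rw [Measure.addHaar_real_closedBall _ _ (by positivity),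
      Measure.addHaar_real_closedBall _ _ (by positivity)]
    simp only [finrank_euclideanSpace, Fintype.card_fin, mul_pow, ← Real.exp_nat_mul]
    have : Real.exp ((4 : ℕ) * (1 - S)) = Real.exp 4 * Real.exp (-(4 * S)) := by
      rw [← Real.exp_add]; congr 1; push_cast; ring
    rw [this]
    have : Real.exp ((4 : ℕ) * -S) = Real.exp (-(4 * S)) := by
      congr 1; push_cast; ring
    rw [this]
    ring
  calc _ = ∫ x in A, Real.exp (8 * S) := by
        rw [setIntegral_const, hvol, smul_eq_mul]
        have : Real.exp (4 * S) = Real.exp (-(4 * S)) * Real.exp (8 * S) := by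
          rw [← Real.exp_add]; congr 1; ring
        rw [this]; ring
    _ ≤ ∫ x in A, Real.exp (c * testFn R v S x ^ 2) := by
        refine setIntegral_mono_on ?_ (hint.mono_set hAΩ) hAm hlow
        exact integrableOn_const (by
          exact ne_of_lt (lt_of_le_of_lt (measure_mono hAΩ) hbdd.measure_lt_top))
    _ ≤ _ := setIntegral_mono_set hint
        (Filter.Eventually.of_forall fun x => (Real.exp_pos _).le)
        (Filter.Eventually.of_forall hAΩ)

lemma ROmega_pos {Ω : Set E4} (hopen : IsOpen Ω) (hbdd : Bornology.IsBounded Ω)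
    (h0 : (0 : E4) ∈ Ω) : 0 < ROmega Ω := by
  obtain ⟨δ, hδ, hball⟩ := Metric.isOpen_iff.1 hopen 0 h0
  obtain ⟨C, hC⟩ := hbdd.exists_norm_le
  have hx : (EuclideanSpace.single 0 (δ / 2) : E4) ∈ Ω := hball (by
    rw [mem_ball_zero_iff, PiLp.norm_single, Real.norm_eq_abs, abs_of_pos (by positivity)]
    linarith)
  have hle := le_csSup (s := (fun x : E4 => ‖x‖) '' Ω) ⟨C, by rintro _ ⟨x, hx, rfl⟩; exact hC x hx⟩
    (Set.mem_image_of_mem _ hx)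
  refine lt_of_lt_of_le ?_ hle
  simp only [PiLp.norm_single, Real.norm_eq_abs]
  positivity

/-- The Leray–Trudinger type estimate of Laplacian type fails without logarithmic correction. -/
theorem stmt3 (Ω : Set (EuclideanSpace ℝ (Fin 4))) (hopen : IsOpen Ω) (hconn : IsConnected Ω)
    (hbdd : Bornology.IsBounded Ω) (h0 : (0 : EuclideanSpace ℝ (Fin 4)) ∈ Ω) :
    ∀ c : ℝ, 0 < c → ∀ M : ℝ, 0 < M →
      ∃ u : EuclideanSpace ℝ (Fin 4) → ℝ,
        ContDiff ℝ (⊤ : ℕ∞) u ∧ HasCompactSupport u ∧ tsupport u ⊆ Ω ∧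
        tildeI4 Ω (ROmega Ω) u ≤ 1 ∧
        M < ∫ x in Ω, Real.exp (c * (u x) ^ 2) := by
  intro c hc M hM
  have hR := ROmega_pos hopen hbdd h0
  set R := ROmega Ω
  obtain ⟨δ, hδ, hball⟩ := Metric.isOpen_iff.1 hopen 0 h0
  set K := (volume : Measure E4).real (Metric.ball 0 1) with hK
  have hK0 : 0 < K := ENNReal.toReal_pos (Metric.measure_ball_pos _ _ one_pos).ne'
    measure_ball_lt_top.ne
  -- `c h² = 8 > 4` makes the growth of `exp (c u²)` beat the volume decay `e^{-4S}` of the shells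
  have hh : c * √(8 / c) ^ 2 = 8 := by
    rw [Real.sq_sqrt (by positivity)]; field_simp
  set h := √(8 / c)
  obtain ⟨v, B, hvs, hv, hv1, hvE⟩ := exists_cutoff h (ε := 1 / (16 * K)) (by positivity)
  have hE : ∀ᶠ S in Filter.atTop, 4 * K *
      ((∫ y, ((deriv (deriv v) y - v y / 4) * Real.exp (-y) * S⁻¹ - (2 * deriv v y + v y)) ^ 2)
        - ∫ y, v y ^ 2) < 1 := by
    refine ((tendsto_energy hvs hv).const_mul (4 * K)).eventually_lt_const ?_
    rw [lt_div_iff₀ (by positivity)] at hvE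
    linarith
  have hlin : Filter.Tendsto (fun S : ℝ => S * Real.exp (-B)) Filter.atTop Filter.atTop :=
    Filter.tendsto_id.atTop_mul_const (Real.exp_pos _)
  have hsmall : Filter.Tendsto (fun s : ℝ => R * Real.exp (1 - s)) Filter.atTop (nhds 0) := by
    have := (Real.tendsto_exp_atBot.comp
      (Filter.tendsto_atBot_add_const_left Filter.atTop (1 : ℝ)
        Filter.tendsto_neg_atTop_atBot)).const_mul R
    simpa [Function.comp_def, sub_eq_add_neg] using this
  have hlarge : Filter.Tendsto (fun S : ℝ => R ^ 4 * K * (Real.exp 4 - 1) * Real.exp (4 * S))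
      Filter.atTop Filter.atTop := by
    have he : 0 < Real.exp 4 - 1 := by
      have := Real.add_one_le_exp 4
      linarith
    exact (Real.tendsto_exp_atTop.comp (Filter.tendsto_id.const_mul_atTop four_pos)).const_mul_atTop
      (by positivity)
  obtain ⟨S, hS1, hSE, hSB, hSδ, hSδB, hSM⟩ := ((Filter.eventually_ge_atTop (1 : ℝ)).and
    (hE.and ((hlin.eventually_ge_atTop 1).and ((hsmall.eventually_lt_const hδ).and
      (((hsmall.comp hlin).eventually_lt_const hδ).and
        (hlarge.eventually_gt_atTop M)))))).exists
  have hS0 : 0 < S := by linarith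
  have hts := testFn_tsupport hR hS0 hv
  have hsub : tsupport (testFn R v S) ⊆ Ω :=
    hts.trans ((Metric.closedBall_subset_ball hSδB).trans hball)
  refine ⟨testFn R v S, testFn_contDiff hR hS0 hSB hvs hv, ?_, hsub, ?_, ?_⟩
  · exact (isCompact_closedBall _ _).of_isClosed_subset (isClosed_tsupport _) hts
  · rw [tildeI4_testFn hR hS0 hvs hv hsub]
    exact hSE.le
  · exact hSM.trans_le (exp_integral_lower hR hS1 hSB hvs hv hv1 hh hbdd
      ((Metric.closedBall_subset_ball hSδ).trans hball))
end
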